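/- arXiv:1310.2496 — 2 statements merged into one kernel-verified Lean document; each statement's English description precedes it below -/
import Mathlib

section
/- Let K be a field of characteristic 0 or large, S = K[x_1,…,x_n], and M a finitely generated graded S-module. Let Z_j(M) denote the module of cycles in homological degree j of the Koszul complex K(m_S, M) on the variables with coefficients in M. Then β_{i,v}^S(Z_j(M)) ≥ β_{i+j,v}^S(M) for all i, j, v. -/
/-!
Both Betti numbers are dimensions of Koszul homology, and multiplication of exterior forms gives a
surjection `H_i(x; Z_j(M))_v → H_{i+j}(x; M)_v`.

For the first point (`hdim`), a homogeneous piece `F_v` of a graded free module is Koszul-acyclic away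
from the obvious part of `H_0`: the de Rham differential is a contracting homotopy, by the Euler formula
and characteristic zero (`free_acyclic`). Dimension shifting along the minimal resolution
(`zero_equiv`, `shift_equiv`) then identifies `H_i(x; N)_v` with `K ^ β_{i,v}(N)`.

For the second (`exists_surj`), consider `Λ ⊗ Λ ⊗ M`, in which chains with coefficients in `Z_j(M)`
are the elements of inner degree `j` killed by the inner Koszul differential. The operators `tau` and
`tauS`, which move one generator from the inner exterior factor to the outer one and back, commute with
the differentials up to sign and up to the other differential (`kE_tau`, `kI_tau`, `kI_tauS`,
`kE_tauS`) and satisfy the `sl₂`-relation `tau_tauS`. Hence `tau ^ j` induces a map on homology. If `z`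
is a cycle of `M` of degree `i + j`, then `tauS ^ j z` is a cycle for both differentials, so a cycle with
coefficients in `Z_j(M)`, and `tau ^ j (tauS ^ j z)` is a positive integer multiple of `z`
(`tauS_iter`), which gives surjectivity in characteristic zero.
-/

open DirectSum

universe u v w

/-- A standard graded structure on a commutative `K`-algebra `R`:
an internal direct sum decomposition `R = ⊕_{i∈ℤ} R_i` with `R_i = 0` for `i < 0`,
`R_0 = K·1`, `R_i · R_j = R_{i+j}` and `dim_K R_1 < ∞`. -/
structure StdGrading (K : Type u) [Field K] (R : Type v) [CommRing R] [Algebra K R] :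
    Type v where
  gr : ℤ → Submodule K R
  internal : DirectSum.IsInternal gr
  negBot : ∀ i : ℤ, i < 0 → gr i = ⊥
  zeroEq : gr 0 = Submodule.span K {(1 : R)}
  mulEq : ∀ i j : ℤ, 0 ≤ i → 0 ≤ j → gr i * gr j = gr (i + j)
  finOne : Module.Finite K (gr 1)

variable {K : Type u} [Field K] {R : Type v} [CommRing R] [Algebra K R]

/-- The irrelevant maximal homogeneous ideal `m_R = ⊕_{i>0} R_i`. -/
def StdGrading.maxIdeal (A : StdGrading K R) : Ideal R :=
  Ideal.span {x : R | ∃ i : ℤ, 0 < i ∧ x ∈ A.gr i}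

/-- `g` is a grading making the `R`-module `M` into a graded module over the
standard graded algebra `(R, A)`. -/
def IsGradedModule (A : StdGrading K R) {M : Type w} [AddCommGroup M] [Module K M]
    [Module R M] [IsScalarTower K R M] (g : ℤ → Submodule K M) : Prop :=
  DirectSum.IsInternal g ∧
    ∀ (i j : ℤ), ∀ r ∈ A.gr i, ∀ x ∈ g j, r • x ∈ g (i + j)

/-- The graded free `R`-module with `β i j` basis elements of (internal) degree `j`,
in homological position `i`. -/
abbrev FreeMod (R : Type v) [CommRing R] (β : ℕ → ℤ → ℕ) (i : ℕ) : Type v :=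
  ((j : ℤ) × Fin (β i j)) →₀ R

/-- The degree-`d` graded piece of the graded free module `FreeMod R β i`. -/
def freeGr (A : StdGrading K R) (β : ℕ → ℤ → ℕ) (i : ℕ) (d : ℤ) :
    Submodule K (FreeMod R β i) where
  carrier := {f | ∀ p : (j : ℤ) × Fin (β i j), f p ∈ A.gr (d - p.1)}
  add_mem' := fun hf hg p => by
    simpa using add_mem (hf p) (hg p)
  zero_mem' := fun p => by simp
  smul_mem' := fun c f hf p => by
    simpa using Submodule.smul_mem _ c (hf p)

/-- A minimal graded free resolution of the graded `R`-module `(M, g)` whose graded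
Betti numbers are given by the table `β`: the maps are degree-zero maps of graded
modules, the complex is exact, and the differentials map into `m_R·F`. -/
structure MinFreeRes (A : StdGrading K R) {M : Type w} [AddCommGroup M] [Module K M]
    [Module R M] [IsScalarTower K R M] (g : ℤ → Submodule K M) (β : ℕ → ℤ → ℕ) :
    Type (max v w) where
  eps : FreeMod R β 0 →ₗ[R] M
  d : (i : ℕ) → FreeMod R β (i + 1) →ₗ[R] FreeMod R β i
  eps_surjective : Function.Surjective eps
  exact_eps : Function.Exact ⇑(d 0) ⇑eps
  exact_d : ∀ i : ℕ, Function.Exact ⇑(d (i + 1)) ⇑(d i)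
  graded_eps : ∀ dg : ℤ, ∀ f ∈ freeGr A β 0 dg, eps f ∈ g dg
  graded_d : ∀ (i : ℕ) (dg : ℤ), ∀ f ∈ freeGr A β (i + 1) dg, d i f ∈ freeGr A β i dg
  minimal : ∀ (i : ℕ) (f : FreeMod R β (i + 1)) (p : (j : ℤ) × Fin (β i j)),
    d i f p ∈ A.maxIdeal

/-- `β` is the table of graded Betti numbers of the graded module `(M, g)`,
i.e. there is a minimal graded free resolution realizing it. -/
def HasBettiTable (A : StdGrading K R) {M : Type w} [AddCommGroup M] [Module K M]
    [Module R M] [IsScalarTower K R M] (g : ℤ → Submodule K M) (β : ℕ → ℤ → ℕ) : Prop :=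
  Nonempty (MinFreeRes A g β)

/-- The grading on the residue field `K = R/m_R` of a standard graded algebra. -/
def resGr (A : StdGrading K R) : ℤ → Submodule K (R ⧸ A.maxIdeal) := fun d =>
  (A.gr d).map ((A.maxIdeal.mkQ).restrictScalars K)

/-- `R` is a Koszul algebra: the minimal graded free resolution of the residue field
`K = R/m_R` is linear, i.e. `β_{ij}(K) = 0` for `j ≠ i`. -/
def IsKoszul (A : StdGrading K R) : Prop :=
  ∀ β : ℕ → ℤ → ℕ, HasBettiTable A (resGr A) β →
    ∀ (i : ℕ) (j : ℤ), j ≠ (i : ℤ) → β i j = 0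



/-- The `i`-th term of the Koszul complex on `n` generators with coefficients in `M`:
a free `M`-valued object with basis the `i`-element subsets of `Fin n`. -/
abbrev KCplx (M : Type w) [Zero M] (n i : ℕ) : Type w := {s : Finset (Fin n) // s.card = i} →₀ M

/-- The Koszul differential `K_{i+1}(x; M) → K_i(x; M)` for a sequence
`x : Fin n → R`, given on basis elements by
`e_S ⊗ m ↦ ∑_{a ∈ S} (-1)^{|{b ∈ S : b < a}|} e_{S\{a}} ⊗ (x_a • m)`. -/
noncomputable def kdiff {R : Type v} [CommRing R] {M : Type w} [AddCommGroup M]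
    [Module R M] {n : ℕ} (x : Fin n → R) (i : ℕ) :
    KCplx M n (i + 1) →ₗ[R] KCplx M n i :=
  Finsupp.lsum ℕ fun S =>
    ∑ a ∈ S.1.attach,
      ((-1 : ℤ) ^ ((S.1.filter (fun b => b < a.1)).card)) •
        ((Finsupp.lsingle (⟨S.1.erase a.1, by
              simp [Finset.card_erase_of_mem a.2, S.2]⟩ :
            {s : Finset (Fin n) // s.card = i})).comp
          (x a.1 • (LinearMap.id : M →ₗ[R] M)))

/-- The cycles `Z_i` of the Koszul complex `K(x; M)`. -/
noncomputable def kcycles {R : Type v} [CommRing R] {M : Type w} [AddCommGroup M]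
    [Module R M] {n : ℕ} (x : Fin n → R) : (i : ℕ) → Submodule R (KCplx M n i)
  | 0 => ⊤
  | (i + 1) => LinearMap.ker (kdiff x i)

/-- The boundaries `B_i` of the Koszul complex `K(x; M)`. -/
noncomputable def kbound {R : Type v} [CommRing R] {M : Type w} [AddCommGroup M]
    [Module R M] {n : ℕ} (x : Fin n → R) (i : ℕ) : Submodule R (KCplx M n i) :=
  LinearMap.range (kdiff x i)

variable {n : ℕ}

/-- The internal-degree-`dg` graded piece of `K_i(x; M)` for a graded module `(M,g)`:
the basis element `e_S` (`|S| = i`) has internal degree `i`. -/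
def kcGr {M : Type w} [AddCommGroup M] [Module K M] (g : ℤ → Submodule K M)
    (n i : ℕ) (dg : ℤ) : Submodule K (KCplx M n i) where
  carrier := {f | ∀ S : {s : Finset (Fin n) // s.card = i}, f S ∈ g (dg - i)}
  add_mem' := fun hf hg S => by simpa using add_mem (hf S) (hg S)
  zero_mem' := fun S => by simp
  smul_mem' := fun c f hf S => by simpa using Submodule.smul_mem _ c (hf S)

/-- `H_i(x; M)_{dg} ≠ 0`: there is a homogeneous cycle of homological degree `i`
and internal degree `dg` which is not a boundary. -/
noncomputable def koszulHNe {M : Type w} [AddCommGroup M] [Module K M] [Module R M]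
    [IsScalarTower K R M] (x : Fin n → R) (g : ℤ → Submodule K M) (i : ℕ) (dg : ℤ) :
    Prop :=
  ∃ z ∈ kcycles (M := M) x i, z ∈ kcGr g n i dg ∧ z ∉ kbound (M := M) x i

set_option linter.unusedSectionVars false

namespace KoszulAux

/-! ### Identities between creation and annihilation operators -/

section AbstractCAR
variable {ι A : Type*} [Fintype ι] [Ring A]

/-- The Koszul differential `∑ xₐcₐ` squares to zero, up to the factor `2`; the factor is harmless in
the torsion-free modules where this is applied. -/
theorem car_sq (x c : ι → A) (hx : ∀ a b, x a * x b = x b * x a)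
    (hxc : ∀ a b, x a * c b = c b * x a) (hc : ∀ a b, c a * c b + c b * c a = 0) :
    2 * ((∑ a, x a * c a) * (∑ a, x a * c a)) = 0 := by
  rw [two_mul]
  simp only [Finset.sum_mul_sum]
  conv_lhs => rw [add_comm]; enter [1]; rw [Finset.sum_comm]
  rw [← Finset.sum_add_distrib]
  refine Finset.sum_eq_zero fun a _ => ?_
  rw [← Finset.sum_add_distrib]
  refine Finset.sum_eq_zero fun b _ => ?_
  have h1 : x b * c b * (x a * c a) = x a * x b * (c b * c a) := by
    rw [mul_assoc, ← mul_assoc (c b), ← hxc a b, hx a b]; noncomm_ring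
  have h2 : x a * c a * (x b * c b) = x a * x b * (c a * c b) := by
    rw [mul_assoc, ← mul_assoc (c a), ← hxc b a]; noncomm_ring
  rw [h1, h2, ← mul_add, hc, mul_zero]

/-- The Euler-homotopy identity: with `D` behaving like `∂/∂x`, `c` like contraction and `e` like
exterior multiplication, the anticommutator of `∑ xₐcₐ` and `∑ Dₐeₐ` is the Euler operator
`∑ xₐDₐ` plus the number operator `∑ eₐcₐ`. -/
theorem car_euler [DecidableEq ι] (x D c e : ι → A)
    (hxe : ∀ a b, x a * e b = e b * x a) (hDc : ∀ a b, D a * c b = c b * D a)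
    (hDx : ∀ a b, D a * x b = x b * D a + if a = b then 1 else 0)
    (hce : ∀ a b, c a * e b + e b * c a = if a = b then 1 else 0) :
    (∑ a, x a * c a) * (∑ a, D a * e a) + (∑ a, D a * e a) * (∑ a, x a * c a)
      = (∑ a, x a * D a) + ∑ a, e a * c a := by
  simp only [Finset.sum_mul_sum]
  conv_lhs => enter [2]; rw [Finset.sum_comm]
  rw [← Finset.sum_add_distrib, ← Finset.sum_add_distrib]
  refine Finset.sum_congr rfl fun a _ => ?_
  rw [← Finset.sum_add_distrib]
  have key : ∀ b, x a * c a * (D b * e b) + D b * e b * (x a * c a)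
      = if a = b then x a * D a + e a * c a else 0 := by
    intro b
    have h1 : x a * c a * (D b * e b) = x a * D b * (c a * e b) := by
      rw [mul_assoc, ← mul_assoc (c a), ← hDc b a]; noncomm_ring
    have h2 : D b * e b * (x a * c a) = D b * x a * (e b * c a) := by
      rw [mul_assoc, ← mul_assoc (e b), ← hxe a b]; noncomm_ring
    rw [h1, h2, hDx, add_mul, ← add_assoc, ← mul_add, hce]
    by_cases h : a = b
    · subst h; simp
    · simp [h, Ne.symm h]
  simp [key]

/-- The operator `∑ eₐCₐ`, moving a generator from a second exterior factor (with contractions `C`)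
to the first, anticommutes with the Koszul differential of the first factor up to the Koszul
differential of the second. -/
theorem car_mixed [DecidableEq ι] (x c e C : ι → A)
    (hxe : ∀ a b, x a * e b = e b * x a) (hxC : ∀ a b, x a * C b = C b * x a)
    (hcC : ∀ a b, c a * C b = C b * c a)
    (hce : ∀ a b, c a * e b + e b * c a = if a = b then 1 else 0) :
    (∑ a, x a * c a) * (∑ a, e a * C a) + (∑ a, e a * C a) * (∑ a, x a * c a)
      = ∑ a, x a * C a := by
  simp only [Finset.sum_mul_sum]
  conv_lhs => enter [2]; rw [Finset.sum_comm]
  rw [← Finset.sum_add_distrib]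
  refine Finset.sum_congr rfl fun a _ => ?_
  rw [← Finset.sum_add_distrib]
  have key : ∀ b, x a * c a * (e b * C b) + e b * C b * (x a * c a)
      = if a = b then x a * C a else 0 := by
    intro b
    have h2 : e b * C b * (x a * c a) = x a * (e b * c a) * C b := by
      rw [mul_assoc, ← mul_assoc (C b), ← hxC a b, mul_assoc (x a), ← hcC a b,
        ← mul_assoc, ← hxe a b]; noncomm_ring
    have h1 : x a * c a * (e b * C b) = x a * (c a * e b) * C b := by noncomm_ring
    rw [h1, h2, ← add_mul, ← mul_add, hce]
    by_cases h : a = b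
    · subst h; simp
    · simp [h]
  simp [key]

/-- The operator `∑ eₐCₐ` anticommutes with the Koszul differential `∑ xₐCₐ` of the second factor. -/
theorem car_inner (x e C : ι → A)
    (hxe : ∀ a b, x a * e b = e b * x a) (hxC : ∀ a b, x a * C b = C b * x a)
    (heC : ∀ a b, e a * C b = C b * e a)
    (hC : ∀ a b, C a * C b + C b * C a = 0) :
    (∑ a, x a * C a) * (∑ a, e a * C a) + (∑ a, e a * C a) * (∑ a, x a * C a) = 0 := by
  simp only [Finset.sum_mul_sum]
  conv_lhs => enter [2]; rw [Finset.sum_comm]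
  rw [← Finset.sum_add_distrib]
  refine Finset.sum_eq_zero fun a _ => ?_
  rw [← Finset.sum_add_distrib]
  refine Finset.sum_eq_zero fun b _ => ?_
  have h1 : x a * C a * (e b * C b) = x a * e b * (C a * C b) := by
    rw [mul_assoc, ← mul_assoc (C a), ← heC b a]; noncomm_ring
  have h2 : e b * C b * (x a * C a) = x a * e b * (C b * C a) := by
    rw [mul_assoc, ← mul_assoc (C b), ← hxC a b, hxe a b]
    rw [← mul_assoc, ← mul_assoc, ← hxe a b]; noncomm_ring
  rw [h1, h2, ← mul_add, hC, mul_zero]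

/-- The `sl₂`-relation: the commutator of the two operators that move a generator between the two
exterior factors is the difference of the number operators. -/
theorem car_comm [DecidableEq ι] (c e C E : ι → A)
    (hcC : ∀ a b, c a * C b = C b * c a) (hcE : ∀ a b, c a * E b = E b * c a)
    (heE : ∀ a b, e a * E b = E b * e a)
    (hce : ∀ a b, c a * e b + e b * c a = if a = b then 1 else 0)
    (hCE : ∀ a b, C a * E b + E b * C a = if a = b then 1 else 0) :
    (∑ a, e a * C a) * (∑ a, E a * c a) + ∑ a, E a * C a
      = (∑ a, E a * c a) * (∑ a, e a * C a) + ∑ a, e a * c a := by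
  simp only [Finset.sum_mul_sum]
  conv_rhs => enter [1]; rw [Finset.sum_comm]
  rw [← Finset.sum_add_distrib, ← Finset.sum_add_distrib]
  refine Finset.sum_congr rfl fun a _ => ?_
  have key : ∀ b, e a * C a * (E b * c b) = E b * c b * (e a * C a)
      + ((if a = b then e a * c a else 0) - if a = b then E a * C a else 0) := by
    intro b
    have h1 : e a * C a * (E b * c b) = e a * c b * (C a * E b) := by
      rw [mul_assoc, mul_assoc, ← hcE, ← mul_assoc (C a), ← hcC]; noncomm_ring
    have h2 : E b * c b * (e a * C a) = c b * e a * (E b * C a) := by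
      rw [← hcE, mul_assoc, ← mul_assoc (E b), ← heE]; noncomm_ring
    rw [h1, h2, eq_sub_of_add_eq (hCE a b), eq_sub_of_add_eq (hce b a)]
    by_cases h : a = b
    · subst h; simp; noncomm_ring
    · simp [h, Ne.symm h]
  simp only [key, Finset.sum_add_distrib, Finset.sum_sub_distrib, Finset.sum_ite_eq, Finset.mem_univ, if_true]
  abel
end AbstractCAR

/-! ### Koszul chains and their operators -/

section Ops
variable {n : ℕ} {N N' : Type*} [AddCommGroup N] [AddCommGroup N']

theorem end_mul_apply (φ ψ : AddMonoid.End N) (y : N) : (φ * ψ) y = φ (ψ y) := rfl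

theorem end_add_apply (φ ψ : AddMonoid.End N) (y : N) : (φ + ψ) y = φ y + ψ y := rfl

theorem end_sum_apply {ι : Type*} (s : Finset ι) (φ : ι → AddMonoid.End N) (y : N) :
    (∑ a ∈ s, φ a) y = ∑ a ∈ s, φ a y := AddMonoidHom.finsetSum_apply φ s y

/-- The sign `(-1)^{#{b ∈ T : b < a}}`; it is the same for `T`, `insert a T` and `T.erase a`. -/
def sg (a : Fin n) (T : Finset (Fin n)) : ℤ := (-1) ^ (T.filter (· < a)).card

theorem sg_insert {a b : Fin n} {T : Finset (Fin n)} (h : b ∉ T) :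
    sg a (insert b T) = if b < a then - sg a T else sg a T := by
  unfold sg
  rw [Finset.filter_insert]
  split_ifs with hb
  · rw [Finset.card_insert_of_notMem (by simp [h]), pow_succ]; simp
  · rfl

theorem sg_erase {a b : Fin n} {T : Finset (Fin n)} (h : b ∈ T) :
    sg a (T.erase b) = if b < a then - sg a T else sg a T := by
  have := sg_insert (a := a) (b := b) (T := T.erase b) (by simp)
  rw [Finset.insert_erase h] at this
  rw [this]; split_ifs <;> simp

theorem sg_mul_self (a : Fin n) (T : Finset (Fin n)) : sg a T * sg a T = 1 := by
  unfold sg; rw [← mul_pow]; simp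

/-- All Koszul chains with coefficients in `N` at once, `Λ(Kⁿ) ⊗ N`: the value at `T` is the
coefficient of the basis element `e_T`. -/
abbrev EM (n : ℕ) (N : Type*) : Type _ := Finset (Fin n) → N

/-- Contraction with the `a`-th coordinate form, `e_{T ∪ a} ↦ ± e_T`. -/
def cop (a : Fin n) : AddMonoid.End (EM n N) where
  toFun f T := if a ∈ T then 0 else sg a T • f (insert a T)
  map_zero' := by ext; simp
  map_add' f g := by ext T; by_cases h : a ∈ T <;> simp [h]

/-- Exterior multiplication by `e_a`, `e_{T \ a} ↦ ± e_T`. -/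
def eop (a : Fin n) : AddMonoid.End (EM n N) where
  toFun f T := if a ∈ T then sg a T • f (T.erase a) else 0
  map_zero' := by ext; simp
  map_add' f g := by ext T; by_cases h : a ∈ T <;> simp [h]

theorem cop_apply (a : Fin n) (f : EM n N) (T) :
    cop a f T = if a ∈ T then 0 else sg a T • f (insert a T) := rfl
theorem eop_apply (a : Fin n) (f : EM n N) (T) :
    eop a f T = if a ∈ T then sg a T • f (T.erase a) else 0 := rfl

theorem cop_anti (a b : Fin n) : (cop a * cop b + cop b * cop a : AddMonoid.End (EM n N)) = 0 := by
  ext f T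
  simp only [end_add_apply, end_mul_apply, Pi.add_apply, cop_apply,
    Finset.mem_insert]
  by_cases hab : a = b
  · subst hab; simp
  by_cases ha : a ∈ T
  · simp [ha]
  by_cases hb : b ∈ T
  · simp [hb]
  simp only [ha, hb, hab, Ne.symm hab, or_self, if_false, sg_insert ha, sg_insert hb, smul_smul,
    Finset.insert_comm a b]
  rcases lt_or_gt_of_ne hab with h | h
  · simp [h, not_lt.2 h.le, mul_comm]
  · simp [h, not_lt.2 h.le, mul_comm]

theorem cop_eop (a b : Fin n) : (cop a * eop b + eop b * cop a : AddMonoid.End (EM n N))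
    = if a = b then 1 else 0 := by
  ext f T
  simp only [end_add_apply, end_mul_apply, Pi.add_apply, cop_apply, eop_apply,
    Finset.mem_insert]
  by_cases hab : a = b
  · subst hab
    by_cases ha : a ∈ T
    · simp [ha, sg_erase ha, smul_smul, sg_mul_self]
    · simp [ha, sg_insert ha, smul_smul, sg_mul_self]
  by_cases ha : a ∈ T
  · simp [ha, hab]
  by_cases hb : b ∈ T
  · have h3 : (insert a T).erase b = insert a (T.erase b) :=
      Finset.erase_insert_of_ne hab
    simp only [ha, hb, hab, Ne.symm hab, or_true, if_true, if_false, sg_insert ha, sg_erase hb,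
      smul_smul, Finset.mem_erase, h3, and_false]
    rcases lt_or_gt_of_ne hab with h | h
    · simp [h, not_lt.2 h.le, mul_comm]
    · simp [h, not_lt.2 h.le, mul_comm]
  · simp [hb, hab, Ne.symm hab]

theorem eop_cop_sum (f : EM n N) (T) :
    (∑ a, eop a * cop a : AddMonoid.End (EM n N)) f T = T.card • f T := by
  have : ∀ a, eop a (cop a f) T = if a ∈ T then f T else 0 := by
    intro a
    simp only [cop_apply, eop_apply]
    by_cases ha : a ∈ T
    · simp [ha, sg_erase ha, smul_smul, sg_mul_self]
    · simp [ha]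
  simp [end_sum_apply, end_mul_apply, this, Finset.sum_apply]

/-- The map of Koszul chains induced by a map of coefficients. -/
def pw (n : ℕ) (φ : N →+ N') : EM n N →+ EM n N' := φ.compLeft _

@[simp] theorem pw_apply (φ : N →+ N') (f : EM n N) (T) : pw n φ f T = φ (f T) := rfl

theorem pw_cop (φ : N →+ N') (a : Fin n) (f : EM n N) : pw n φ (cop a f) = cop a (pw n φ f) := by
  ext T; simp only [pw_apply, cop_apply]; split_ifs <;> simp

theorem pw_eop (φ : N →+ N') (a : Fin n) (f : EM n N) : pw n φ (eop a f) = eop a (pw n φ f) := by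
  ext T; simp only [pw_apply, eop_apply]; split_ifs <;> simp

/-- `pw` for endomorphisms of the coefficients, as a ring homomorphism. -/
def pwE (n : ℕ) (N : Type*) [AddCommGroup N] : AddMonoid.End N →+* AddMonoid.End (EM n N) where
  toFun φ := pw n φ
  map_one' := rfl
  map_mul' _ _ := rfl
  map_zero' := rfl
  map_add' _ _ := rfl

theorem pwE_apply (φ : AddMonoid.End N) (f : EM n N) (T) : pwE n N φ f T = φ (f T) := rfl

theorem pwE_cop (φ : AddMonoid.End N) (a : Fin n) : pwE n N φ * cop a = cop a * pwE n N φ := by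
  ext1 f; exact pw_cop φ a f
theorem pwE_eop (φ : AddMonoid.End N) (a : Fin n) : pwE n N φ * eop a = eop a * pwE n N φ := by
  ext1 f; exact pw_eop φ a f

variable {R : Type*} [CommRing R] [Module R N'] [Module R N]

/-- Multiplication of Koszul chains by a ring element. -/
def xop (n : ℕ) (N : Type*) [AddCommGroup N] [Module R N] (r : R) : AddMonoid.End (EM n N) :=
  pwE n N (Module.toAddMonoidEnd R N r)

theorem xop_apply (r : R) (f : EM n N) (T) : xop n N r f T = r • f T := rfl

/-- The Koszul differential for the sequence `x`, on chains of all degrees together. -/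
def kE (N : Type*) [AddCommGroup N] [Module R N] (x : Fin n → R) : AddMonoid.End (EM n N) :=
  ∑ a, xop n N (x a) * cop a

theorem kE_apply (x : Fin n → R) (f : EM n N) (T) :
    kE N x f T = ∑ a, x a • cop a f T := by
  simp [kE, end_sum_apply, end_mul_apply, Finset.sum_apply, xop_apply]

/-- The Koszul differential is natural in the coefficients. -/
theorem kE_pw (x : Fin n → R) (φ : N →ₗ[R] N') (f : EM n N) :
    kE N' x (pw n φ.toAddMonoidHom f) = pw n φ.toAddMonoidHom (kE N x f) := by
  ext T
  simp only [kE_apply, pw_apply, ← pw_cop, map_sum]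
  simp

theorem kE_kE [IsAddTorsionFree N] (x : Fin n → R) (f : EM n N) : kE N x (kE N x f) = 0 := by
  have h := car_sq (fun a => xop n N (x a)) (fun a => cop a)
    (fun a b => by simp only [xop, ← map_mul, mul_comm]) (fun a b => pwE_cop _ _) cop_anti
  have h2 := DFunLike.congr_fun h f
  rw [two_mul] at h2
  have h3 : kE N x (kE N x f) + kE N x (kE N x f) = 0 := h2
  rw [← two_nsmul] at h3
  exact (nsmul_eq_zero_iff_right two_ne_zero).1 h3

end Ops

/-! ### Two exterior factors -/

section Double
variable {n : ℕ} {M : Type*} [AddCommGroup M] {R : Type*} [CommRing R] [Module R M]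

/-- The operator on `Λ ⊗ (Λ ⊗ M)` moving a generator from the inner factor to the outer one. -/
def tau (n : ℕ) (M : Type*) [AddCommGroup M] : AddMonoid.End (EM n (EM n M)) :=
  ∑ a, eop a * pwE n (EM n M) (cop a)

/-- The operator on `Λ ⊗ (Λ ⊗ M)` moving a generator from the outer factor to the inner one. -/
def tauS (n : ℕ) (M : Type*) [AddCommGroup M] : AddMonoid.End (EM n (EM n M)) :=
  ∑ a, pwE n (EM n M) (eop a) * cop a

/-- The Koszul differential of the inner factor on `Λ ⊗ (Λ ⊗ M)`; that of the outer factor is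
`kE (EM n M) x`. -/
def kI (M : Type*) [AddCommGroup M] [Module R M] (x : Fin n → R) :
    AddMonoid.End (EM n (EM n M)) := pwE n (EM n M) (kE M x)

theorem kI_eq (x : Fin n → R) :
    kI M x = ∑ a, xop n (EM n M) (x a) * pwE n (EM n M) (cop a) := by
  unfold kI kE
  rw [map_sum]
  rfl

theorem xop_pwE_cop (r : R) (b : Fin n) : xop n (EM n M) r * pwE n (EM n M) (cop b)
    = pwE n (EM n M) (cop b) * xop n (EM n M) r := by
  change pwE n (EM n M) (xop n M r) * _ = _ * pwE n (EM n M) (xop n M r)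
  rw [← map_mul, ← map_mul, xop, pwE_cop]

theorem xop_pwE_eop (r : R) (b : Fin n) : xop n (EM n M) r * pwE n (EM n M) (eop b)
    = pwE n (EM n M) (eop b) * xop n (EM n M) r := by
  change pwE n (EM n M) (xop n M r) * _ = _ * pwE n (EM n M) (xop n M r)
  rw [← map_mul, ← map_mul, xop, pwE_eop]

theorem pwE_cop_eop (a b : Fin n) : pwE n (EM n M) (cop a) * pwE n (EM n M) (eop b)
    + pwE n (EM n M) (eop b) * pwE n (EM n M) (cop a) = if a = b then 1 else 0 := by
  rw [← map_mul, ← map_mul, ← map_add, cop_eop]; split_ifs <;> simp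

theorem pwE_cop_anti (a b : Fin n) : pwE n (EM n M) (cop a) * pwE n (EM n M) (cop b)
    + pwE n (EM n M) (cop b) * pwE n (EM n M) (cop a) = 0 := by
  rw [← map_mul, ← map_mul, ← map_add, cop_anti, map_zero]

theorem kE_tau (x : Fin n → R) (f : EM n (EM n M)) :
    kE (EM n M) x (tau n M f) + tau n M (kE (EM n M) x f) = kI M x f := by
  rw [kI_eq]
  exact DFunLike.congr_fun (car_mixed (fun a => xop n (EM n M) (x a)) (fun a => cop a)
    (fun a => eop a) (fun a => pwE n (EM n M) (cop a)) (fun _ _ => pwE_eop _ _)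
    (fun _ _ => xop_pwE_cop _ _) (fun _ _ => (pwE_cop _ _).symm) cop_eop) f

theorem kI_tau (x : Fin n → R) (f : EM n (EM n M)) :
    kI M x (tau n M f) + tau n M (kI M x f) = 0 := by
  rw [kI_eq]
  exact DFunLike.congr_fun (car_inner (fun a => xop n (EM n M) (x a))
    (fun a => eop a) (fun a => pwE n (EM n M) (cop a)) (fun _ _ => pwE_eop _ _)
    (fun _ _ => xop_pwE_cop _ _) (fun _ _ => (pwE_eop _ _).symm) pwE_cop_anti) f

theorem kI_tauS (x : Fin n → R) (f : EM n (EM n M)) :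
    kI M x (tauS n M f) + tauS n M (kI M x f) = kE (EM n M) x f := by
  rw [kI_eq]
  exact DFunLike.congr_fun (car_mixed (fun a => xop n (EM n M) (x a))
    (fun a => pwE n (EM n M) (cop a)) (fun a => pwE n (EM n M) (eop a)) (fun a => cop a)
    (fun _ _ => xop_pwE_eop _ _) (fun _ _ => pwE_cop _ _) (fun _ _ => pwE_cop _ _)
    pwE_cop_eop) f

theorem kE_tauS (x : Fin n → R) (f : EM n (EM n M)) :
    kE (EM n M) x (tauS n M f) + tauS n M (kE (EM n M) x f) = 0 :=
  DFunLike.congr_fun (car_inner (fun a => xop n (EM n M) (x a))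
    (fun a => pwE n (EM n M) (eop a)) (fun a => cop a)
    (fun _ _ => xop_pwE_eop _ _) (fun _ _ => pwE_cop _ _) (fun _ _ => pwE_cop _ _)
    cop_anti) f

/-- `f` has outer exterior degree `p`, inner exterior degree `q`, and coefficients in `L`. -/
structure Bideg (L : AddSubgroup M) (p q : ℕ) (f : EM n (EM n M)) : Prop where
  outer : ∀ S T, S.card ≠ p → f S T = 0
  inner : ∀ S T, T.card ≠ q → f S T = 0
  mem : ∀ S T, f S T ∈ L

/-- The `sl₂`-relation between `tau` and `tauS` in bidegree `(p, q)`. -/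
theorem tau_tauS {L : AddSubgroup M} {p q : ℕ} {f : EM n (EM n M)} (hf : Bideg L p q f) :
    tau n M (tauS n M f) + q • f = tauS n M (tau n M f) + p • f := by
  have h := DFunLike.congr_fun (car_comm (A := AddMonoid.End (EM n (EM n M))) (fun a => cop a)
    (fun a => eop a)
    (fun a => pwE n (EM n M) (cop a)) (fun a => pwE n (EM n M) (eop a))
    (fun _ _ => (pwE_cop _ _).symm) (fun _ _ => (pwE_cop _ _).symm)
    (fun _ _ => (pwE_eop _ _).symm) cop_eop pwE_cop_eop) f
  have h1 : (∑ a, pwE n (EM n M) (eop a) * pwE n (EM n M) (cop a)) f = q • f := by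
    have : (∑ a, pwE n (EM n M) (eop a) * pwE n (EM n M) (cop a))
        = pwE n (EM n M) (∑ a, eop a * cop a) := by simp
    rw [this]
    ext S T
    rw [pwE_apply, eop_cop_sum]
    by_cases hT : T.card = q
    · simp [hT]
    · simp [hf.inner S T hT]
  have h2 : (∑ a, eop a * cop a : AddMonoid.End (EM n (EM n M))) f = p • f := by
    ext S T
    rw [eop_cop_sum]
    by_cases hS : S.card = p
    · simp [hS]
    · simp [hf.outer S T hS]
  have h3 : tau n M (tauS n M f) + (∑ a, pwE n (EM n M) (eop a) * pwE n (EM n M) (cop a)) f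
    = tauS n M (tau n M f) + (∑ a, eop a * cop a : AddMonoid.End (EM n (EM n M))) f := h
  rwa [h1, h2] at h3

theorem tau_apply (f : EM n (EM n M)) (S T) : tau n M f S T =
    ∑ a, if a ∈ S then sg a S • (if a ∈ T then 0 else sg a T • f (S.erase a) (insert a T)) else 0 := by
  simp only [tau, end_sum_apply, Finset.sum_apply, end_mul_apply, eop_apply]
  refine Finset.sum_congr rfl fun a _ => ?_
  split_ifs <;> simp_all [pwE_apply, cop_apply]

theorem tauS_apply (f : EM n (EM n M)) (S T) : tauS n M f S T =
    ∑ a, if a ∈ T then sg a T • (if a ∈ S then 0 else sg a S • f (insert a S) (T.erase a)) else 0 := by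
  simp only [tauS, end_sum_apply, Finset.sum_apply, end_mul_apply]
  refine Finset.sum_congr rfl fun a _ => ?_
  simp only [pwE_apply, eop_apply, cop_apply]
  split_ifs <;> simp

theorem Bideg.tau {L : AddSubgroup M} {p q : ℕ} {f : EM n (EM n M)} (hf : Bideg L p (q + 1) f) :
    Bideg L (p + 1) q (tau n M f) := by
  refine ⟨fun S T h => ?_, fun S T h => ?_, fun S T => ?_⟩ <;> rw [tau_apply]
  · refine Finset.sum_eq_zero fun a _ => ?_
    split_ifs with h1 h2 <;> try simp
    rw [hf.outer]; · simp
    rw [Finset.card_erase_of_mem h1]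
    have := Finset.card_pos.2 ⟨a, h1⟩
    omega
  · refine Finset.sum_eq_zero fun a _ => ?_
    split_ifs with h1 h2 <;> try simp
    rw [hf.inner]; · simp
    rw [Finset.card_insert_of_notMem h2]
    omega
  · refine sum_mem fun a _ => ?_
    split_ifs with h1 h2
    · simp
    · exact zsmul_mem (zsmul_mem (hf.mem _ _) _) _
    · simp

theorem Bideg.tauS {L : AddSubgroup M} {p q : ℕ} {f : EM n (EM n M)} (hf : Bideg L (p + 1) q f) :
    Bideg L p (q + 1) (tauS n M f) := by
  refine ⟨fun S T h => ?_, fun S T h => ?_, fun S T => ?_⟩ <;> rw [tauS_apply]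
  · refine Finset.sum_eq_zero fun a _ => ?_
    split_ifs with h1 h2 <;> try simp
    rw [hf.outer]; · simp
    rw [Finset.card_insert_of_notMem h2]
    omega
  · refine Finset.sum_eq_zero fun a _ => ?_
    split_ifs with h1 h2 <;> try simp
    rw [hf.inner]; · simp
    rw [Finset.card_erase_of_mem h1]
    have := Finset.card_pos.2 ⟨a, h1⟩
    omega
  · refine sum_mem fun a _ => ?_
    split_ifs with h1 h2
    · simp
    · exact zsmul_mem (zsmul_mem (hf.mem _ _) _) _
    · simp

theorem Bideg.tau_zero {L : AddSubgroup M} {p : ℕ} {f : EM n (EM n M)} (hf : Bideg L p 0 f) :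
    KoszulAux.tau n M f = 0 := by
  ext S T
  rw [tau_apply]
  refine Finset.sum_eq_zero fun a _ => ?_
  split_ifs with h1 h2 <;> try simp
  rw [hf.inner]; · simp
  rw [Finset.card_insert_of_notMem h2]
  omega

theorem Bideg.tau_iter {L : AddSubgroup M} (k : ℕ) {p q : ℕ} {f : EM n (EM n M)}
    (hf : Bideg L p (q + k) f) : Bideg L (p + k) q ((KoszulAux.tau n M ^ k) f) := by
  induction k generalizing q with
  | zero => exact hf
  | succ k ih =>
    have := ih (q := q + 1) (by convert hf using 1; omega)
    rw [pow_succ', end_mul_apply]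
    simpa [add_assoc] using this.tau

/-- On cycles of the inner differential, `tau ^ k` preserves the inner cycles and commutes with the
outer differential up to sign. -/
theorem kE_tau_iter {x : Fin n → R} (k : ℕ) {f : EM n (EM n M)} (hI : kI M x f = 0) :
    kI M x ((tau n M ^ k) f) = 0 ∧
    kE (EM n M) x ((tau n M ^ k) f) = (-1 : ℤ) ^ k • (tau n M ^ k) (kE (EM n M) x f) := by
  induction k with
  | zero => simpa using hI
  | succ k ih =>
    simp only [pow_succ' (tau n M), end_mul_apply]
    have h2 := kI_tau x ((tau n M ^ k) f)
    have h1 := kE_tau x ((tau n M ^ k) f)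
    rw [ih.1, map_zero, add_zero] at h2
    rw [ih.1, ih.2] at h1
    refine ⟨h2, ?_⟩
    rw [eq_neg_of_add_eq_zero_left h1, map_zsmul, pow_succ, mul_neg_one, neg_smul]

/-- From bidegree `(p + k, 0)`, the operator `tauS ^ k` keeps cycles for both differentials, and
`tau ^ k` inverts it up to a positive integer factor. -/
theorem tauS_iter {L : AddSubgroup M} {x : Fin n → R} (k : ℕ) {p : ℕ} {f : EM n (EM n M)}
    (hf : Bideg L (p + k) 0 f) (hI : kI M x f = 0) (hO : kE (EM n M) x f = 0) :
    Bideg L p k ((tauS n M ^ k) f) ∧ kI M x ((tauS n M ^ k) f) = 0 ∧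
      kE (EM n M) x ((tauS n M ^ k) f) = 0 ∧
      ∃ C : ℕ, C ≠ 0 ∧ (tau n M ^ k) ((tauS n M ^ k) f) = C • f := by
  suffices H : Bideg L p k ((tauS n M ^ k) f) ∧ kI M x ((tauS n M ^ k) f) = 0 ∧
      kE (EM n M) x ((tauS n M ^ k) f) = 0 ∧
      (∃ C : ℕ, C ≠ 0 ∧ (tau n M ^ k) ((tauS n M ^ k) f) = C • f) ∧
      tau n M (tauS n M ((tauS n M ^ k) f)) = ((k + 1) * p) • (tauS n M ^ k) f from
    ⟨H.1, H.2.1, H.2.2.1, H.2.2.2.1⟩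
  induction k generalizing p with
  | zero =>
    refine ⟨hf, hI, hO, ⟨1, by simp, by simp⟩, ?_⟩
    have := tau_tauS hf
    simpa [hf.tau_zero] using this
  | succ k ih =>
    obtain ⟨hb, hi, ho, ⟨C, hC, hCf⟩, ht⟩ := ih (p := p + 1) (by convert hf using 1; omega)
    have hb' := hb.tauS
    have h1 := kI_tauS x ((tauS n M ^ k) f)
    have h2 := kE_tauS x ((tauS n M ^ k) f)
    rw [hi, ho, map_zero, add_zero] at h1
    rw [ho, map_zero, add_zero] at h2
    rw [pow_succ' (tauS n M), pow_succ (tau n M)]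
    simp only [end_mul_apply]
    refine ⟨hb', h1, h2, ⟨(k + 1) * (p + 1) * C, by positivity, ?_⟩, ?_⟩
    · rw [ht, map_nsmul, hCf, smul_smul]
    · have h4 := tau_tauS hb'
      rw [ht, map_nsmul, ← add_smul] at h4
      have : (k + 1) * (p + 1) + p = (k + 1 + 1) * p + (k + 1) := by ring
      rw [this, add_smul ((k + 1 + 1) * p)] at h4
      exact add_right_cancel h4

end Double

/-! ### Graded Koszul homology -/

section Homology
variable {n : ℕ} {K R N N' : Type*} [Field K] [CommRing R] [Algebra K R]
  [AddCommGroup N] [Module K N] [Module R N] [IsScalarTower K R N]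
  [AddCommGroup N'] [Module K N'] [Module R N'] [IsScalarTower K R N']

theorem isAddTorsionFree_of_charZero (K N : Type*) [Field K] [CharZero K] [AddCommGroup N]
    [Module K N] : IsAddTorsionFree N := by
  refine ⟨fun m hm a b hab => ?_⟩
  have h : (m : K) • a = (m : K) • b := by simpa only [Nat.cast_smul_eq_nsmul] using hab
  exact smul_right_injective N (Nat.cast_ne_zero.2 hm : (m : K) ≠ 0) h

theorem kE_smul (x : Fin n → R) (k : K) (f : EM n N) : kE N x (k • f) = k • kE N x f := by
  ext T
  simp only [kE_apply, Pi.smul_apply, Finset.smul_sum]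
  refine Finset.sum_congr rfl fun a _ => ?_
  rw [smul_comm k (x a)]
  congr 1
  simp only [cop_apply, Pi.smul_apply]
  split_ifs
  · simp
  · rw [smul_comm]

/-- Koszul chains of homological degree `i` and internal degree `v`; since `e_T` has internal degree
`i`, the coefficients have degree `v - i`. -/
def CE (n : ℕ) (g : ℤ → Submodule K N) (i : ℕ) (v : ℤ) : Submodule K (EM n N) where
  carrier := {f | (∀ T, T.card ≠ i → f T = 0) ∧ ∀ T, f T ∈ g (v - i)}
  add_mem' := fun hf hg => ⟨fun T h => by simp [hf.1 T h, hg.1 T h],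
    fun T => add_mem (hf.2 T) (hg.2 T)⟩
  zero_mem' := ⟨fun T _ => rfl, fun T => zero_mem _⟩
  smul_mem' := fun c f hf => ⟨fun T h => by simp [hf.1 T h],
    fun T => Submodule.smul_mem _ c (hf.2 T)⟩

/-- Koszul cycles of homological degree `i` and internal degree `v`. -/
def ZE (x : Fin n → R) (g : ℤ → Submodule K N) (i : ℕ) (v : ℤ) : Submodule K (EM n N) where
  carrier := {f | f ∈ CE n g i v ∧ kE N x f = 0}
  add_mem' := fun hf hg => ⟨add_mem hf.1 hg.1, by rw [map_add, hf.2, hg.2, add_zero]⟩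
  zero_mem' := ⟨zero_mem _, map_zero _⟩
  smul_mem' := fun c f hf => ⟨Submodule.smul_mem _ c hf.1, by rw [kE_smul, hf.2, smul_zero]⟩

/-- Koszul boundaries of homological degree `i` and internal degree `v`. -/
def BE (x : Fin n → R) (g : ℤ → Submodule K N) (i : ℕ) (v : ℤ) : Submodule K (EM n N) where
  carrier := {f | ∃ w ∈ CE n g (i + 1) v, kE N x w = f}
  add_mem' := by
    rintro _ _ ⟨w, hw, rfl⟩ ⟨w', hw', rfl⟩
    exact ⟨w + w', add_mem hw hw', map_add _ _ _⟩
  zero_mem' := ⟨0, zero_mem _, map_zero _⟩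
  smul_mem' := by
    rintro c _ ⟨w, hw, rfl⟩
    exact ⟨c • w, Submodule.smul_mem _ c hw, kE_smul _ _ _⟩

/-- Koszul homology `H_i(x; N)_v`. -/
abbrev HE (x : Fin n → R) (g : ℤ → Submodule K N) (i : ℕ) (v : ℤ) : Type _ :=
  ZE x g i v ⧸ (BE x g i v).comap (ZE x g i v).subtype

theorem kE_mem_CE {x : Fin n → R} {g : ℤ → Submodule K N}
    (hmul : ∀ a d, ∀ m ∈ g d, x a • m ∈ g (d + 1)) {i : ℕ} {v : ℤ} {f : EM n N}
    (hf : f ∈ CE n g (i + 1) v) : kE N x f ∈ CE n g i v := by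
  refine ⟨fun T hT => ?_, fun T => ?_⟩ <;> rw [kE_apply]
  · refine Finset.sum_eq_zero fun a _ => ?_
    rw [cop_apply]
    split_ifs with h
    · simp
    · rw [hf.1]
      · simp
      · rw [Finset.card_insert_of_notMem h]; omega
  · refine sum_mem fun a _ => ?_
    rw [cop_apply]
    split_ifs with h
    · simp
    · have := hmul a _ _ (zsmul_mem (hf.2 (insert a T)) (sg a T))
      convert this using 2
      push_cast; ring

theorem kE_CE_zero {x : Fin n → R} {g : ℤ → Submodule K N} {v : ℤ} {f : EM n N}
    (hf : f ∈ CE n g 0 v) : kE N x f = 0 := by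
  ext T
  rw [kE_apply]
  refine Finset.sum_eq_zero fun a _ => ?_
  rw [cop_apply]
  split_ifs with h
  · simp
  · rw [hf.1]
    · simp
    · rw [Finset.card_insert_of_notMem h]; omega

theorem pw_mem_CE {g : ℤ → Submodule K N} {g' : ℤ → Submodule K N'} (φ : N →+ N')
    (hφ : ∀ d, ∀ m ∈ g d, φ m ∈ g' d) {i : ℕ} {v : ℤ} {f : EM n N} (hf : f ∈ CE n g i v) :
    pw n φ f ∈ CE n g' i v :=
  ⟨fun T h => by rw [pw_apply, hf.1 T h, map_zero], fun T => hφ _ _ (hf.2 T)⟩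

/-- A chain of given degree lifts along `φ` to a chain of the same degree once its coefficients do. -/
theorem exists_lift_CE {g : ℤ → Submodule K N} {g' : ℤ → Submodule K N'} (φ : N →+ N')
    {i : ℕ} {v : ℤ} {f : EM n N'} (hf : f ∈ CE n g' i v)
    (hφ : ∀ T, ∃ m ∈ g (v - i), φ m = f T) :
    ∃ w ∈ CE n g i v, pw n φ w = f := by
  choose w hw hwf using hφ
  refine ⟨fun T => if T.card = i then w T else 0, ⟨fun T h => by simp [h], fun T => ?_⟩, ?_⟩
  · dsimp only; split_ifs
    · exact hw T
    · exact zero_mem _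
  · ext T
    rw [pw_apply]
    split_ifs with h
    · exact hwf T
    · rw [map_zero, hf.1 T h]

theorem quot_equiv {W V : Type*} [AddCommGroup W] [Module K W] [AddCommGroup V] [Module K V]
    (α : W →ₗ[K] V) (P : Submodule K W) (Q : Submodule K V) (hP : ∀ w, w ∈ P ↔ α w ∈ Q)
    (hs : ∀ v, ∃ w, α w = v) : Nonempty ((W ⧸ P) ≃ₗ[K] (V ⧸ Q)) := by
  have hk : LinearMap.ker (Q.mkQ.comp α) = P := by ext w; simp [hP]
  have hsurj : Function.Surjective (Q.mkQ.comp α) :=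
    (Submodule.mkQ_surjective Q).comp hs
  exact ⟨(Submodule.quotEquivOfEq _ _ hk.symm).trans (LinearMap.quotKerEquivOfSurjective _ hsurj)⟩

end Homology

/-! ### Graded polynomial rings and free modules -/

section Poly
open MvPolynomial
variable {n : ℕ} {K : Type*} [Field K]

theorem gr_X_mul {A : StdGrading K (MvPolynomial (Fin n) K)}
    (hA : ∀ i : ℕ, A.gr (i : ℤ) = MvPolynomial.homogeneousSubmodule (Fin n) K i)
    {e : ℤ} {r : MvPolynomial (Fin n) K} (hr : r ∈ A.gr e) (a : Fin n) :
    X a * r ∈ A.gr (e + 1) := by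
  rcases lt_or_ge e 0 with h | h
  · rw [A.negBot e h, Submodule.mem_bot] at hr; simp [hr]
  · rw [add_comm, ← A.mulEq 1 e (by norm_num) h]
    refine Submodule.mul_mem_mul ?_ hr
    have := hA 1
    rw [Nat.cast_one] at this
    rw [this]
    exact isHomogeneous_X _ _

theorem gr_pderiv {A : StdGrading K (MvPolynomial (Fin n) K)}
    (hA : ∀ i : ℕ, A.gr (i : ℤ) = MvPolynomial.homogeneousSubmodule (Fin n) K i)
    {e : ℤ} {r : MvPolynomial (Fin n) K} (hr : r ∈ A.gr e) (a : Fin n) :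
    pderiv a r ∈ A.gr (e - 1) := by
  rcases lt_or_ge e 0 with h | h
  · rw [A.negBot e h, Submodule.mem_bot] at hr; simp [hr]
  · lift e to ℕ using h
    rcases e with _ | k
    · have h0 := A.zeroEq
      rw [Nat.cast_zero, h0, Submodule.mem_span_singleton] at hr
      obtain ⟨c, rfl⟩ := hr
      simp
    · rw [hA] at hr
      have := IsHomogeneous.pderiv (i := a) hr
      push_cast
      rw [add_sub_cancel_right, hA]
      exact this

/-- The Euler formula for homogeneous polynomials. -/
theorem gr_euler {A : StdGrading K (MvPolynomial (Fin n) K)}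
    (hA : ∀ i : ℕ, A.gr (i : ℤ) = MvPolynomial.homogeneousSubmodule (Fin n) K i)
    {e : ℤ} {r : MvPolynomial (Fin n) K} (hr : r ∈ A.gr e) :
    ∑ a, X a * pderiv a r = e • r := by
  rcases lt_or_ge e 0 with h | h
  · rw [A.negBot e h, Submodule.mem_bot] at hr; simp [hr]
  · lift e to ℕ using h
    rw [hA] at hr
    rw [IsHomogeneous.sum_X_mul_pderiv hr, natCast_zsmul]

theorem maxIdeal_coeff {A : StdGrading K (MvPolynomial (Fin n) K)}
    (hA : ∀ i : ℕ, A.gr (i : ℤ) = MvPolynomial.homogeneousSubmodule (Fin n) K i)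
    {r : MvPolynomial (Fin n) K} (hr : r ∈ A.maxIdeal) : constantCoeff r = 0 := by
  have : A.maxIdeal ≤ RingHom.ker (constantCoeff (R := K) (σ := Fin n)) := by
    refine Ideal.span_le.2 ?_
    rintro y ⟨i, hi, hy⟩
    lift i to ℕ using hi.le
    rw [hA] at hy
    have h0 := IsHomogeneous.coeff_eq_zero (d := 0) hy (by
      simp only [map_zero]; intro h; subst h; simp at hi)
    exact h0
  exact this hr

theorem gr_zero_coeff (A : StdGrading K (MvPolynomial (Fin n) K))
    {r : MvPolynomial (Fin n) K} (hr : r ∈ A.gr 0) (h : constantCoeff r = 0) : r = 0 := by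
  rw [A.zeroEq, Submodule.mem_span_singleton] at hr
  obtain ⟨c, rfl⟩ := hr
  simp at h
  simp [h]

variable {β : ℕ → ℤ → ℕ} {i : ℕ}

theorem freeGr_smul {A : StdGrading K (MvPolynomial (Fin n) K)}
    (hA : ∀ i : ℕ, A.gr (i : ℤ) = MvPolynomial.homogeneousSubmodule (Fin n) K i)
    (a : Fin n) (d : ℤ) (f : FreeMod (MvPolynomial (Fin n) K) β i) (hf : f ∈ freeGr A β i d) :
    (X a : MvPolynomial (Fin n) K) • f ∈ freeGr A β i (d + 1) := by
  intro p
  have := gr_X_mul hA (hf p) a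
  rw [Finsupp.smul_apply, smul_eq_mul]
  convert this using 2
  ring

/-- Submodules are independent if a jointly injective family of maps sends them into independent
families. -/
theorem iSupIndep_of_eval {K V ι : Type*} [Field K] [AddCommGroup V] [Module K V] {g : ι → Submodule K V}
    {Q : Type*} (V' : Q → Type*) [∀ q, AddCommGroup (V' q)] [∀ q, Module K (V' q)]
    (φ : ∀ q, V →ₗ[K] V' q) (hφ : ∀ y, (∀ q, φ q y = 0) → y = 0)
    (g' : ∀ q, ι → Submodule K (V' q)) (hg' : ∀ q, iSupIndep (g' q))
    (h : ∀ q d, ∀ y ∈ g d, φ q y ∈ g' q d) : iSupIndep g := by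
  intro v
  rw [Submodule.disjoint_def]
  intro y hy hy'
  refine hφ y fun q => ?_
  refine Submodule.disjoint_def.1 (hg' q v) _ (h q v y hy) ?_
  have : (⨆ d, ⨆ (_ : d ≠ v), g d) ≤ (⨆ d, ⨆ (_ : d ≠ v), g' q d).comap (φ q) :=
    iSup₂_le fun d hd y hy => (le_iSup₂ (f := fun d (_ : d ≠ v) => g' q d) d hd) (h q d y hy)
  exact this hy'

theorem freeGr_indep (A : StdGrading K (MvPolynomial (Fin n) K)) : iSupIndep (freeGr A β i) := by
  refine iSupIndep_of_eval (Q := (j : ℤ) × Fin (β i j)) (fun _ => MvPolynomial (Fin n) K)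
    (fun p => (Finsupp.lapply p : FreeMod (MvPolynomial (Fin n) K) β i →ₗ[K] _))
    (fun y hy => Finsupp.ext hy) (fun p d => A.gr (d - p.1)) (fun p => ?_) (fun p d y hy => hy p)
  exact A.internal.submodule_iSupIndep.comp (sub_left_injective (b := p.1))

theorem mem_iSup_freeGr (A : StdGrading K (MvPolynomial (Fin n) K))
    (f : FreeMod (MvPolynomial (Fin n) K) β i) : f ∈ ⨆ d, freeGr A β i d := by
  induction f using Finsupp.induction_linear with
  | zero => exact zero_mem _
  | add f g hf hg => exact add_mem hf hg
  | single p r =>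
    have hr : r ∈ ⨆ d, A.gr d := by rw [A.internal.submodule_iSup_eq_top]; trivial
    have : (⨆ d, A.gr d) ≤ (⨆ d, freeGr A β i d).comap
        (Finsupp.lsingle p : MvPolynomial (Fin n) K →ₗ[K] FreeMod (MvPolynomial (Fin n) K) β i) := by
      refine iSup_le fun d y hy => ?_
      refine Submodule.mem_iSup_of_mem (d + p.1) fun q => ?_
      rw [Finsupp.lsingle_apply, Finsupp.single_apply]
      split_ifs with h
      · subst h; simpa using hy
      · exact zero_mem _
    exact this hr

/-- Homogeneous elements lift to homogeneous elements under the augmentation of a resolution. -/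
theorem exists_homog_lift {N : Type*} [AddCommGroup N] [Module K N]
    [Module (MvPolynomial (Fin n) K) N] [IsScalarTower K (MvPolynomial (Fin n) K) N]
    {A : StdGrading K (MvPolynomial (Fin n) K)} {g : ℤ → Submodule K N} (hind : iSupIndep g)
    (res : MinFreeRes A g β) {v : ℤ} {m : N} (hm : m ∈ g v) :
    ∃ f ∈ freeGr A β 0 v, res.eps f = m := by
  obtain ⟨f, rfl⟩ := res.eps_surjective m
  have hf := mem_iSup_freeGr A f
  have hsup : (⨆ d, freeGr A β 0 d) ≤ freeGr A β 0 v ⊔ ⨆ d, ⨆ (_ : d ≠ v), freeGr A β 0 d := by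
    refine iSup_le fun d => ?_
    by_cases h : d = v
    · subst h; exact le_sup_left
    · exact le_sup_of_le_right (le_iSup₂ (f := fun d (_ : d ≠ v) => freeGr A β 0 d) d h)
  obtain ⟨f₁, h₁, f₂, h₂, rfl⟩ := Submodule.mem_sup.1 (hsup hf)
  refine ⟨f₁, h₁, ?_⟩
  have h3 : (⨆ d, ⨆ (_ : d ≠ v), freeGr A β 0 d) ≤
      (⨆ d, ⨆ (_ : d ≠ v), g d).comap (res.eps.restrictScalars K) :=
    iSup₂_le fun d hd y hy => (le_iSup₂ (f := fun d (_ : d ≠ v) => g d) d hd)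
      (res.graded_eps d y hy)
  have h4 : res.eps f₂ ∈ g v := by
    have := sub_mem hm (res.graded_eps v f₁ h₁)
    simpa using this
  have h5 := Submodule.disjoint_def.1 (hind v) _ h4 (h3 h₂)
  simp [h5]

end Poly

/-! ### Acyclicity of free modules -/

section Acyclic
open MvPolynomial
variable {n : ℕ} {K : Type*} [Field K] {ι : Type*}

/-- Multiplication of the `p`-th coordinate of a free module by the scalar `c p`. -/
noncomputable def lam (c : ι → K) :
    (ι →₀ MvPolynomial (Fin n) K) →ₗ[MvPolynomial (Fin n) K] (ι →₀ MvPolynomial (Fin n) K) :=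
  Finsupp.lsum (MvPolynomial (Fin n) K) fun p => c p • Finsupp.lsingle p

theorem lam_apply (c : ι → K) (f : ι →₀ MvPolynomial (Fin n) K) (p : ι) :
    lam c f p = c p • f p := by
  induction f using Finsupp.induction_linear with
  | zero => simp
  | add f g hf hg => simp [hf, hg]
  | single q r =>
    classical
    simp only [lam, Finsupp.lsum_single, LinearMap.smul_apply, Finsupp.lsingle_apply,
      Finsupp.smul_apply, Finsupp.single_apply]
    split_ifs with h
    · rw [h]
    · simp

/-- The partial derivative with respect to `x_a`, coordinatewise on a free module. -/
noncomputable def Dop (n : ℕ) (K ι : Type*) [Field K] (a : Fin n) :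
    AddMonoid.End (ι →₀ MvPolynomial (Fin n) K) :=
  Finsupp.mapRange.addMonoidHom (pderiv a : Derivation K _ _).toLinearMap.toAddMonoidHom

theorem Dop_apply (a : Fin n) (f : ι →₀ MvPolynomial (Fin n) K) (p : ι) :
    Dop n K ι a f p = pderiv a (f p) := rfl

/-- The de Rham differential on a free module, a homotopy for the Koszul differential. -/
noncomputable def hop (n : ℕ) (K ι : Type*) [Field K] :
    AddMonoid.End (EM n (ι →₀ MvPolynomial (Fin n) K)) :=
  ∑ a, pwE n _ (Dop n K ι a) * eop a

/-- The Euler homotopy for operators `D a` that satisfy the Leibniz rule against the `x b`. -/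
theorem euler_abstract {R N : Type*} [CommRing R] [AddCommGroup N] [Module R N]
    (x : Fin n → R) (D : Fin n → AddMonoid.End N)
    (hD : ∀ a b y, D a (x b • y) = x b • D a y + if a = b then y else 0)
    (f : EM n N) (T : Finset (Fin n)) :
    kE N x ((∑ a, pwE n N (D a) * eop a : AddMonoid.End (EM n N)) f) T
      + (∑ a, pwE n N (D a) * eop a : AddMonoid.End (EM n N)) (kE N x f) T
      = ∑ a, x a • D a (f T) + T.card • f T := by
  have h := DFunLike.congr_fun (car_euler
    (A := AddMonoid.End (EM n N))
    (fun a => xop n N (x a)) (fun a => pwE n N (D a)) (fun a => cop a) (fun a => eop a)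
    (fun _ _ => pwE_eop _ _) (fun _ _ => pwE_cop _ _)
    (fun a b => by
      ext f T
      rw [end_mul_apply, end_add_apply, end_mul_apply, pwE_apply, xop_apply, hD, Pi.add_apply,
        xop_apply, pwE_apply]
      congr 1
      split_ifs <;> rfl) cop_eop) f
  have h2 := congrFun h T
  simp only [end_add_apply, Pi.add_apply, eop_cop_sum] at h2
  refine Eq.trans h2 ?_
  congr 1
  simp only [end_sum_apply, Finset.sum_apply, end_mul_apply, xop_apply, pwE_apply]

theorem Dop_smul (a b : Fin n) (y : ι →₀ MvPolynomial (Fin n) K) :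
    Dop n K ι a ((X b : MvPolynomial (Fin n) K) • y)
      = (X b : MvPolynomial (Fin n) K) • Dop n K ι a y + if a = b then y else 0 := by
  refine Finsupp.ext fun p => ?_
  rw [Dop_apply, Finsupp.add_apply, Finsupp.smul_apply, Finsupp.smul_apply, Dop_apply,
    smul_eq_mul, smul_eq_mul, Derivation.leibniz, smul_eq_mul, smul_eq_mul]
  congr 1
  by_cases hab : a = b
  · subst hab; rw [pderiv_X_self, mul_one, if_pos rfl]
  · rw [pderiv_X_of_ne (Ne.symm hab), mul_zero, if_neg hab, Finsupp.zero_apply]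

theorem euler_homotopy (f : EM n (ι →₀ MvPolynomial (Fin n) K)) (T : Finset (Fin n)) (p : ι) :
    kE _ (X : Fin n → MvPolynomial (Fin n) K) (hop n K ι f) T p
      + hop n K ι (kE _ (X : Fin n → MvPolynomial (Fin n) K) f) T p
      = ∑ a, X a * pderiv a (f T p) + T.card • f T p := by
  have h := DFunLike.congr_fun (euler_abstract (X : Fin n → MvPolynomial (Fin n) K)
    (Dop n K ι) Dop_smul f T) p
  simpa only [hop, Finsupp.add_apply, Finsupp.finsetSum_apply, Finsupp.smul_apply, smul_eq_mul,
    Dop_apply] using h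

/-- Koszul cycles of a graded free module are boundaries, except for those of homological degree `0`
that involve basis elements of internal degree exactly `v`. On the `p`-th coordinate the Euler
homotopy is multiplication by `v - p.1`, which is invertible in characteristic zero unless `p.1 = v`. -/
theorem free_acyclic [CharZero K] {A : StdGrading K (MvPolynomial (Fin n) K)}
    (hA : ∀ i : ℕ, A.gr (i : ℤ) = MvPolynomial.homogeneousSubmodule (Fin n) K i)
    {β : ℕ → ℤ → ℕ} {k i : ℕ} {v : ℤ} {z : EM n (FreeMod (MvPolynomial (Fin n) K) β k)}
    (hz : z ∈ CE n (freeGr A β k) i v)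
    (hd : kE _ (X : Fin n → MvPolynomial (Fin n) K) z = 0)
    (h0 : i = 0 → ∀ T p, p.1 = v → z T p = 0) :
    ∃ w ∈ CE n (freeGr A β k) (i + 1) v, kE _ (X : Fin n → MvPolynomial (Fin n) K) w = z := by
  have hh : hop n K _ z ∈ CE n (freeGr A β k) (i + 1) v := by
    refine ⟨fun T hT => ?_, fun T p => ?_⟩
    · simp only [hop, end_sum_apply, Finset.sum_apply, end_mul_apply, pwE_apply, eop_apply]
      refine Finset.sum_eq_zero fun a _ => ?_
      split_ifs with h
      · rw [hz.1, smul_zero, map_zero]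
        rw [Finset.card_erase_of_mem h]
        have := Finset.card_pos.2 ⟨a, h⟩
        omega
      · rw [map_zero]
    · simp only [hop, end_sum_apply, Finset.sum_apply, end_mul_apply, pwE_apply, eop_apply,
        Finsupp.finsetSum_apply]
      refine sum_mem fun a _ => ?_
      split_ifs with h
      · have := gr_pderiv hA (zsmul_mem (hz.2 (T.erase a) p) (sg a T)) a
        have e : v - ((i + 1 : ℕ) : ℤ) - p.1 = v - i - p.1 - 1 := by push_cast; ring
        rw [Dop_apply, e]
        exact this
      · rw [map_zero]; exact zero_mem _
  let c : ((j : ℤ) × Fin (β k j)) → K := fun p => ((v - p.1 : ℤ) : K)⁻¹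
  refine ⟨pw n (lam c).toAddMonoidHom (hop n K _ z), pw_mem_CE _ ?_ hh, ?_⟩
  · intro d m hm p
    change lam c m p ∈ _
    rw [lam_apply]
    exact Submodule.smul_mem _ _ (hm p)
  · rw [kE_pw]
    ext1 T
    refine Finsupp.ext fun p => ?_
    rw [pw_apply]
    change lam c _ p = _
    rw [lam_apply]
    have he := euler_homotopy z T p
    rw [hd, map_zero, Pi.zero_apply, Finsupp.zero_apply, add_zero] at he
    rw [he]
    by_cases hT : T.card = i
    · have hp := hz.2 T p
      rw [gr_euler hA hp, hT, ← natCast_zsmul, ← add_smul, ← Int.cast_smul_eq_zsmul K, smul_smul]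
      have e1 : v - i - p.1 + i = v - p.1 := by ring
      rw [e1]
      by_cases hv : p.1 = v
      · have : z T p = 0 := by
          rcases Nat.eq_zero_or_pos i with hi | hi
          · exact h0 hi T p hv
          · rw [A.negBot _ (by omega)] at hp
            exact hp
        rw [this, smul_zero]
      · rw [inv_mul_cancel₀, one_smul]
        exact_mod_cast sub_ne_zero.2 (Ne.symm hv)
    · simp [hz.1 T hT]

end Acyclic

/-! ### Betti numbers as dimensions of Koszul homology -/

section Dim
open MvPolynomial
variable {n : ℕ} {K : Type u} [Field K]

/-- A minimal resolution of `N`, truncated, is a minimal resolution of the first syzygy module. -/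
noncomputable def tailRes {N : Type u} [AddCommGroup N] [Module K N]
    [Module (MvPolynomial (Fin n) K) N] [IsScalarTower K (MvPolynomial (Fin n) K) N]
    {A : StdGrading K (MvPolynomial (Fin n) K)} {g : ℤ → Submodule K N} {β : ℕ → ℤ → ℕ}
    (res : MinFreeRes A g β) :
    MinFreeRes A (M := LinearMap.ker res.eps)
      (fun d => (freeGr A β 0 d).comap ((LinearMap.ker res.eps).subtype.restrictScalars K))
      (fun i => β (i + 1)) where
  eps := (res.d 0).codRestrict (LinearMap.ker res.eps)
    (fun c => (res.exact_eps _).2 ⟨c, rfl⟩)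
  d i := res.d (i + 1)
  eps_surjective := by
    rintro ⟨y, hy⟩
    obtain ⟨c, hc⟩ := (res.exact_eps y).1 hy
    exact ⟨c, Subtype.ext hc⟩
  exact_eps := by
    intro y
    rw [← res.exact_d 0 y]
    exact Subtype.ext_iff
  exact_d i := res.exact_d (i + 1)
  graded_eps dg f hf := res.graded_d 0 dg f hf
  graded_d i dg f hf := res.graded_d (i + 1) dg f hf
  minimal i f p := res.minimal (i + 1) f p

/-- The degree-`v` part of the map from the free module to its reduction modulo the maximal ideal:
only the constant coefficients on basis elements of degree `v` survive. -/
noncomputable def coeffMap (A : StdGrading K (MvPolynomial (Fin n) K)) (β : ℕ → ℤ → ℕ) (v : ℤ) :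
    freeGr A β 0 v →ₗ[K] (Fin (β 0 v) → K) where
  toFun f k := constantCoeff (f.1 ⟨v, k⟩)
  map_add' f g := by ext; simp
  map_smul' c f := by ext; simp

theorem single_mem_CE {V : Type*} [AddCommGroup V] [Module K V] (g : ℤ → Submodule K V) {v : ℤ}
    {m : V} (hm : m ∈ g v) : (Pi.single ∅ m : EM n V) ∈ CE n g 0 v := by
  refine ⟨fun T hT => ?_, fun T => ?_⟩
  · exact Pi.single_eq_of_ne (by rintro rfl; simp at hT) _
  · by_cases hT : T = ∅
    · subst hT; simpa using hm
    · rw [Pi.single_eq_of_ne hT]; exact zero_mem _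

/-- `H_0` computed from a surjection `ε : F → N`: if a surjective `c` on `F_v` vanishes exactly on the elements
which are boundaries modulo `ker ε`, then `H_0(x; N)_v` is the target of `c`. -/
theorem zero_equiv {R F N V : Type*} [CommRing R] [Algebra K R]
    [AddCommGroup F] [Module K F] [Module R F] [IsScalarTower K R F]
    [AddCommGroup N] [Module K N] [Module R N] [IsScalarTower K R N]
    [AddCommGroup V] [Module K V]
    (x : Fin n → R) (gF : ℤ → Submodule K F) (gN : ℤ → Submodule K N) (ε : F →ₗ[R] N)
    (hεg : ∀ d, ∀ u ∈ gF d, ε u ∈ gN d)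
    (hliftN : ∀ d, ∀ m ∈ gN d, ∃ w ∈ gF d, ε w = m) (v : ℤ)
    (c : gF v →ₗ[K] V) (hc : Function.Surjective c)
    (hac : ∀ f : gF v, c f = 0 → ∃ w ∈ CE n gF (0 + 1) v, kE F x w = Pi.single ∅ (f : F))
    (hmin : ∀ f : gF v, ∀ y ∈ CE n gF (0 + 1) v, ε (kE F x y ∅) = ε f → c f = 0) :
    Nonempty (HE x gN 0 v ≃ₗ[K] V) := by
  let α : gF v →ₗ[K] ZE x gN 0 v :=
    ((LinearMap.single K (fun _ : Finset (Fin n) => N) ∅).comp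
      ((ε.restrictScalars K).comp (gF v).subtype)).codRestrict _ (by
        intro f
        have := single_mem_CE (n := n) gN (hεg v f.1 f.2)
        exact ⟨this, kE_CE_zero this⟩)
  have hα : ∀ f, (α f : EM n N) = Pi.single ∅ (ε f.1) := fun f => rfl
  have hpw : ∀ f : F, pw n ε.toAddMonoidHom (Pi.single ∅ f : EM n _) = Pi.single ∅ (ε f) := by
    intro f
    ext T
    rw [pw_apply]
    by_cases hT : T = ∅
    · subst hT; simp
    · simp [Pi.single_eq_of_ne hT]
  have hP : ∀ f, f ∈ LinearMap.ker c ↔ α f ∈ (BE x gN 0 v).comap (ZE x gN 0 v).subtype := by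
    intro f
    constructor
    · intro hf
      obtain ⟨w, hw, hwf⟩ := hac f hf
      refine ⟨pw n ε.toAddMonoidHom w, pw_mem_CE _ hεg hw, ?_⟩
      rw [kE_pw, hwf, hpw]; rfl
    · rintro ⟨t, ht, hte⟩
      obtain ⟨y, hy, rfl⟩ := exists_lift_CE (g := gF) ε.toAddMonoidHom ht
        (fun T => hliftN _ _ (ht.2 T))
      rw [kE_pw] at hte
      refine hmin f y hy ?_
      have := congrFun hte ∅
      rw [pw_apply] at this
      refine this.trans ?_
      change (α f : EM n N) ∅ = _
      rw [hα, Pi.single_eq_same]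
  have hS : ∀ z, ∃ f, α f = z := by
    rintro ⟨z, hz, hz'⟩
    have h0 := hz.2 ∅
    rw [Nat.cast_zero, sub_zero] at h0
    obtain ⟨f, hf, hfz⟩ := hliftN _ _ h0
    refine ⟨⟨f, hf⟩, Subtype.ext ?_⟩
    rw [hα]
    ext T
    by_cases hT : T = ∅
    · subst hT; simpa using hfz
    · rw [Pi.single_eq_of_ne hT]
      exact (hz.1 T (by simpa using hT)).symm
  have e1 := quot_equiv α (LinearMap.ker c) _ hP hS
  exact ⟨e1.some.symm.trans (LinearMap.quotKerEquivOfSurjective _ hc)⟩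

theorem coeffMap_surjective (A : StdGrading K (MvPolynomial (Fin n) K)) (β : ℕ → ℤ → ℕ) (v : ℤ) :
    Function.Surjective (coeffMap A β v) := by
  intro c
  refine ⟨⟨Finsupp.mapDomain (fun k => (⟨v, k⟩ : (j : ℤ) × Fin (β 0 j)))
    (Finsupp.equivFunOnFinite.symm fun k => C (c k)), fun p => ?_⟩, ?_⟩
  · by_cases hp : p.1 = v
    · obtain ⟨p, k⟩ := p
      dsimp only at hp; subst hp
      rw [Finsupp.mapDomain_apply (fun a b h => by simpa using h), sub_self, A.zeroEq]
      exact Submodule.mem_span_singleton.2 ⟨c k, by simp [smul_eq_C_mul]⟩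
    · rw [Finsupp.mapDomain_of_notMem_range]
      · exact zero_mem _
      · rintro ⟨k, rfl⟩; exact hp rfl
  · ext k
    change constantCoeff (Finsupp.mapDomain _ _ _) = _
    rw [Finsupp.mapDomain_apply (fun a b h => by simpa using h)]
    simp

theorem hdim_zero [CharZero K] {A : StdGrading K (MvPolynomial (Fin n) K)}
    (hA : ∀ i : ℕ, A.gr (i : ℤ) = MvPolynomial.homogeneousSubmodule (Fin n) K i) (v : ℤ)
    {N : Type u} [AddCommGroup N] [Module K N]
    [Module (MvPolynomial (Fin n) K) N] [IsScalarTower K (MvPolynomial (Fin n) K) N]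
    {g : ℤ → Submodule K N} (hind : iSupIndep g)
    {β : ℕ → ℤ → ℕ} (res : MinFreeRes A g β) :
    Nonempty (HE (X : Fin n → MvPolynomial (Fin n) K) g 0 v ≃ₗ[K] (Fin (β 0 v) → K)) := by
  refine zero_equiv (X : Fin n → MvPolynomial (Fin n) K) (freeGr A β 0) g res.eps res.graded_eps
    (fun d m hm => exists_homog_lift hind res hm) v (coeffMap A β v) (coeffMap_surjective A β v)
    (fun f hf => ?_) (fun f y hy h1 => ?_)
  · refine free_acyclic hA (single_mem_CE _ f.2) (kE_CE_zero (single_mem_CE _ f.2)) ?_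
    rintro - T ⟨d, k⟩ hp
    dsimp only at hp
    subst hp
    by_cases hT : T = ∅
    · subst hT
      rw [Pi.single_eq_same]
      refine gr_zero_coeff A ?_ (congrFun hf k)
      have := f.2 ⟨_, k⟩
      simpa using this
    · rw [Pi.single_eq_of_ne hT]; rfl
  · obtain ⟨s, hs⟩ := (res.exact_eps (f.1 - kE _ X y ∅)).1 (by rw [map_sub, h1, sub_self])
    ext k
    change constantCoeff (f.1 ⟨v, k⟩) = 0
    have h2 := maxIdeal_coeff hA (res.minimal 0 s ⟨v, k⟩)
    rw [hs, Finsupp.sub_apply, map_sub, sub_eq_zero] at h2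
    rw [h2, kE_apply, Finsupp.finsetSum_apply, map_sum]
    refine Finset.sum_eq_zero fun a _ => ?_
    rw [Finsupp.smul_apply, smul_eq_mul, map_mul]
    simp

/-- Dimension shifting `H_{i+1}(x; N)_v ≃ H_i(x; L)_v` along `0 → L → F → N → 0`, when `F` is acyclic
in homological degree `i + 1` and the cycles of `L` bound in `F`. Both homologies are quotients of the
space `W` of pairs `(w, u)` with `∂ w = κ u`. -/
theorem shift_equiv {R F L N : Type*} [CommRing R] [Algebra K R]
    [AddCommGroup F] [Module K F] [Module R F] [IsScalarTower K R F] [IsAddTorsionFree F]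
    [AddCommGroup L] [Module K L] [Module R L] [IsScalarTower K R L]
    [AddCommGroup N] [Module K N] [Module R N] [IsScalarTower K R N]
    (x : Fin n → R) (gF : ℤ → Submodule K F) (gL : ℤ → Submodule K L) (gN : ℤ → Submodule K N)
    (hmul : ∀ a d, ∀ m ∈ gF d, x a • m ∈ gF (d + 1))
    (κ : L →ₗ[R] F) (ε : F →ₗ[R] N) (hκinj : Function.Injective κ) (hεκ : ∀ u, ε (κ u) = 0)
    (hκg : ∀ d, ∀ u ∈ gL d, κ u ∈ gF d) (hεg : ∀ d, ∀ u ∈ gF d, ε u ∈ gN d)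
    (hlift : ∀ d, ∀ w ∈ gF d, ε w = 0 → ∃ u ∈ gL d, κ u = w)
    (hliftN : ∀ d, ∀ m ∈ gN d, ∃ w ∈ gF d, ε w = m)
    (i : ℕ) (v : ℤ)
    (hac : ∀ z ∈ CE n gF (i + 1) v, kE F x z = 0 → ∃ w ∈ CE n gF (i + 1 + 1) v, kE F x w = z)
    (hac' : ∀ u ∈ CE n gL i v, kE L x u = 0 →
      ∃ w ∈ CE n gF (i + 1) v, kE F x w = pw n κ.toAddMonoidHom u) :
    Nonempty (HE x gN (i + 1) v ≃ₗ[K] HE x gL i v) := by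
  have hκi : ∀ u u' : EM n L, pw n κ.toAddMonoidHom u = pw n κ.toAddMonoidHom u' → u = u' := by
    intro u u' h
    ext1 T
    exact hκinj (congrFun h T)
  have hεκ' : ∀ u, pw n ε.toAddMonoidHom (pw n κ.toAddMonoidHom u) = 0 := by
    intro u
    ext1 T
    exact hεκ (u T)
  have hκmem : ∀ {k u}, u ∈ CE n gL k v → pw n κ.toAddMonoidHom u ∈ CE n gF k v :=
    fun hu => pw_mem_CE κ.toAddMonoidHom hκg hu
  have hεmem : ∀ {k u}, u ∈ CE n gF k v → pw n ε.toAddMonoidHom u ∈ CE n gN k v :=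
    fun hu => pw_mem_CE ε.toAddMonoidHom hεg hu
  have hl : ∀ {k w}, w ∈ CE n gF k v → pw n ε.toAddMonoidHom w = 0 →
      ∃ u ∈ CE n gL k v, pw n κ.toAddMonoidHom u = w := by
    intro k w hw hw0
    exact exists_lift_CE κ.toAddMonoidHom hw fun T => hlift _ _ (hw.2 T) (congrFun hw0 T)
  have hlN : ∀ {k t}, t ∈ CE n gN k v → ∃ y ∈ CE n gF k v, pw n ε.toAddMonoidHom y = t :=
    fun ht => exists_lift_CE ε.toAddMonoidHom ht (fun T => hliftN _ _ (ht.2 T))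
  let W : Submodule K (EM n F × EM n L) :=
    { carrier := {y | y.1 ∈ CE n gF (i + 1) v ∧ y.2 ∈ CE n gL i v ∧
        kE F x y.1 = pw n κ.toAddMonoidHom y.2}
      add_mem' := fun ha hb => ⟨add_mem ha.1 hb.1, add_mem ha.2.1 hb.2.1, by
        rw [Prod.fst_add, Prod.snd_add, map_add, map_add, ha.2.2, hb.2.2]⟩
      zero_mem' := ⟨zero_mem _, zero_mem _, by simp⟩
      smul_mem' := fun c a ha => ⟨Submodule.smul_mem _ c ha.1, Submodule.smul_mem _ c ha.2.1, by
        rw [Prod.smul_fst, Prod.smul_snd, kE_smul, ha.2.2]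
        ext T
        exact ((κ.restrictScalars K).map_smul c (a.2 T)).symm⟩ }
  let α : W →ₗ[K] ZE x gN (i + 1) v :=
    (((ε.restrictScalars K).compLeft (Finset (Fin n))).comp
      ((LinearMap.fst K (EM n F) (EM n L)).comp W.subtype)).codRestrict _ (by
        rintro ⟨⟨w, u⟩, hw, hu, h⟩
        refine ⟨hεmem hw, ?_⟩
        change kE N x (pw n ε.toAddMonoidHom w) = 0
        change kE F x w = _ at h
        rw [kE_pw, h, hεκ'])
  let γ : W →ₗ[K] ZE x gL i v :=
    ((LinearMap.snd K (EM n F) (EM n L)).comp W.subtype).codRestrict _ (by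
        rintro ⟨⟨w, u⟩, hw, hu, h⟩
        refine ⟨hu, hκi _ _ ?_⟩
        change kE F x w = pw n κ.toAddMonoidHom u at h
        change pw n κ.toAddMonoidHom (kE L x u) = pw n κ.toAddMonoidHom 0
        rw [← kE_pw, ← h, kE_kE, map_zero])
  let P : Submodule K W := ((BE x gL i v).comap (ZE x gL i v).subtype).comap γ
  have hP : ∀ w, w ∈ P ↔ α w ∈ (BE x gN (i + 1) v).comap (ZE x gN (i + 1) v).subtype := by
    rintro ⟨⟨w, u⟩, hw, hu, h⟩
    change kE F x w = pw n κ.toAddMonoidHom u at h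
    change u ∈ BE x gL i v ↔ pw n ε.toAddMonoidHom w ∈ BE x gN (i + 1) v
    constructor
    · rintro ⟨u', hu', rfl⟩
      obtain ⟨y, hy, hyw⟩ := hac _ (sub_mem hw (hκmem hu'))
        (by rw [map_sub, h, kE_pw, sub_self])
      refine ⟨pw n ε.toAddMonoidHom y, hεmem hy, ?_⟩
      rw [kE_pw, hyw, map_sub, hεκ', sub_zero]
    · rintro ⟨t, ht, hte⟩
      obtain ⟨y, hy, rfl⟩ := hlN ht
      rw [kE_pw] at hte
      obtain ⟨u', hu', hu'e⟩ := hl (sub_mem hw (kE_mem_CE hmul hy))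
        (by rw [map_sub]; exact sub_eq_zero.2 hte.symm)
      refine ⟨u', hu', hκi _ _ ?_⟩
      rw [← kE_pw, hu'e, map_sub, kE_kE, sub_zero, h]
  have hS : ∀ z, ∃ w, α w = z := by
    rintro ⟨z, hz, hz'⟩
    obtain ⟨w, hw, rfl⟩ := hlN hz
    rw [kE_pw] at hz'
    obtain ⟨u, hu, hue⟩ := hl (kE_mem_CE hmul hw) hz'
    exact ⟨⟨(w, u), hw, hu, hue.symm⟩, rfl⟩
  have hS' : ∀ z, ∃ w, γ w = z := by
    rintro ⟨u, hu, hu'⟩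
    obtain ⟨w, hw, hwu⟩ := hac' u hu hu'
    exact ⟨⟨(w, u), hw, hu, hwu⟩, rfl⟩
  have e1 := quot_equiv α P _ hP hS
  have e2 := quot_equiv γ P ((BE x gL i v).comap (ZE x gL i v).subtype) (fun _ => Iff.rfl) hS'
  exact ⟨e1.some.symm.trans e2.some⟩

theorem hdim_succ [CharZero K] {A : StdGrading K (MvPolynomial (Fin n) K)}
    (hA : ∀ i : ℕ, A.gr (i : ℤ) = MvPolynomial.homogeneousSubmodule (Fin n) K i) (v : ℤ) (i : ℕ)
    {N : Type u} [AddCommGroup N] [Module K N]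
    [Module (MvPolynomial (Fin n) K) N] [IsScalarTower K (MvPolynomial (Fin n) K) N]
    {g : ℤ → Submodule K N} (hind : iSupIndep g)
    {β : ℕ → ℤ → ℕ} (res : MinFreeRes A g β) :
    Nonempty (HE (X : Fin n → MvPolynomial (Fin n) K) g (i + 1) v ≃ₗ[K]
      HE (N := LinearMap.ker res.eps) (X : Fin n → MvPolynomial (Fin n) K)
        (fun d => (freeGr A β 0 d).comap ((LinearMap.ker res.eps).subtype.restrictScalars K))
        i v) := by
  have : IsAddTorsionFree (FreeMod (MvPolynomial (Fin n) K) β 0) :=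
    isAddTorsionFree_of_charZero K _
  refine shift_equiv X (freeGr A β 0) _ g (freeGr_smul hA) (LinearMap.ker res.eps).subtype res.eps
    Subtype.val_injective (fun u => u.2) (fun d u hu => hu) res.graded_eps
    (fun d w hw hw0 => ⟨⟨w, hw0⟩, hw, rfl⟩) (fun d m hm => exists_homog_lift hind res hm) i v
    (fun z hz hd => free_acyclic hA hz hd (fun h => absurd h (Nat.succ_ne_zero i)))
    (fun u hu hu' => ?_)
  have hκmem : pw n (LinearMap.ker res.eps).subtype.toAddMonoidHom u ∈ CE n (freeGr A β 0) i v :=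
    pw_mem_CE _ (fun d m hm => hm) hu
  refine free_acyclic hA hκmem (by rw [kE_pw, hu', map_zero]) ?_
  rintro rfl T p hp
  have hmem := hκmem.2 T p
  by_cases hT : T.card = 0
  · obtain ⟨s, hs⟩ := (res.exact_eps (u T).1).1 (u T).2
    rw [hp, Nat.cast_zero, sub_zero, sub_self] at hmem
    refine gr_zero_coeff A hmem ?_
    have := maxIdeal_coeff hA (res.minimal 0 s p)
    rw [hs] at this
    exact this
  · rw [hκmem.1 T hT]; rfl

/-- Koszul homology is `Tor(N, K)`: its degree-`(i, v)` part has dimension the graded Betti number. -/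
theorem hdim [CharZero K] {A : StdGrading K (MvPolynomial (Fin n) K)}
    (hA : ∀ i : ℕ, A.gr (i : ℤ) = MvPolynomial.homogeneousSubmodule (Fin n) K i) (v : ℤ) (i : ℕ) :
    ∀ {N : Type u} [AddCommGroup N] [Module K N]
    [Module (MvPolynomial (Fin n) K) N] [IsScalarTower K (MvPolynomial (Fin n) K) N]
    {g : ℤ → Submodule K N} (_ : iSupIndep g)
    {β : ℕ → ℤ → ℕ} (_ : MinFreeRes A g β),
    Nonempty (HE (X : Fin n → MvPolynomial (Fin n) K) g i v ≃ₗ[K] (Fin (β i v) → K)) := by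
  induction i with
  | zero => exact fun hind _ res => hdim_zero hA v hind res
  | succ i ih =>
    intro N _ _ _ _ g hind β res
    obtain ⟨e⟩ := hdim_succ hA v i hind res
    obtain ⟨e'⟩ := ih (iSupIndep_of_eval (Q := Unit) (fun _ => FreeMod (MvPolynomial (Fin n) K) β 0)
      (fun _ => (LinearMap.ker res.eps).subtype.restrictScalars K)
      (fun y hy => Subtype.ext (hy ())) (fun _ => freeGr A β 0) (fun _ => freeGr_indep A)
      (fun _ d y hy => hy)) (tailRes res)
    exact ⟨e.trans e'⟩

end Dim

/-! ### The comparison map -/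

section Compare
variable {n : ℕ} {K R M Z : Type*} [Field K] [CommRing R] [Algebra K R]
  [AddCommGroup M] [Module K M] [Module R M] [IsScalarTower K R M]
  [AddCommGroup Z] [Module K Z] [Module R Z] [IsScalarTower K R Z]

theorem tau_iter_smul (k : ℕ) (c : K) (f : EM n (EM n M)) :
    (tau n M ^ k) (c • f) = c • (tau n M ^ k) f := by
  induction k with
  | zero => rfl
  | succ k ih =>
    rw [pow_succ', end_mul_apply, end_mul_apply, ih]
    ext S T
    simp only [tau_apply, Pi.smul_apply, Finset.smul_sum]
    refine Finset.sum_congr rfl fun a _ => ?_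
    split_ifs
    · simp
    · rw [smul_comm c (sg a S), smul_comm c (sg a T)]
    · simp

/-- The comparison map from Koszul chains with coefficients in `Z ⊆ Λʲ ⊗ M` to Koszul chains of `M`:
move `j` generators from the inner to the outer factor and read off the inner degree-zero part. Up to
a scalar this is the exterior product `Λⁱ ⊗ (Λʲ ⊗ M) → Λ^{i+j} ⊗ M`. -/
def cmp (j : ℕ) (κ : Z →ₗ[R] EM n M) : EM n Z →ₗ[K] EM n M where
  toFun y := pw n (LinearMap.proj (R := R) (φ := fun _ : Finset (Fin n) => M) ∅).toAddMonoidHom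
    ((tau n M ^ j) (pw n κ.toAddMonoidHom y))
  map_add' y y' := by simp only [map_add]
  map_smul' c y := by
    have h : pw n κ.toAddMonoidHom (c • y) = c • pw n κ.toAddMonoidHom y := by
      ext1 T
      exact (κ.restrictScalars K).map_smul c (y T)
    rw [h, tau_iter_smul]
    rfl

theorem cmp_apply (j : ℕ) (κ : Z →ₗ[R] EM n M) (y : EM n Z) (S : Finset (Fin n)) :
    cmp (K := K) j κ y S = (tau n M ^ j) (pw n κ.toAddMonoidHom y) S ∅ := rfl

/-- `cmp` commutes with the Koszul differentials up to sign, because `κ` takes values in cycles. -/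
theorem kE_cmp {x : Fin n → R} {j : ℕ} {κ : Z →ₗ[R] EM n M} (hκ : ∀ z, kE M x (κ z) = 0)
    (y : EM n Z) : kE M x (cmp (K := K) j κ y) = (-1 : ℤ) ^ j • cmp (K := K) j κ (kE Z x y) := by
  have hI : kI M x (pw n κ.toAddMonoidHom y) = 0 := by
    ext1 S
    exact hκ (y S)
  have h := (kE_tau_iter j hI).2
  rw [kE_pw] at h
  change kE M x (pw n (LinearMap.proj (R := R) (φ := fun _ : Finset (Fin n) => M) ∅).toAddMonoidHom
    ((tau n M ^ j) (pw n κ.toAddMonoidHom y))) = _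
  rw [kE_pw, h, map_zsmul]
  rfl

theorem cmp_mem {g : ℤ → Submodule K M} {gZ : ℤ → Submodule K Z} {j : ℕ} {κ : Z →ₗ[R] EM n M}
    (hκc : ∀ z T, T.card ≠ j → κ z T = 0)
    (hκg : ∀ d, ∀ z ∈ gZ d, ∀ T, κ z T ∈ g (d - j)) {k : ℕ} {v : ℤ} {y : EM n Z}
    (hy : y ∈ CE n gZ k v) : cmp (K := K) j κ y ∈ CE n g (k + j) v := by
  have hb : Bideg (g (v - k - j)).toAddSubgroup k (0 + j) (pw n κ.toAddMonoidHom y) := by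
    refine ⟨fun S T h => ?_, fun S T h => ?_, fun S T => hκg _ _ (hy.2 S) T⟩
    · rw [pw_apply, hy.1 S h, map_zero]; rfl
    · exact hκc _ _ (by simpa using h)
  have hb' := hb.tau_iter j
  refine ⟨fun S h => hb'.outer S ∅ h, fun S => ?_⟩
  have := hb'.mem S ∅
  rw [show v - ((k + j : ℕ) : ℤ) = v - k - j by push_cast; ring]
  exact this

/-- Every cycle of `M` is hit by a cycle with coefficients in `Z`: polarise it with `tauS ^ j`, which
produces inner cycles, and divide by the integer from `tauS_iter`. -/
theorem cmp_surj [CharZero K] {x : Fin n → R} {g : ℤ → Submodule K M} {gZ : ℤ → Submodule K Z}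
    {j : ℕ} {κ : Z →ₗ[R] EM n M} (hκi : Function.Injective κ)
    (hlift : ∀ d (f : EM n M), (∀ T, T.card ≠ j → f T = 0) → (∀ T, f T ∈ g (d - j)) →
      kE M x f = 0 → ∃ z ∈ gZ d, κ z = f) {i : ℕ} {v : ℤ} {z : EM n M}
    (hz : z ∈ ZE x g (i + j) v) :
    ∃ y ∈ ZE x gZ i v, cmp (K := K) j κ y = z := by
  set f : EM n (EM n M) := pw n
    (LinearMap.single R (fun _ : Finset (Fin n) => M) ∅).toAddMonoidHom z with hf
  have hfS : ∀ S, f S = Pi.single ∅ (z S) := fun S => rfl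
  have hfb : Bideg (g (v - (i + j : ℕ))).toAddSubgroup (i + j) 0 f := by
    refine ⟨fun S T h => ?_, fun S T h => ?_, fun S T => ?_⟩ <;> rw [hfS]
    · rw [hz.1.1 S h, Pi.single_zero]; rfl
    · exact Pi.single_eq_of_ne (by rintro rfl; simp at h) _
    · by_cases hT : T = ∅
      · subst hT; rw [Pi.single_eq_same]; exact hz.1.2 S
      · rw [Pi.single_eq_of_ne hT]; exact zero_mem _
  have hI : kI M x f = 0 := by
    ext1 S
    exact kE_CE_zero (single_mem_CE g (hz.1.2 S))
  have hO : kE (EM n M) x f = 0 := by rw [hf, kE_pw, hz.2, map_zero]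
  obtain ⟨hb, hI', hO', C, hC, hCf⟩ := tauS_iter j hfb hI hO
  obtain ⟨y, hy, hyf⟩ := exists_lift_CE (g := gZ) (g' := fun _ : ℤ => (⊤ : Submodule K (EM n M)))
    κ.toAddMonoidHom (i := i) (v := v) (f := (tauS n M ^ j) f)
    ⟨fun S h => funext fun T => hb.outer S T h, fun _ => trivial⟩ (fun S => by
      refine hlift _ _ (hb.inner S) (fun T => ?_) (congrFun hI' S)
      have := hb.mem S T
      rw [show v - ((i + j : ℕ) : ℤ) = v - i - j by push_cast; ring] at this
      exact this)
  have hy0 : kE Z x y = 0 := by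
    have h : pw n κ.toAddMonoidHom (kE Z x y) = 0 := by rw [← kE_pw, hyf, hO']
    ext1 S
    exact hκi ((congrFun h S).trans (map_zero κ).symm)
  have hyZ : y ∈ ZE x gZ i v := ⟨hy, hy0⟩
  refine ⟨(C : K)⁻¹ • y, Submodule.smul_mem _ _ hyZ, ?_⟩
  rw [map_smul]
  have : cmp (K := K) j κ y = (C : K) • z := by
    ext1 S
    rw [cmp_apply, hyf, hCf, Pi.smul_apply, Pi.smul_apply, hfS, Pi.smul_apply,
      Pi.single_eq_same, Nat.cast_smul_eq_nsmul]
  rw [this, smul_smul, inv_mul_cancel₀ (Nat.cast_ne_zero.2 hC), one_smul]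

/-- The comparison map induces a surjection `H_i(x; Z)_v → H_{i+j}(x; M)_v`. -/
theorem exists_surj [CharZero K] {x : Fin n → R} {g : ℤ → Submodule K M} {gZ : ℤ → Submodule K Z}
    {j : ℕ} {κ : Z →ₗ[R] EM n M} (hκi : Function.Injective κ) (hκ : ∀ z, kE M x (κ z) = 0)
    (hκc : ∀ z T, T.card ≠ j → κ z T = 0)
    (hκg : ∀ d, ∀ z ∈ gZ d, ∀ T, κ z T ∈ g (d - j))
    (hlift : ∀ d (f : EM n M), (∀ T, T.card ≠ j → f T = 0) → (∀ T, f T ∈ g (d - j)) →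
      kE M x f = 0 → ∃ z ∈ gZ d, κ z = f) (i : ℕ) (v : ℤ) :
    ∃ φ : HE x gZ i v →ₗ[K] HE x g (i + j) v, Function.Surjective φ := by
  have hZ : ∀ y ∈ ZE x gZ i v, cmp (K := K) j κ y ∈ ZE x g (i + j) v := by
    intro y hy
    refine ⟨cmp_mem hκc hκg hy.1, ?_⟩
    rw [kE_cmp hκ, hy.2, map_zero, smul_zero]
  have hB : (BE x gZ i v).comap (ZE x gZ i v).subtype ≤
      ((BE x g (i + j) v).comap (ZE x g (i + j) v).subtype).comap
        ((cmp (K := K) j κ).restrict hZ) := by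
    rintro ⟨y, hy⟩ ⟨w, hw, hwy⟩
    change kE Z x w = y at hwy
    change cmp (K := K) j κ y ∈ BE x g (i + j) v
    refine ⟨(-1 : ℤ) ^ j • cmp (K := K) j κ w, zsmul_mem ?_ _, ?_⟩
    · rw [add_right_comm]; exact cmp_mem hκc hκg hw
    · rw [map_zsmul, kE_cmp hκ, hwy, smul_smul, ← mul_pow]
      simp
  refine ⟨Submodule.mapQ _ _ _ hB, ?_⟩
  intro q
  obtain ⟨⟨z, hz⟩, rfl⟩ := Submodule.mkQ_surjective _ q
  obtain ⟨y, hy, hyz⟩ := cmp_surj hκi hlift hz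
  refine ⟨Submodule.Quotient.mk ⟨y, hy⟩, ?_⟩
  rw [Submodule.mapQ_apply]
  refine congrArg _ (Subtype.ext hyz)

end Compare

/-! ### The Koszul complex inside the total exterior algebra -/

section Ext
variable {n : ℕ} {R M : Type*} [CommRing R] [AddCommGroup M] [Module R M]

/-- Extension by zero of a Koszul chain of degree `j` to all subsets. -/
def extZ (R : Type*) (M : Type*) [CommRing R] [AddCommGroup M] [Module R M] (n j : ℕ) :
    KCplx M n j →ₗ[R] EM n M where
  toFun f T := if h : T.card = j then f ⟨T, h⟩ else 0
  map_add' f f' := by ext T; by_cases h : T.card = j <;> simp [h]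
  map_smul' c f := by ext T; by_cases h : T.card = j <;> simp [h]

theorem extZ_apply {j : ℕ} (f : KCplx M n j) (T : Finset (Fin n)) :
    extZ R M n j f T = if h : T.card = j then f ⟨T, h⟩ else 0 := rfl

theorem extZ_single {j : ℕ} (S : {s : Finset (Fin n) // s.card = j}) (m : M)
    (T : Finset (Fin n)) : extZ R M n j (Finsupp.single S m) T = if S.1 = T then m else 0 := by
  classical
  rw [extZ_apply]
  by_cases h : S.1 = T
  · obtain ⟨S, hS⟩ := S
    dsimp only at h
    subst h
    simp [hS]
  · rw [if_neg h]
    split_ifs with h'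
    · rw [Finsupp.single_eq_of_ne]
      rintro rfl
      exact h rfl
    · rfl

theorem extZ_injective (j : ℕ) : Function.Injective (extZ R M n j) := by
  intro f f' h
  ext ⟨S, hS⟩
  have := congrFun h S
  simpa [extZ_apply, hS] using this

/-- Under extension by zero, the differential `kdiff` becomes `kE`. -/
theorem extZ_kdiff (x : Fin n → R) (i : ℕ) (f : KCplx M n (i + 1)) :
    extZ R M n i (kdiff x i f) = kE M x (extZ R M n (i + 1) f) := by
  induction f using Finsupp.induction_linear with
  | zero => simp
  | add f f' hf hf' => simp only [map_add, hf, hf']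
  | single S m =>
    ext T
    rw [kE_apply, kdiff, Finsupp.lsum_single, LinearMap.sum_apply, map_sum, Finset.sum_apply]
    have h1 : ∀ a ∈ S.1.attach, extZ R M n i ((((-1 : ℤ) ^ ((S.1.filter (fun b => b < a.1)).card)) •
        ((Finsupp.lsingle (⟨S.1.erase a.1, by
              simp [Finset.card_erase_of_mem a.2, S.2]⟩ :
            {s : Finset (Fin n) // s.card = i})).comp
          (x a.1 • (LinearMap.id : M →ₗ[R] M)))) m) T
          = (fun a : Fin n => sg a S.1 • if S.1.erase a = T then x a • m else 0) a.1 := by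
      intro a _
      rw [LinearMap.smul_apply, map_zsmul, Pi.smul_apply, LinearMap.comp_apply,
        Finsupp.lsingle_apply, extZ_single]
      rfl
    rw [Finset.sum_congr rfl h1, Finset.sum_attach S.1
      (fun a : Fin n => sg a S.1 • if S.1.erase a = T then x a • m else 0),
      ← Finset.sum_filter_add_sum_filter_not Finset.univ (fun a => a ∈ S.1)]
    rw [Finset.filter_mem_eq_inter, Finset.univ_inter]
    rw [Finset.sum_eq_zero (s := Finset.univ.filter fun a => a ∉ S.1), add_zero]
    · refine Finset.sum_congr rfl fun a ha => ?_
      rw [cop_apply]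
      by_cases hT : S.1.erase a = T
      · subst hT
        rw [if_pos rfl, if_neg (by simp), Finset.insert_erase ha, extZ_single, if_pos rfl,
          sg_erase ha, if_neg (lt_irrefl a), smul_comm]
      · rw [if_neg hT, smul_zero]
        split_ifs with haT
        · rw [smul_zero]
        · rw [extZ_single, if_neg, smul_zero, smul_zero]
          intro h
          apply hT
          rw [h, Finset.erase_insert haT]
    · intro a ha
      rw [cop_apply]
      split_ifs with haT
      · rw [smul_zero]
      · rw [extZ_single, if_neg, smul_zero, smul_zero]
        intro h
        apply (Finset.mem_filter.1 ha).2
        rw [h]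
        exact Finset.mem_insert_self _ _

theorem kE_eq_zero_of_card {x : Fin n → R} {f : EM n M} (hf : ∀ T, T.card ≠ 0 → f T = 0) :
    kE M x f = 0 := by
  ext T
  rw [kE_apply]
  refine Finset.sum_eq_zero fun a _ => ?_
  rw [cop_apply]
  split_ifs with h
  · simp
  · rw [hf]
    · simp
    · rw [Finset.card_insert_of_notMem h]; omega

theorem mem_kcycles_iff (x : Fin n → R) (j : ℕ) (f : KCplx M n j) :
    f ∈ kcycles (M := M) x j ↔ kE M x (extZ R M n j f) = 0 := by
  cases j with
  | zero =>
    refine ⟨fun _ => kE_eq_zero_of_card fun T hT => ?_, fun _ => trivial⟩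
    rw [extZ_apply, dif_neg hT]
  | succ i =>
    rw [← extZ_kdiff, ← map_zero (extZ R M n i), (extZ_injective i).eq_iff]
    rfl

end Ext

end KoszulAux

/-- Let `S = K[x_1,…,x_n]` with `char K = 0` (or large), `M` a finitely generated
graded `S`-module and `Z_j(M)` the cycles of the Koszul complex `K(m_S; M)` on the
variables. Then `β_{i,v}^S(Z_j(M)) ≥ β_{i+j,v}^S(M)` for all `i, j, v`. -/
theorem stmt9 {K : Type u} [Field K] [CharZero K] {n : ℕ}
    (A : StdGrading K (MvPolynomial (Fin n) K))
    (hA : ∀ i : ℕ, A.gr (i : ℤ) = MvPolynomial.homogeneousSubmodule (Fin n) K i)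
    (M : Type u) [AddCommGroup M] [Module K M]
    [Module (MvPolynomial (Fin n) K) M]
    [IsScalarTower K (MvPolynomial (Fin n) K) M]
    [Module.Finite (MvPolynomial (Fin n) K) M]
    (g : ℤ → Submodule K M) (hg : IsGradedModule A g)
    (j : ℕ) (βZ βM : ℕ → ℤ → ℕ)
    (hβZ : HasBettiTable A
      (fun dg => (kcGr g n j dg).comap
        (((kcycles (M := M) (fun k => (MvPolynomial.X k : MvPolynomial (Fin n) K)) j).subtype).restrictScalars K)) βZ)
    (hβM : HasBettiTable A g βM) :
    ∀ (i : ℕ) (v : ℤ), βM (i + j) v ≤ βZ i v := by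
  intro i v
  obtain ⟨resZ⟩ := hβZ
  obtain ⟨resM⟩ := hβM
  have hind : iSupIndep g := hg.1.submodule_iSupIndep
  obtain ⟨eM⟩ := KoszulAux.hdim hA v (i + j) hind resM
  have hindZ : iSupIndep (fun dg : ℤ => (kcGr g n j dg).comap
      (((kcycles (M := M) (fun k => (MvPolynomial.X k : MvPolynomial (Fin n) K)) j).subtype).restrictScalars K)) :=
    KoszulAux.iSupIndep_of_eval (Q := {s : Finset (Fin n) // s.card = j}) (fun _ => M)
      (fun S => (Finsupp.lapply S : KCplx M n j →ₗ[K] M).comp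
        ((kcycles (M := M) (fun k => (MvPolynomial.X k : MvPolynomial (Fin n) K)) j).subtype.restrictScalars K))
      (fun y hy => Subtype.ext (Finsupp.ext hy)) (fun _ d => g (d - j))
      (fun _ => hind.comp (sub_left_injective (b := (j : ℤ)))) (fun S d y hy => hy S)
  obtain ⟨eZ⟩ := KoszulAux.hdim hA v i hindZ resZ
  obtain ⟨φ, hφ⟩ := KoszulAux.exists_surj (K := K) (g := g)
    (gZ := fun dg => (kcGr g n j dg).comap
        (((kcycles (M := M) (fun k => (MvPolynomial.X k : MvPolynomial (Fin n) K)) j).subtype).restrictScalars K))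
    (j := j) (x := (MvPolynomial.X : Fin n → MvPolynomial (Fin n) K))
    (κ := (KoszulAux.extZ (MvPolynomial (Fin n) K) M n j).comp
      (kcycles (M := M) (fun k => (MvPolynomial.X k : MvPolynomial (Fin n) K)) j).subtype)
    ((KoszulAux.extZ_injective (R := MvPolynomial (Fin n) K) j).comp Subtype.val_injective)
    (fun z => (KoszulAux.mem_kcycles_iff _ j z.1).1 z.2)
    (fun z T hT => dif_neg hT)
    (fun d z hz T => by
      change KoszulAux.extZ (MvPolynomial (Fin n) K) M n j z.1 T ∈ _
      rw [KoszulAux.extZ_apply]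
      split_ifs with h
      · exact hz ⟨T, h⟩
      · exact zero_mem _)
    (fun d f hf hfg hf0 => by
      have hext : KoszulAux.extZ (MvPolynomial (Fin n) K) M n j
          (Finsupp.equivFunOnFinite.symm fun S => f S.1) = f := by
        ext T
        rw [KoszulAux.extZ_apply]
        split_ifs with h
        · rfl
        · exact (hf T h).symm
      exact ⟨⟨Finsupp.equivFunOnFinite.symm fun S => f S.1,
        (KoszulAux.mem_kcycles_iff _ j _).2 (by rw [hext]; exact hf0)⟩,
        fun S => hfg S.1, hext⟩) i v
  have h := LinearMap.finrank_le_finrank_of_surjective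
    (f := eM.toLinearMap.comp (φ.comp eZ.symm.toLinearMap))
    (eM.surjective.comp (hφ.comp eZ.symm.surjective))
  simpa using h
end

section
/- Let R be a standard graded Koszul K-algebra and c a positive integer. Then: (1) the Veronese subalgebra R^(c) = ⊕_{j} R_{jc} is Koszul; (2) for every u = 0,…,c−1 the Veronese submodule V_u = ⊕_{j} R_{jc+u}, regarded as a graded R^(c)-module, satisfies reg_{R^(c)}(V_u) = 0, i.e. V_u has a linear resolution over R^(c). -/
/-!
The proof transfers bounds on syzygies from `R` to `B = R^(c)` along Veronese strands.

*Bounds.* `Lin n a M` says that `M` has the beginning of a graded projective resolution whose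
`i`-th term is generated in degrees at most `a + i`, for `i < n`.  It is closed under extensions
(`Lin.ext`, the horseshoe lemma) and quotients by a submodule that satisfies the corresponding
bound (`Lin.quot`, the mapping cone), and it does not depend on the covers chosen (`Lin.ker`,
Schanuel's lemma).

*The linear resolution over `R`.* The residue field `K` has a minimal graded free resolution over
`R` (`hasBettiTable_tower`), so Koszulness applies to it: the cover of the `k`-th syzygy `Z_k` of
`K` is free with all generators in degree `k`, and `Z_0 = K` is covered by `R` itself.

*Strands.* For a graded `R`-module `M` and `w : ℤ` the strand `⊕_j M_{cj+w}` is a graded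
`B`-module, and taking strands is exact.  The strand of the free cover of `Z_k` is a direct power
of the strand `V_{w-k}` of `R`.  Hence bounds for the strands `V_w` give bounds for the strands of
all `Z_k` (`lin_st_syz`).  Conversely the strands `V_w` satisfy the bounds (`lin_st_self`): if
`c ∣ w` then `V_w` is a shift of `B`, hence free; otherwise the strand of `K` vanishes, so `V_w` is
the strand of `Z_1`, which is a quotient of a power of `V_{w-1}` by the strand of `Z_2`, and
induction applies.

*Conclusion.* `K` is the zeroth strand of `K` and `V_u` is the `u`-th strand of `R`, so both
satisfy the bounds over `B`.  The bounds control every minimal resolution from above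
(`betti_eq_zero_of_lin`), and minimality controls it from below (`betti_eq_zero_of_lt`); together
they give linearity (`betti_linear`).
-/

open DirectSum

universe u v w

variable {K : Type u} [Field K] {R : Type v} [CommRing R] [Algebra K R]

variable {n : ℕ}

/-- `(B, Bgr, ι)` realizes the `c`-th Veronese subalgebra `R^{(c)}` of the standard
graded algebra `(R, A)`: `ι : B → R` is an injective `K`-algebra map identifying the
degree-`j` piece of `B` with `R_{cj}`. -/
def IsVeronese {K : Type u} [Field K] {R : Type v} [CommRing R] [Algebra K R]
    (A : StdGrading K R) (c : ℕ) {B : Type v} [CommRing B] [Algebra K B]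
    (Bgr : StdGrading K B) (ι : B →ₐ[K] R) : Prop :=
  Function.Injective ι ∧ ∀ j : ℤ, (Bgr.gr j).map (ι.toLinearMap : B →ₗ[K] R)
    = A.gr ((c : ℤ) * j)

namespace VeroneseKoszul

/-! ### Graded modules, degreewise -/

/-- A module over a standard graded algebra together with a compatible family of homogeneous
pieces.  The pieces need neither span the module nor be independent: every notion below only
looks at homogeneous elements, so that the Veronese strand of a graded module can be encoded
by keeping the underlying module and re-indexing the pieces. -/
structure GM (A : StdGrading K R) where
  carrier : Type v
  [grp : AddCommGroup carrier]
  [mod : Module R carrier]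
  gr : ℤ → AddSubgroup carrier
  smul_mem : ∀ (i j : ℤ) (r : R) (x : carrier), r ∈ A.gr i → x ∈ gr j → r • x ∈ gr (i + j)

attribute [instance] GM.grp GM.mod

instance (A : StdGrading K R) : CoeSort (GM A) (Type v) := ⟨GM.carrier⟩

variable {A : StdGrading K R}

/-- The linear map `f` preserves degrees. -/
def IsGr {M N : GM A} (f : M →ₗ[R] N) : Prop := ∀ d, ∀ x ∈ M.gr d, f x ∈ N.gr d

/-- The linear map `f` is surjective in every degree. -/
def DSurj {M N : GM A} (f : M →ₗ[R] N) : Prop := ∀ d, ∀ y ∈ N.gr d, ∃ x ∈ M.gr d, f x = y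

/-- The kernel of a linear map, with the induced homogeneous pieces. -/
def kerGM {M N : GM A} (f : M →ₗ[R] N) : GM A where
  carrier := LinearMap.ker f
  gr d := (M.gr d).comap (LinearMap.ker f).subtype.toAddMonoidHom
  smul_mem i j r x hr hx := M.smul_mem i j r x hr hx

/-- The direct sum of two graded modules. -/
def prodGM (M N : GM A) : GM A where
  carrier := M × N
  gr d := (M.gr d).prod (N.gr d)
  smul_mem i j r _ hr hx := ⟨M.smul_mem i j r _ hr hx.1, N.smul_mem i j r _ hr hx.2⟩

lemma mem_prodGM {M N : GM A} {d : ℤ} {x : prodGM M N} :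
    x ∈ (prodGM M N).gr d ↔ x.1 ∈ M.gr d ∧ x.2 ∈ N.gr d := Iff.rfl

/-- The element `(x, y)` of the direct sum. -/
def mkP {M N : GM A} (x : M) (y : N) : prodGM M N := (x, y)

/-- Inclusion of a kernel. -/
def kerι {M N : GM A} (f : M →ₗ[R] N) : kerGM f →ₗ[R] M := (LinearMap.ker f).subtype

lemma mem_kerGM {M N : GM A} {f : M →ₗ[R] N} {d : ℤ} {x : kerGM f} :
    x ∈ (kerGM f).gr d ↔ kerι f x ∈ M.gr d := Iff.rfl

lemma kerι_inj {M N : GM A} {f : M →ₗ[R] N} {x y : kerGM f} (h : kerι f x = kerι f y) : x = y :=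
  Subtype.ext h

lemma map_kerι {M N : GM A} (f : M →ₗ[R] N) (x : kerGM f) : f (kerι f x) = 0 := x.2

/-- A linear map killed by `f`, regarded as a map into the kernel of `f`. -/
def kerLift {L M N : GM A} (f : M →ₗ[R] N) (g : L →ₗ[R] M) (h : ∀ x, f (g x) = 0) :
    L →ₗ[R] kerGM f := LinearMap.codRestrict (LinearMap.ker f) g h

@[simp] lemma kerι_kerLift {L M N : GM A} (f : M →ₗ[R] N) (g : L →ₗ[R] M)
    (h : ∀ x, f (g x) = 0) (x : L) : kerι f (kerLift f g h x) = g x := rfl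

lemma exists_kerι {M N : GM A} {f : M →ₗ[R] N} {x : M} (h : f x = 0) :
    ∃ y : kerGM f, kerι f y = x := ⟨⟨x, h⟩, rfl⟩

lemma isGr_kerι {M N : GM A} (f : M →ₗ[R] N) : IsGr (kerι f) := fun _ _ h => h

/-- `F` is a graded projective module which is generated in degrees at most `a`. -/
structure Good (a : ℤ) (F : GM A) : Prop where
  lift : ∀ (P Q : GM A) (q : P →ₗ[R] Q) (f : F →ₗ[R] Q), DSurj q → IsGr f →
    ∃ l : F →ₗ[R] P, IsGr l ∧ ∀ x, q (l x) = f x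
  gen : ∀ U : Submodule R F, (∀ k ≤ a, ∀ x ∈ F.gr k, x ∈ U) → ∀ k, ∀ x ∈ F.gr k, x ∈ U

lemma Good.mono {a b : ℤ} (hab : a ≤ b) {F : GM A} (h : Good a F) : Good b F :=
  ⟨h.lift, fun U hU => h.gen U fun k hk => hU k (hk.trans hab)⟩

lemma Good.of_subsingleton {F : GM A} (h : ∀ x : F, x = 0) (a : ℤ) : Good a F where
  lift P Q q f _ _ := ⟨0, fun d _ _ => by simp, fun x => by simp [h x]⟩
  gen U _ k x _ := by rw [h x]; exact U.zero_mem

lemma Good.prod {a : ℤ} {F G : GM A} (hF : Good a F) (hG : Good a G) : Good a (prodGM F G) where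
  lift P Q q f hq hf := by
    obtain ⟨l, hl, hl'⟩ := hF.lift P Q q (f.comp (LinearMap.inl R F G)) hq
      (fun d x hx => hf d _ (mem_prodGM.2 ⟨hx, (G.gr d).zero_mem⟩))
    obtain ⟨m, hm, hm'⟩ := hG.lift P Q q (f.comp (LinearMap.inr R F G)) hq
      (fun d x hx => hf d _ (mem_prodGM.2 ⟨(F.gr d).zero_mem, hx⟩))
    refine ⟨LinearMap.coprod l m, fun d x hx => ?_, fun x => ?_⟩
    · exact (P.gr d).add_mem (hl d _ hx.1) (hm d _ hx.2)
    · have : f x = f ((LinearMap.inl R F G) x.1 + (LinearMap.inr R F G) x.2) := by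
        congr 1
        exact Prod.ext (by simp) (by simp)
      rw [this]
      change q (l x.1 + m x.2) = _
      rw [map_add, hl', hm']
      exact (map_add f _ _).symm
  gen U hU k x hx := by
    have h1 : LinearMap.inl R F G x.1 ∈ U :=
      hF.gen (U.comap (LinearMap.inl R F G))
        (fun k hk y hy => hU k hk _ (mem_prodGM.2 ⟨hy, (G.gr k).zero_mem⟩)) k _ hx.1
    have h2 : LinearMap.inr R F G x.2 ∈ U :=
      hG.gen (U.comap (LinearMap.inr R F G))
        (fun k hk y hy => hU k hk _ (mem_prodGM.2 ⟨(F.gr k).zero_mem, hy⟩)) k _ hx.2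
    have := U.add_mem h1 h2
    convert this using 1
    exact Prod.ext (add_zero _).symm (zero_add _).symm

/-! ### Modules whose first syzygies are generated in bounded degrees -/

/-- `Lin n a M` says that `Tor_i(M, K)` is concentrated in degrees at most `a + i` for all
`i < n`; it is expressed by the existence of the first `n` steps of a graded projective
resolution whose `i`-th term is generated in degrees at most `a + i`. -/
def Lin : ℕ → ℤ → GM A → Prop
  | 0, _, _ => True
  | n + 1, a, M => ∃ (F : GM A) (p : F →ₗ[R] M), Good a F ∧ IsGr p ∧ DSurj p ∧
      Lin n (a + 1) (kerGM p)

lemma Lin.mono {n : ℕ} : ∀ {a b : ℤ} (_ : a ≤ b) {M : GM A}, Lin n a M → Lin n b M := by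
  induction n with
  | zero => intros; trivial
  | succ n ih =>
    rintro a b hab M ⟨F, p, hF, hp, hs, hk⟩
    exact ⟨F, p, hF.mono hab, hp, hs, ih (by omega) hk⟩

/-- `Lin` is transported along a map that is bijective in every degree. -/
lemma Lin.of_iso {n : ℕ} : ∀ {a : ℤ} {M N : GM A} (f : M →ₗ[R] N), IsGr f → DSurj f →
    (∀ d, ∀ x ∈ M.gr d, f x = 0 → x = 0) → Lin n a M → Lin n a N := by
  induction n with
  | zero => intros; trivial
  | succ n ih =>
    rintro a M N f hf hs hi ⟨F, p, hF, hp, hps, hk⟩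
    refine ⟨F, f.comp p, hF, fun d x hx => hf d _ (hp d x hx), fun d y hy => ?_, ?_⟩
    · obtain ⟨z, hz, rfl⟩ := hs d y hy
      obtain ⟨x, hx, rfl⟩ := hps d z hz
      exact ⟨x, hx, rfl⟩
    · refine ih (kerLift (f.comp p) (kerι p) fun x => ?_) (fun d x hx => hx) ?_ ?_ hk
      · simp [map_kerι]
      · intro d y hy
        obtain ⟨x, hx⟩ := exists_kerι (hi d _ (hp d _ (mem_kerGM.1 hy)) (map_kerι (f.comp p) y))
        exact ⟨x, by rw [mem_kerGM, hx]; exact hy, kerι_inj (by rw [kerι_kerLift, hx])⟩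
      · intro d x _ h
        exact kerι_inj (congrArg (kerι (f.comp p)) h)

lemma Good.lin {n : ℕ} : ∀ {a : ℤ} {F : GM A}, Good a F → Lin n a F := by
  induction n with
  | zero => intros; trivial
  | succ n ih =>
    intro a F hF
    exact ⟨F, LinearMap.id, hF, fun _ _ h => h, fun d y hy => ⟨y, hy, rfl⟩,
      ih (Good.of_subsingleton (fun x => kerι_inj (map_kerι _ x)) _)⟩

/-- Horseshoe lemma: `Lin` is closed under extensions. -/
lemma Lin.ext {n : ℕ} : ∀ {a : ℤ} {P M : GM A} (q : P →ₗ[R] M), IsGr q → DSurj q →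
    Lin n a (kerGM q) → Lin n a M → Lin n a P := by
  induction n with
  | zero => intros; trivial
  | succ n ih =>
    rintro a P M q hq hqs ⟨F', p', hF', hp', hps', hk'⟩ ⟨F, p, hF, hp, hps, hk⟩
    obtain ⟨l, hl, hl'⟩ := hF.lift P M q p hqs hp
    let t : prodGM F' F →ₗ[R] P := LinearMap.coprod ((kerι q).comp p') l
    have ht : ∀ x, t x = kerι q (p' x.1) + l x.2 := fun x => rfl
    have hqt : ∀ x, q (t x) = p x.2 := fun x => by rw [ht, map_add, map_kerι, hl', zero_add]
    refine ⟨prodGM F' F, t, hF'.prod hF, fun d x hx => ?_, fun d y hy => ?_, ?_⟩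
    · exact (P.gr d).add_mem (hp' d _ hx.1) (hl d _ hx.2)
    · obtain ⟨x, hx, hxy⟩ := hps d _ (hq d y hy)
      obtain ⟨z, hz⟩ := exists_kerι (f := q) (x := y - l x) (by rw [map_sub, hl', hxy, sub_self])
      obtain ⟨w, hw, hwz⟩ := hps' d z (by
        rw [mem_kerGM, hz]; exact (P.gr d).sub_mem hy (hl d x hx))
      refine ⟨mkP w x, ⟨hw, hx⟩, ?_⟩
      change kerι q (p' w) + l x = y
      rw [hwz, hz, sub_add_cancel]
    · let r : kerGM t →ₗ[R] kerGM p :=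
        kerLift p ((LinearMap.snd R F' F).comp (kerι t)) fun x => by
          have := hqt (kerι t x)
          rw [map_kerι, map_zero] at this
          exact this.symm
      have hr : ∀ x, kerι p (r x) = (kerι t x).2 := fun x => rfl
      refine ih r (fun d x hx => hx.2) (fun d y hy => ?_) ?_ hk
      · obtain ⟨z, hz⟩ := exists_kerι (f := q) (x := - l (kerι p y)) (by
          rw [map_neg, hl', map_kerι, neg_zero])
        obtain ⟨w, hw, hwz⟩ := hps' d z (by
          rw [mem_kerGM, hz]; exact (P.gr d).neg_mem (hl d _ hy))
        obtain ⟨x, hx⟩ := exists_kerι (f := t) (x := mkP w (kerι p y)) (by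
          change kerι q (p' w) + l (kerι p y) = 0
          rw [hwz, hz, neg_add_cancel])
        refine ⟨x, ?_, kerι_inj ?_⟩
        · rw [mem_kerGM, hx]; exact ⟨hw, hy⟩
        · rw [hr, hx]; rfl
      · let s₀ : kerGM p' →ₗ[R] kerGM t :=
          kerLift t ((LinearMap.inl R F' F).comp (kerι p')) fun x => by
            rw [ht]
            change kerι q (p' (kerι p' x)) + l 0 = 0
            rw [map_kerι, map_zero, map_zero, add_zero]
        have hs₀ : ∀ x, kerι t (s₀ x) = ((kerι p' x, 0) : F' × F) := fun x => rfl
        refine Lin.of_iso (kerLift r s₀ fun x => kerι_inj rfl) (fun d x hx => ?_)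
          (fun d y hy => ?_) (fun d x _ h => ?_) hk'
        · exact ⟨hx, (F.gr d).zero_mem⟩
        · have h2 : (kerι t (kerι r y)).2 = 0 := by
            rw [← hr, map_kerι, map_zero]
          have h0 := map_kerι t (kerι r y)
          rw [ht, h2, map_zero, add_zero] at h0
          obtain ⟨x, hx⟩ := exists_kerι (f := p') (x := (kerι t (kerι r y)).1)
            (kerι_inj (by rw [h0, map_zero]))
          refine ⟨x, ?_, kerι_inj (kerι_inj ?_)⟩
          · rw [mem_kerGM, hx]; exact hy.1
          · rw [kerι_kerLift, hs₀, hx]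
            exact Prod.ext rfl h2.symm
        · refine kerι_inj ?_
          have := congrArg (fun z => (kerι t (kerι r z)).1) h
          exact this

/-- Mapping cone: a bound for a quotient from bounds for the module and the kernel. -/
lemma Lin.quot {n : ℕ} {a : ℤ} {P M : GM A} (q : P →ₗ[R] M) (hq : IsGr q) (hqs : DSurj q)
    (hk : Lin n (a + 1) (kerGM q)) (hP : Lin (n + 1) a P) : Lin (n + 1) a M := by
  obtain ⟨F, p, hF, hp, hps, hkp⟩ := hP
  refine ⟨F, q.comp p, hF, fun d x hx => hq d _ (hp d x hx), fun d y hy => ?_, ?_⟩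
  · obtain ⟨z, hz, rfl⟩ := hqs d y hy
    obtain ⟨x, hx, rfl⟩ := hps d z hz
    exact ⟨x, hx, rfl⟩
  · let r : kerGM (q.comp p) →ₗ[R] kerGM q :=
      kerLift q (p.comp (kerι (q.comp p))) fun x => map_kerι (q.comp p) x
    have hr : ∀ x, kerι q (r x) = p (kerι (q.comp p) x) := fun x => rfl
    refine Lin.ext r (fun d x hx => hp d _ hx) (fun d y hy => ?_) ?_ hk
    · obtain ⟨x, hx, hxy⟩ := hps d _ (mem_kerGM.1 hy)
      obtain ⟨z, hz⟩ := exists_kerι (f := q.comp p) (x := x) (by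
        rw [LinearMap.comp_apply, hxy, map_kerι])
      exact ⟨z, by rw [mem_kerGM, hz]; exact hx, kerι_inj (by rw [hr, hz, hxy])⟩
    · let s₀ : kerGM p →ₗ[R] kerGM (q.comp p) := kerLift (q.comp p) (kerι p) fun x => by
        rw [LinearMap.comp_apply, map_kerι, map_zero]
      refine Lin.of_iso (kerLift r s₀ fun x => kerι_inj (map_kerι p x)) (fun d x hx => hx)
        (fun d y hy => ?_) (fun d x _ h => ?_) hkp
      · obtain ⟨x, hx⟩ := exists_kerι (f := p) (x := kerι (q.comp p) (kerι r y)) (by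
          rw [← hr, map_kerι, map_zero])
        exact ⟨x, by rw [mem_kerGM, hx]; exact hy, kerι_inj (kerι_inj hx)⟩
      · exact kerι_inj (congrArg (fun z => kerι _ (kerι r z)) h)

/-- Schanuel's lemma: the syzygies may be computed from any graded projective cover. -/
lemma Lin.ker {n : ℕ} {a : ℤ} {G M : GM A} (hM : Lin (n + 1) a M) (e : G →ₗ[R] M) (he : IsGr e)
    (hes : DSurj e) (hG : Good (a + 1) G) : Lin n (a + 1) (kerGM e) := by
  obtain ⟨F, p, hF, hp, hps, hk⟩ := hM
  obtain ⟨s, hs, hs'⟩ := hF.lift G M e p hes hp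
  let t : prodGM F G →ₗ[R] M := LinearMap.coprod p (-e)
  have ht : ∀ x, t x = p x.1 - e x.2 := fun x => (sub_eq_add_neg _ _).symm
  have hE : Lin n (a + 1) (kerGM t) := by
    let r : kerGM t →ₗ[R] G := (LinearMap.snd R F G).comp (kerι t)
    refine Lin.ext r (fun d x hx => hx.2) (fun d y hy => ?_) ?_ hG.lin
    · obtain ⟨x, hx, hxy⟩ := hps d _ (he d y hy)
      obtain ⟨z, hz⟩ := exists_kerι (f := t) (x := mkP x y) (by
        rw [ht]
        exact sub_eq_zero.2 hxy)
      exact ⟨z, by rw [mem_kerGM, hz]; exact ⟨hx, hy⟩, congrArg Prod.snd hz⟩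
    · let s₀ : kerGM p →ₗ[R] kerGM t :=
        kerLift t ((LinearMap.inl R F G).comp (kerι p)) fun x => by
          rw [ht]
          change p (kerι p x) - e 0 = 0
          rw [map_kerι, map_zero, sub_zero]
      refine Lin.of_iso (kerLift r s₀ fun x => rfl) (fun d x hx => ⟨hx, (G.gr d).zero_mem⟩)
        (fun d y hy => ?_) (fun d x _ h => ?_) hk
      · have h2 : (kerι t (kerι r y)).2 = 0 := map_kerι r y
        have h0 := map_kerι t (kerι r y)
        rw [ht, h2, map_zero, sub_zero] at h0
        obtain ⟨x, hx⟩ := exists_kerι h0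
        refine ⟨x, by rw [mem_kerGM, hx]; exact hy.1, kerι_inj (kerι_inj ?_)⟩
        exact Prod.ext hx h2.symm
      · exact kerι_inj (congrArg (fun z => (kerι t (kerι r z)).1) h)
  cases n with
  | zero => trivial
  | succ n =>
    let r : kerGM t →ₗ[R] kerGM e :=
      kerLift e ((LinearMap.snd R F G - s.comp (LinearMap.fst R F G)).comp (kerι t)) fun x => by
        have h0 := map_kerι t x
        rw [ht] at h0
        change e ((kerι t x).2 - s (kerι t x).1) = 0
        rw [map_sub, hs', ← neg_sub, h0, neg_zero]
    have hr : ∀ x, kerι e (r x) = (kerι t x).2 - s (kerι t x).1 := fun x => rfl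
    refine Lin.quot r (fun d x hx => ?_) (fun d y hy => ?_) ?_ hE
    · exact (G.gr d).sub_mem hx.2 (hs d _ hx.1)
    · obtain ⟨z, hz⟩ := exists_kerι (f := t) (x := mkP 0 (kerι e y)) (by
        rw [ht]
        change p 0 - e (kerι e y) = 0
        rw [map_zero, map_kerι, sub_zero])
      refine ⟨z, by rw [mem_kerGM, hz]; exact ⟨(F.gr d).zero_mem, hy⟩, kerι_inj ?_⟩
      rw [hr, hz]
      change kerι e y - s 0 = kerι e y
      rw [map_zero, sub_zero]
    · let s₀ : F →ₗ[R] kerGM t := kerLift t (LinearMap.prod LinearMap.id s) fun x => by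
        rw [ht]
        change p x - e (s x) = 0
        rw [hs', sub_self]
      have hs₀ : ∀ x, kerι t (s₀ x) = ((x, s x) : F × G) := fun x => rfl
      refine Lin.of_iso (kerLift r s₀ fun x => kerι_inj ?_) (fun d x hx => ⟨hx, hs d _ hx⟩)
        (fun d y hy => ?_) (fun d x _ h => ?_) (hF.mono (by omega : a ≤ a + 1 + 1)).lin
      · rw [hr, hs₀, sub_self, map_zero]
      · have h2 : (kerι t (kerι r y)).2 - s (kerι t (kerι r y)).1 = 0 := by
          rw [← hr, map_kerι, map_zero]
        refine ⟨(kerι t (kerι r y)).1, hy.1, kerι_inj (kerι_inj ?_)⟩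
        exact Prod.ext rfl (sub_eq_zero.1 h2).symm
      · exact congrArg (fun z => (kerι t (kerι r z)).1) h

/-! ### Homogeneous components -/

lemma mul_mem_gr (A : StdGrading K R) {i j : ℤ} {x y : R} (hx : x ∈ A.gr i) (hy : y ∈ A.gr j) :
    x * y ∈ A.gr (i + j) := by
  rcases lt_or_ge i 0 with hi | hi
  · rw [A.negBot i hi, Submodule.mem_bot] at hx
    rw [hx, zero_mul]; exact zero_mem _
  rcases lt_or_ge j 0 with hj | hj
  · rw [A.negBot j hj, Submodule.mem_bot] at hy
    rw [hy, mul_zero]; exact zero_mem _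
  rw [← A.mulEq i j hi hj]
  exact Submodule.mul_mem_mul hx hy

lemma one_mem_gr (A : StdGrading K R) : (1 : R) ∈ A.gr 0 := by
  rw [A.zeroEq]; exact Submodule.mem_span_singleton_self _

/-- The algebra as a graded module over itself. -/
def selfGM (A : StdGrading K R) : GM A where
  carrier := R
  gr d := (A.gr d).toAddSubgroup
  smul_mem _ _ _ _ hr hx := mul_mem_gr A hr hx

/-- There are projections onto the homogeneous pieces; in particular the pieces are
independent. -/
def HasProj (M : GM A) : Prop := ∃ π : ℤ → M →+ M,
  (∀ d, ∀ x ∈ M.gr d, π d x = x) ∧ ∀ d e, d ≠ e → ∀ x ∈ M.gr d, π e x = 0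

/-- The homogeneous pieces span the module. -/
def Spans (M : GM A) : Prop := ∀ x : M, x ∈ ⨆ d, M.gr d

/-- Passing to homogeneous components of a (not necessarily homogeneous) preimage. -/
lemma exists_comp {M N : GM A} (hM : Spans M) {π : N →+ N} {j : ℤ}
    (h1 : ∀ x ∈ N.gr j, π x = x) (h2 : ∀ d, d ≠ j → ∀ x ∈ N.gr d, π x = 0)
    (f : M →ₗ[R] N) (hf : IsGr f) (x : M) : ∃ x' ∈ M.gr j, f x' = π (f x) := by
  refine AddSubgroup.iSup_induction M.gr (C := fun x => ∃ x' ∈ M.gr j, f x' = π (f x))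
    (hM x) (fun d x hx => ?_) ⟨0, zero_mem _, by simp⟩ ?_
  · by_cases hd : d = j
    · subst hd
      exact ⟨x, hx, (h1 _ (hf _ _ hx)).symm⟩
    · exact ⟨0, zero_mem _, by rw [h2 d hd _ (hf _ _ hx), map_zero]⟩
  · rintro x y ⟨x', hx', hx⟩ ⟨y', hy', hy⟩
    exact ⟨x' + y', add_mem hx' hy', by rw [map_add, hx, hy, map_add, map_add]⟩

lemma lift_homog {M N : GM A} (hM : Spans M) (hN : HasProj N) (f : M →ₗ[R] N) (hf : IsGr f)
    {j : ℤ} {x : M} (hx : f x ∈ N.gr j) : ∃ x' ∈ M.gr j, f x' = f x := by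
  obtain ⟨π, h1, h2⟩ := hN
  obtain ⟨x', hx', h⟩ := exists_comp hM (h1 j) (fun d hd => h2 d j hd) f hf x
  exact ⟨x', hx', h.trans (h1 j _ hx)⟩

lemma hasProj_self (A : StdGrading K R) : HasProj (selfGM A) := by
  let e := LinearEquiv.ofBijective (DirectSum.coeLinearMap A.gr) A.internal
  have he : ∀ d (x : A.gr d), e.symm (x : R) = DirectSum.lof K ℤ (fun i => A.gr i) d x := by
    intro d x
    rw [LinearEquiv.symm_apply_eq]
    exact (DirectSum.coeLinearMap_lof A.gr d x).symm
  refine ⟨fun d => ((A.gr d).subtype.comp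
    ((DirectSum.component K ℤ (fun i => A.gr i) d).comp e.symm.toLinearMap)).toAddMonoidHom,
    fun d x hx => ?_, fun d d' hd x hx => ?_⟩
  · change ((DirectSum.component K ℤ (fun i => A.gr i) d (e.symm (x : R)) : A.gr d) : R) = x
    have := he d ⟨x, hx⟩
    change e.symm (x : R) = _ at this
    rw [this, DirectSum.component.lof_self]
  · change ((DirectSum.component K ℤ (fun i => A.gr i) d' (e.symm (x : R)) : A.gr d') : R) = 0
    have := he d ⟨x, hx⟩
    change e.symm (x : R) = _ at this
    rw [this, DirectSum.component.of, dif_neg hd]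
    rfl

lemma mem_iSup_gr (A : StdGrading K R) (x : R) : x ∈ ⨆ d, A.gr d := by
  rw [A.internal.submodule_iSup_eq_top]; trivial

lemma spans_self (A : StdGrading K R) : Spans (selfGM A) := by
  intro x
  have hx : (x : R) ∈ ⨆ d, A.gr d := mem_iSup_gr A x
  refine Submodule.iSup_induction A.gr (motive := fun y => (y : selfGM A) ∈ ⨆ d, (selfGM A).gr d)
    hx (fun d x hx => ?_) (zero_mem _) (fun x y hx hy => add_mem hx hy)
  exact AddSubgroup.mem_iSup_of_mem d (hx : x ∈ (selfGM A).gr d)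

lemma one_notMem_maxIdeal (A : StdGrading K R) [Nontrivial R] : (1 : R) ∉ A.maxIdeal := by
  have key : ∀ x ∈ A.maxIdeal, x ∈ ⨆ i : {i : ℤ // 0 < i}, A.gr i := by
    intro x hx
    refine Submodule.span_induction (p := fun x _ => x ∈ ⨆ i : {i : ℤ // 0 < i}, A.gr i)
      ?_ (zero_mem _) (fun _ _ _ _ h h' => add_mem h h') ?_ hx
    · rintro y ⟨i, hi, hy⟩
      exact Submodule.mem_iSup_of_mem ⟨i, hi⟩ hy
    · intro r y _ hy
      refine Submodule.iSup_induction _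
        (motive := fun y => r • y ∈ ⨆ i : {i : ℤ // 0 < i}, A.gr i) hy ?_ (by simp)
        (fun a b ha hb => by rw [smul_add]; exact add_mem ha hb)
      rintro ⟨i, hi⟩ y hy
      refine Submodule.iSup_induction _
        (motive := fun r => r • y ∈ ⨆ i : {i : ℤ // 0 < i}, A.gr i) (mem_iSup_gr A r) ?_ (by simp)
        (fun a b ha hb => by rw [add_smul]; exact add_mem ha hb)
      intro k r hr
      rcases lt_or_ge k 0 with hk | hk
      · rw [A.negBot k hk, Submodule.mem_bot] at hr
        rw [hr, zero_smul]; exact zero_mem _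
      · exact Submodule.mem_iSup_of_mem ⟨k + i, by omega⟩ (mul_mem_gr A hr hy)
  intro h1
  obtain ⟨π', hπ, hπ'⟩ := hasProj_self A
  let π : ℤ → R →+ R := π'
  have hπ : ∀ d, ∀ x ∈ A.gr d, π d x = x := hπ
  have hπ' : ∀ d e, d ≠ e → ∀ x ∈ A.gr d, π e x = 0 := hπ'
  have : ∀ x ∈ ⨆ i : {i : ℤ // 0 < i}, A.gr i, π 0 x = 0 := by
    intro x hx
    refine Submodule.iSup_induction _ (motive := fun x => π 0 x = 0) hx ?_ (map_zero (π 0)) ?_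
    · rintro ⟨i, hi⟩ x hx
      exact hπ' i 0 hi.ne' x hx
    · intro x y hx hy
      rw [map_add, hx, hy, add_zero]
  have h0 := this 1 (key 1 h1)
  have h1' : π 0 1 = (1 : R) := hπ 0 (1 : R) (one_mem_gr A)
  exact one_ne_zero (h1'.symm.trans h0)

/-! ### Graded free modules -/

/-- The graded free module `FreeMod R β i`. -/
noncomputable def freeGM (A : StdGrading K R) (β : ℕ → ℤ → ℕ) (i : ℕ) : GM A where
  carrier := FreeMod R β i
  gr d := (freeGr A β i d).toAddSubgroup
  smul_mem k d r f hr hf p := by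
    have := mul_mem_gr A hr (hf p)
    rw [← add_sub_assoc] at this
    exact this

/-- The coordinate with index `p` on a graded free module. -/
noncomputable def coord (A : StdGrading K R) (β : ℕ → ℤ → ℕ) (i : ℕ)
    (p : (j : ℤ) × Fin (β i j)) : freeGM A β i →ₗ[R] R :=
  (Finsupp.lapply p : FreeMod R β i →ₗ[R] R)

lemma coord_mem {β : ℕ → ℤ → ℕ} {i : ℕ} {d : ℤ} {x : freeGM A β i}
    (hx : x ∈ (freeGM A β i).gr d) (p : (j : ℤ) × Fin (β i j)) :
    coord A β i p x ∈ A.gr (d - p.1) := hx p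

/-- The basis element with index `p`. -/
noncomputable def basisElt (A : StdGrading K R) (β : ℕ → ℤ → ℕ) (i : ℕ)
    (p : (j : ℤ) × Fin (β i j)) : freeGM A β i := (Finsupp.single p (1 : R) : FreeMod R β i)

lemma single_mem_freeGr (A : StdGrading K R) (β : ℕ → ℤ → ℕ) (i : ℕ)
    (p : (j : ℤ) × Fin (β i j)) {d : ℤ} {r : R} (hr : r ∈ A.gr (d - p.1)) :
    (Finsupp.single p r : FreeMod R β i) ∈ freeGr A β i d := by
  intro q
  by_cases h : p = q
  · subst h; simpa using hr
  · rw [Finsupp.single_eq_of_ne (Ne.symm h)]; exact zero_mem _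

lemma basisElt_mem (A : StdGrading K R) (β : ℕ → ℤ → ℕ) (i : ℕ) (p : (j : ℤ) × Fin (β i j)) :
    basisElt A β i p ∈ (freeGM A β i).gr p.1 :=
  single_mem_freeGr A β i p (by rw [sub_self]; exact one_mem_gr A)

lemma linearCombination_mem {β : ℕ → ℤ → ℕ} {i : ℕ} {P : GM A}
    (y : (j : ℤ) × Fin (β i j) → P) (hy : ∀ p, y p ∈ P.gr p.1) (d : ℤ) (f : FreeMod R β i)
    (hf : f ∈ freeGr A β i d) : Finsupp.linearCombination R y f ∈ P.gr d := by
  rw [Finsupp.linearCombination_apply]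
  refine AddSubgroup.sum_mem _ fun p _ => ?_
  have := P.smul_mem _ _ _ _ (hf p) (hy p)
  rwa [sub_add_cancel] at this

lemma good_free {β : ℕ → ℤ → ℕ} {i : ℕ} {a : ℤ} (hβ : ∀ j, a < j → β i j = 0) :
    Good a (freeGM A β i) where
  lift P Q q f hq hf := by
    choose y hy hqy using fun p => hq p.1 _ (hf _ _ (basisElt_mem A β i p))
    refine ⟨(Finsupp.linearCombination R y : FreeMod R β i →ₗ[R] P),
      fun d x hx => linearCombination_mem y hy d x hx, fun x => ?_⟩
    have : q.comp (Finsupp.linearCombination R y : FreeMod R β i →ₗ[R] P) = f := by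
      refine Finsupp.lhom_ext' fun p => LinearMap.ext_ring ?_
      change q (Finsupp.linearCombination R y (Finsupp.single p 1)) = _
      rw [Finsupp.linearCombination_single, one_smul, hqy]
      rfl
    exact LinearMap.congr_fun this x
  gen U hU k x _ := by
    have : ∀ x : FreeMod R β i, x ∈ (U : Submodule R (FreeMod R β i)) := by
      intro x
      rw [← Finsupp.sum_single x]
      refine Submodule.sum_mem _ fun p _ => ?_
      have hp : p.1 ≤ a := by
        by_contra h
        have h0 := hβ p.1 (not_le.1 h)
        exact absurd p.2.2 (by omega)
      have := U.smul_mem (x p) (hU p.1 hp _ (basisElt_mem A β i p))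
      change x p • (Finsupp.single p (1 : R) : FreeMod R β i) ∈
        (U : Submodule R (FreeMod R β i)) at this
      rwa [Finsupp.smul_single, smul_eq_mul, mul_one] at this
    exact this x

lemma spans_free (A : StdGrading K R) (β : ℕ → ℤ → ℕ) (i : ℕ) : Spans (freeGM A β i) := by
  intro x
  have key : ∀ x : FreeMod R β i, (x : freeGM A β i) ∈ ⨆ d, (freeGM A β i).gr d := by
    intro x
    induction x using Finsupp.induction_linear with
    | zero => exact zero_mem _
    | add f g hf hg => exact add_mem hf hg
    | single p r =>
      refine Submodule.iSup_induction A.gr (motive := fun r =>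
        ((Finsupp.single p r : FreeMod R β i) : freeGM A β i) ∈ ⨆ d, (freeGM A β i).gr d)
        (mem_iSup_gr A r) (fun d r hr => ?_) ?_ ?_
      · refine AddSubgroup.mem_iSup_of_mem (d + p.1) ?_
        exact single_mem_freeGr A β i p (by rwa [add_sub_cancel_right])
      · rw [Finsupp.single_zero]; exact zero_mem _
      · intro r s hr hs
        rw [Finsupp.single_add]; exact add_mem hr hs
  exact key x

lemma hasProj_free (A : StdGrading K R) (β : ℕ → ℤ → ℕ) (i : ℕ) : HasProj (freeGM A β i) := by
  obtain ⟨π, h1, h2⟩ := hasProj_self A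
  let ρ : ℤ → R →+ R := π
  have h1 : ∀ d, ∀ x ∈ A.gr d, ρ d x = x := h1
  have h2 : ∀ d e, d ≠ e → ∀ x ∈ A.gr d, ρ e x = 0 := h2
  let Q : ℤ → FreeMod R β i →+ FreeMod R β i := fun d =>
    Finsupp.liftAddHom fun p => (Finsupp.singleAddHom p).comp (ρ (d - p.1))
  have hQ : ∀ d f, Q d f = f.sum fun p r => Finsupp.single p (ρ (d - p.1) r) := fun d f => rfl
  refine ⟨Q, fun d x hx => ?_, fun d e hde x hx => ?_⟩
  · refine (hQ d x).trans ?_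
    refine Eq.trans (Finsupp.sum_congr fun p _ => ?_) (Finsupp.sum_single (x : FreeMod R β i))
    rw [h1 _ _ (hx p)]
  · refine (hQ e x).trans (Finset.sum_eq_zero fun p _ => ?_)
    exact (congrArg (Finsupp.single p) (h2 (d - p.1) (e - p.1) (by omega) _ (hx p))).trans
      (Finsupp.single_zero p)

/-! ### Comparison with a minimal resolution -/

/-- The generators in a minimal cover of `M` have degrees at most `a` as soon as `M` is
generated in degrees at most `a`. -/
lemma betti_zero_of_lin [Nontrivial R] (β : ℕ → ℤ → ℕ) (M : GM A) (e : freeGM A β 0 →ₗ[R] M)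
    (he : IsGr e) (hes : DSurj e) (hmin : ∀ x, e x = 0 → ∀ p, coord A β 0 p x ∈ A.maxIdeal)
    {n : ℕ} {a : ℤ} (hM : Lin (n + 1) a M) (j : ℤ) (hj : a < j) : β 0 j = 0 := by
  by_contra hne
  let p : (j : ℤ) × Fin (β 0 j) := ⟨j, ⟨0, Nat.pos_of_ne_zero hne⟩⟩
  obtain ⟨F, q, hF, hq, hqs, -⟩ := hM
  -- the coordinate with index `p` of an element of degree `≤ a < j` vanishes
  let W : Submodule R (freeGM A β 0) := Submodule.comap (coord A β 0 p) A.maxIdeal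
  have hW : ∀ k ≤ a, ∀ x ∈ (freeGM A β 0).gr k, x ∈ W := by
    intro k hk x hx
    have h := coord_mem hx p
    rw [A.negBot (k - p.1) (by change k - j < 0; omega), Submodule.mem_bot] at h
    change coord A β 0 p x ∈ A.maxIdeal
    rw [h]; exact zero_mem _
  have hU : ∀ k, ∀ x ∈ F.gr k, x ∈ (W.map e).comap q := by
    refine hF.gen _ fun k hk x hx => ?_
    obtain ⟨z, hz, hzx⟩ := hes k _ (hq k x hx)
    exact ⟨z, hW k hk z hz, hzx⟩
  obtain ⟨x, hx, hxe⟩ := hqs j _ (he j _ (basisElt_mem A β 0 p))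
  obtain ⟨z, hz, hze⟩ := hU j x hx
  have h1 : basisElt A β 0 p - z ∈ W :=
    hmin (basisElt A β 0 p - z) (by rw [map_sub, hze, hxe, sub_self]) p
  have h2 : basisElt A β 0 p ∈ W := by
    have := add_mem h1 hz
    rwa [sub_add_cancel] at this
  have h3 : (Finsupp.single p (1 : R) : FreeMod R β 0) p ∈ A.maxIdeal := h2
  rw [Finsupp.single_eq_same] at h3
  exact one_notMem_maxIdeal A h3

/-- If the syzygies of `M` satisfy the bounds encoded in `Lin`, so do the generators of any
minimal graded free resolution of `M`. -/
lemma betti_eq_zero_of_lin [Nontrivial R] (i : ℕ) : ∀ (β : ℕ → ℤ → ℕ)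
    (d : ∀ i, freeGM A β (i + 1) →ₗ[R] freeGM A β i) (_ : ∀ i, IsGr (d i))
    (_ : ∀ i, Function.Exact (d (i + 1)) (d i))
    (_ : ∀ (i : ℕ) f p, coord A β i p (d i f) ∈ A.maxIdeal)
    (M : GM A) (e : freeGM A β 0 →ₗ[R] M) (_ : IsGr e) (_ : DSurj e)
    (_ : Function.Exact (d 0) e) (a : ℤ) (_ : Lin (i + 1) a M) (j : ℤ), a + i < j → β i j = 0 := by
  induction i with
  | zero =>
    intro β d _ _ hmin M e he hes hex a hM j hj
    refine betti_zero_of_lin β M e he hes (fun x hx p => ?_) hM j (by push_cast at hj; omega)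
    obtain ⟨w, rfl⟩ := (hex x).1 hx
    exact hmin 0 w p
  | succ i ih =>
    intro β d hd hdex hmin M e he hes hex a hM j hj
    have hcomp : ∀ x, e (d 0 x) = 0 := fun x => (hex _).2 ⟨x, rfl⟩
    refine ih (fun i => β (i + 1)) (fun i => d (i + 1)) (fun i => hd (i + 1))
      (fun i => hdex (i + 1)) (fun i => hmin (i + 1)) (kerGM e) (kerLift e (d 0) hcomp)
      (hd 0) (fun k y hy => ?_) (fun y => ?_) (a + 1) ?_ j (by push_cast at hj; omega)
    · obtain ⟨x, hx⟩ := (hex _).1 (map_kerι e y)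
      have hy' : d 0 x ∈ (freeGM A β 0).gr k := by rw [hx]; exact hy
      obtain ⟨x', hx', h⟩ := lift_homog (spans_free A β 1) (hasProj_free A β 0) (d 0) (hd 0) hy'
      exact ⟨x', hx', kerι_inj (h.trans hx)⟩
    · refine Iff.trans ⟨fun h => ?_, fun h => ?_⟩ (hdex 0 y)
      · exact congrArg (kerι e) h
      · exact kerι_inj h
    · refine hM.ker e he hes (good_free fun j hj => ?_)
      refine betti_zero_of_lin β M e he hes (fun x hx p => ?_) hM j (by omega)
      obtain ⟨w, rfl⟩ := (hex x).1 hx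
      exact hmin 0 w p

/-! ### Existence of minimal graded free resolutions -/

instance gmModule (M : GM A) : Module K M := Module.compHom M (algebraMap K R)

lemma gm_smul_def {M : GM A} (k : K) (x : M) : k • x = algebraMap K R k • x := rfl

instance (M : GM A) : IsScalarTower K R M :=
  ⟨fun k r x => by rw [Algebra.smul_def, mul_smul]; rfl⟩

lemma algebraMap_mem (A : StdGrading K R) (k : K) : algebraMap K R k ∈ A.gr 0 := by
  rw [Algebra.algebraMap_eq_smul_one]
  exact Submodule.smul_mem _ _ (one_mem_gr A)

/-- The homogeneous pieces are vector spaces over the base field. -/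
def grK (M : GM A) (d : ℤ) : Submodule K M where
  carrier := M.gr d
  add_mem' := add_mem
  zero_mem' := zero_mem _
  smul_mem' k x hx := by
    have := M.smul_mem 0 d _ x (algebraMap_mem A k) hx
    rwa [zero_add] at this

lemma mem_grK {M : GM A} {d : ℤ} {x : M} : x ∈ grK M d ↔ x ∈ M.gr d := Iff.rfl

/-- A non-negatively graded module with finite dimensional pieces. -/
structure Nice (M : GM A) : Prop where
  spans : Spans M
  proj : HasProj M
  neg : ∀ d < 0, ∀ x ∈ M.gr d, x = 0
  fin : ∀ d, Module.Finite K (grK M d)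

/-- A vector space basis modulo a subspace. -/
lemma exists_basis_mod {V : Type v} [AddCommGroup V] [Module K V] (G D : Submodule K V)
    [Module.Finite K G] : ∃ (n : ℕ) (w : Fin n → V), (∀ t, w t ∈ G) ∧
      (∀ x ∈ G, ∃ k : Fin n → K, x - ∑ t, k t • w t ∈ D) ∧
      ∀ k : Fin n → K, ∑ t, k t • w t ∈ D → ∀ t, k t = 0 := by
  let D' := D.comap G.subtype
  let b := Module.finBasis K (G ⧸ D')
  choose w hw using fun t => D'.mkQ_surjective (b t)
  refine ⟨_, fun t => w t, fun t => (w t).2, fun x hx => ⟨b.repr (D'.mkQ ⟨x, hx⟩), ?_⟩,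
    fun k hk => ?_⟩
  · have : (⟨x, hx⟩ - ∑ t, b.repr (D'.mkQ ⟨x, hx⟩) t • w t : G) ∈ D' := by
      refine (Submodule.Quotient.mk_eq_zero D').1 ?_
      change D'.mkQ _ = 0
      rw [map_sub, map_sum]
      simp only [map_smul, hw]
      rw [b.sum_repr, sub_self]
    simpa [D'] using this
  · have h1 : (∑ t, k t • w t : G) ∈ D' := by simpa [D'] using hk
    have h1 : D'.mkQ (∑ t, k t • w t : G) = 0 := (Submodule.Quotient.mk_eq_zero D').2 h1
    rw [map_sum] at h1
    simp only [map_smul, hw] at h1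
    exact Fintype.linearIndependent_iff.1 b.linearIndependent k h1

/-- The decomposable elements of degree `d`: combinations of products of homogeneous elements
with a scalar of positive degree. -/
def decomp (M : GM A) (d : ℤ) : Submodule K M :=
  Submodule.span K {y | ∃ k : ℤ, 0 < k ∧ ∃ r ∈ A.gr k, ∃ x ∈ M.gr (d - k), r • x = y}

/-- Decomposition of an element into homogeneous components. -/
lemma Spans.exists_finsupp {M : GM A} (hM : Spans M) (x : M) :
    ∃ c : ℤ →₀ M, (∀ d, c d ∈ M.gr d) ∧ (c.sum fun _ y => y) = x := by
  classical
  refine AddSubgroup.iSup_induction M.gr (C := fun x => ∃ c : ℤ →₀ M, (∀ d, c d ∈ M.gr d) ∧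
    (c.sum fun _ y => y) = x) (hM x) (fun d x hx => ?_) ⟨0, fun d => zero_mem _, by simp⟩ ?_
  · refine ⟨Finsupp.single d x, fun e => ?_, by simp⟩
    by_cases h : d = e
    · subst h; simpa using hx
    · rw [Finsupp.single_eq_of_ne (Ne.symm h)]; exact zero_mem _
  · rintro _ _ ⟨c, hc, rfl⟩ ⟨c', hc', rfl⟩
    refine ⟨c + c', fun d => add_mem (hc d) (hc' d), ?_⟩
    rw [Finsupp.sum_add_index'] <;> simp

/-- The homogeneous components of an element of the kernel lie in the kernel. -/
lemma exists_finsupp_ker {M N : GM A} (hM : Spans M) (hN : HasProj N) (f : M →ₗ[R] N)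
    (hf : IsGr f) {x : M} (hx : f x = 0) :
    ∃ c : ℤ →₀ M, (∀ d, c d ∈ M.gr d) ∧ (∀ d, f (c d) = 0) ∧ (c.sum fun _ y => y) = x := by
  obtain ⟨c, hc, hcx⟩ := hM.exists_finsupp x
  obtain ⟨π, h1, h2⟩ := hN
  refine ⟨c, hc, fun d => ?_, hcx⟩
  have h3 : π d (f x) = f (c d) := by
    rw [← hcx, Finsupp.sum, map_sum, map_sum, Finset.sum_eq_single d]
    · exact h1 d _ (hf d _ (hc d))
    · intro e _ he
      exact h2 e d he _ (hf e _ (hc e))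
    · intro hd
      rw [Finsupp.notMem_support_iff.1 hd, map_zero, map_zero]
  rw [← h3, hx, map_zero]

lemma spans_ker {M N : GM A} (hM : Spans M) (hN : HasProj N) (f : M →ₗ[R] N) (hf : IsGr f) :
    Spans (kerGM f) := by
  intro x
  obtain ⟨c, hc, hcf, hcx⟩ := exists_finsupp_ker hM hN f hf (map_kerι f x)
  choose y hy using fun d => exists_kerι (hcf d)
  have : x = ∑ d ∈ c.support, y d := by
    refine kerι_inj ?_
    rw [map_sum, ← hcx]
    exact Finset.sum_congr rfl fun d _ => (hy d).symm
  rw [this]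
  refine AddSubgroup.sum_mem _ fun d _ => AddSubgroup.mem_iSup_of_mem d ?_
  rw [mem_kerGM, hy]; exact hc d

lemma hasProj_ker {M N : GM A} (hM : Spans M) (hM' : HasProj M) (hN : HasProj N) (f : M →ₗ[R] N)
    (hf : IsGr f) : HasProj (kerGM f) := by
  obtain ⟨π, h1, h2⟩ := hM'
  obtain ⟨ρ, h3, h4⟩ := hN
  have hcomm : ∀ d x, f (π d x) = ρ d (f x) := by
    intro d x
    refine AddSubgroup.iSup_induction M.gr (C := fun x => f (π d x) = ρ d (f x)) (hM x)
      (fun e x hx => ?_) (by simp) (fun x y hx hy => by simp only [map_add, hx, hy])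
    by_cases he : e = d
    · subst he
      rw [h1 _ _ hx, h3 _ _ (hf _ _ hx)]
    · rw [h2 e d he _ hx, h4 e d he _ (hf _ _ hx), map_zero]
  have hk : ∀ d (x : kerGM f), f (π d (kerι f x)) = 0 := fun d x => by
    rw [hcomm, map_kerι, map_zero]
  choose ψ hψ using fun d x => exists_kerι (hk d x)
  refine ⟨fun d => AddMonoidHom.mk' (ψ d) fun x y => kerι_inj ?_, fun d x hx => kerι_inj ?_,
    fun d e hde x hx => kerι_inj ?_⟩
  · rw [map_add, hψ, hψ, hψ, map_add, map_add]
  · exact (hψ d x).trans (h1 d _ hx)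
  · exact (hψ e x).trans ((h2 d e hde _ hx).trans (map_zero (kerι f)).symm)

lemma finite_gr (A : StdGrading K R) (d : ℤ) : Module.Finite K (A.gr d) := by
  rcases lt_or_ge d 0 with hd | hd
  · rw [A.negBot d hd]; infer_instance
  obtain ⟨n, rfl⟩ := Int.eq_ofNat_of_zero_le hd
  clear hd
  induction n with
  | zero =>
    have : A.gr ((0 : ℕ) : ℤ) = Submodule.span K {1} := A.zeroEq
    rw [this]; infer_instance
  | succ n ih =>
    have h := A.mulEq n 1 (by omega) (by omega)
    have h' : A.gr ((n + 1 : ℕ) : ℤ) = A.gr n * A.gr 1 := by push_cast; exact h.symm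
    rw [h']
    exact Module.Finite.iff_fg.2 ((Module.Finite.iff_fg.1 ih).mul (Module.Finite.iff_fg.1 A.finOne))

lemma finite_free {β : ℕ → ℤ → ℕ} {i : ℕ} (hβ : ∀ j < 0, β i j = 0) (d : ℤ) :
    Module.Finite K (grK (freeGM A β i) d) := by
  let T := (j : Fin (d.toNat + 1)) × Fin (β i (j : ℕ))
  have := fun t : T => finite_gr A (d - (t.1 : ℕ))
  let φ : grK (freeGM A β i) d →ₗ[K] ((t : T) → A.gr (d - (t.1 : ℕ))) :=
    { toFun := fun x t => ⟨coord A β i ⟨(t.1 : ℕ), t.2⟩ x.1, coord_mem x.2 ⟨(t.1 : ℕ), t.2⟩⟩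
      map_add' := fun x y => funext fun t => Subtype.ext (map_add _ _ _)
      map_smul' := fun k x => funext fun t => Subtype.ext (by
        change coord A β i _ (algebraMap K R k • x.1) = k • coord A β i _ x.1
        rw [map_smul, smul_eq_mul, ← Algebra.smul_def]) }
  refine Module.Finite.of_injective φ ?_
  rw [← LinearMap.ker_eq_bot, LinearMap.ker_eq_bot']
  intro x hx
  have key : ∀ p, coord A β i p x.1 = 0 := by
    rintro ⟨j, t⟩
    rcases lt_or_ge j 0 with hj | hj
    · have h0 := hβ j hj
      exact absurd t.2 (by omega)
    obtain ⟨n, rfl⟩ := Int.eq_ofNat_of_zero_le hj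
    rcases lt_or_ge d n with hd | hd
    · have h := coord_mem x.2 ⟨(n : ℤ), t⟩
      rwa [A.negBot _ (by change d - (n : ℤ) < 0; omega), Submodule.mem_bot] at h
    · exact congrArg Subtype.val (congrFun hx ⟨⟨n, by omega⟩, t⟩)
  refine Subtype.ext ?_
  exact (Finsupp.ext key : (x.1 : FreeMod R β i) = 0)

lemma pos_mem_maxIdeal {d : ℤ} (hd : 0 < d) {r : R} (hr : r ∈ A.gr d) : r ∈ A.maxIdeal :=
  Ideal.subset_span ⟨d, hd, hr⟩

/-- Existence of a minimal graded free cover. -/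
lemma exists_cover (M : GM A) (hM : Nice M) : ∃ (b : ℤ → ℕ) (e : freeGM A (fun _ => b) 0 →ₗ[R] M),
    (∀ j < 0, b j = 0) ∧ IsGr e ∧ DSurj e ∧
      ∀ x, e x = 0 → ∀ p, coord A (fun _ => b) 0 p x ∈ A.maxIdeal := by
  have := hM.fin
  choose b w hw hspan hind using fun j => exists_basis_mod (grK M j) (decomp M j)
  let β : ℕ → ℤ → ℕ := fun _ => b
  let e : freeGM A β 0 →ₗ[R] M :=
    (Finsupp.linearCombination R (fun p => w p.1 p.2) : FreeMod R β 0 →ₗ[R] M)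
  have heb : ∀ p, e (basisElt A β 0 p) = w p.1 p.2 := fun p => by
    refine (Finsupp.linearCombination_single R (1 : R) p).trans ?_
    rw [one_smul]
  have he : IsGr e := fun d x hx => by
    exact linearCombination_mem (fun p : (j : ℤ) × Fin (β 0 j) => (w p.1 p.2 : M))
      (fun p => mem_grK.1 (hw p.1 p.2)) d x hx
  have hesum : ∀ x : FreeMod R β 0, e x = x.sum fun p r => r • w p.1 p.2 := fun x =>
    Finsupp.linearCombination_apply R x
  refine ⟨b, e, fun j hj => ?_, he, ?_, ?_⟩
  · by_contra hne
    have h0 : ∀ t, w j t = 0 := fun t => hM.neg j hj _ (hw j t)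
    have := hind j (fun _ => 1) (by simp [h0]) ⟨0, Nat.pos_of_ne_zero hne⟩
    exact one_ne_zero this
  · -- graded Nakayama, by induction on the degree
    have key : ∀ n : ℕ, ∀ d : ℤ, d < n → ∀ y ∈ M.gr d, ∃ x ∈ (freeGM A β 0).gr d, e x = y := by
      intro n
      induction n with
      | zero =>
        intro d hd y hy
        exact ⟨0, zero_mem _, by rw [map_zero, hM.neg d (by simpa using hd) y hy]⟩
      | succ n ih =>
        intro d hd y hy
        have hD : ∀ z ∈ decomp M d, z ∈ (grK (freeGM A β 0) d).map (e.restrictScalars K) := by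
          intro z hz
          refine (Submodule.span_le.2 ?_ : decomp M d ≤ _) hz
          rintro _ ⟨k, hk, r, hr, x, hx, rfl⟩
          obtain ⟨x', hx', rfl⟩ := ih (d - k) (by push_cast at hd; omega) x hx
          refine ⟨r • x', ?_, map_smul e r x'⟩
          have := (freeGM A β 0).smul_mem _ _ _ _ hr hx'
          rwa [add_sub_cancel] at this
        obtain ⟨k, hk⟩ := hspan d y hy
        have h1 : ∑ t, k t • w d t ∈ (grK (freeGM A β 0) d).map (e.restrictScalars K) := by
          refine Submodule.sum_mem _ fun t _ => Submodule.smul_mem _ _ ?_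
          exact ⟨_, basisElt_mem A β 0 ⟨d, t⟩, heb ⟨d, t⟩⟩
        have h2 := add_mem (hD _ hk) h1
        rw [sub_add_cancel] at h2
        obtain ⟨x, hx, hxy⟩ := h2
        exact ⟨x, hx, hxy⟩
    intro d y hy
    exact key (d.toNat + 1) d (by omega) y hy
  · -- minimality is checked on homogeneous elements
    have key : ∀ d, ∀ x ∈ (freeGM A β 0).gr d, e x = 0 → ∀ p, coord A β 0 p x ∈ A.maxIdeal := by
      intro d x hx hex p
      have hxp := coord_mem hx p
      rcases lt_trichotomy p.1 d with hp | hp | hp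
      · exact pos_mem_maxIdeal (by omega) hxp
      · obtain ⟨j, t⟩ := p
        obtain rfl : j = d := hp
        have h0 : ∀ t, ∃ k : K, coord A β 0 ⟨j, t⟩ x = algebraMap K R k := by
          intro t
          have h := coord_mem hx ⟨j, t⟩
          rw [sub_self, A.zeroEq, Submodule.mem_span_singleton] at h
          obtain ⟨k, hk⟩ := h
          exact ⟨k, by rw [← hk, Algebra.algebraMap_eq_smul_one]⟩
        choose k hk using h0
        -- remove from `x` the part on generators of degree `j`
        let s : FreeMod R β 0 := ∑ t, Finsupp.single ⟨j, t⟩ (algebraMap K R (k t))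
        have hs1 : ∀ t, s ⟨j, t⟩ = algebraMap K R (k t) := by
          intro t
          rw [Finsupp.finsetSum_apply, Finset.sum_eq_single t]
          · exact Finsupp.single_eq_same
          · intro t' _ ht'
            refine Finsupp.single_eq_of_ne fun h => ht' ?_
            simpa using h.symm
          · simp
        have hs2 : e s = ∑ t, k t • w j t := by
          refine (map_sum (Finsupp.linearCombination R fun p : (j : ℤ) × Fin (β 0 j) => w p.1 p.2) _ _).trans ?_
          refine Finset.sum_congr rfl fun t _ => ?_
          exact Finsupp.linearCombination_single R _ _
        let x₀ : FreeMod R β 0 := x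
        let x' : FreeMod R β 0 := x₀ - s
        have hx' : e x' ∈ decomp M j := by
          rw [hesum]
          refine Submodule.sum_mem _ fun q _ => ?_
          change x' q • w q.1 q.2 ∈ _
          by_cases hq : q.1 = j
          · obtain ⟨j', t'⟩ := q
            obtain rfl : j' = j := hq
            have : x' ⟨j', t'⟩ = 0 := by
              change coord A β 0 ⟨j', t'⟩ x - s ⟨j', t'⟩ = 0
              rw [hs1, hk, sub_self]
            rw [this, zero_smul]
            exact zero_mem _
          · have hsq : s q = 0 := by
              rw [Finsupp.finsetSum_apply]
              refine Finset.sum_eq_zero fun t _ => Finsupp.single_eq_of_ne fun h => hq ?_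
              rw [h]
            have hxq : x' q = coord A β 0 q x := by
              change coord A β 0 q x - s q = _
              rw [hsq, sub_zero]
            rw [hxq]
            have hq' := coord_mem hx q
            rcases lt_or_gt_of_ne hq with h | h
            · refine Submodule.subset_span ⟨j - q.1, by omega, _, hq', _, ?_, rfl⟩
              rw [sub_sub_cancel]
              exact hw q.1 q.2
            · rw [A.negBot _ (by omega), Submodule.mem_bot] at hq'
              rw [hq', zero_smul]
              exact zero_mem _
        have hsum : e x' = - ∑ t, k t • w j t := by
          rw [← hs2]
          refine (map_sub (Finsupp.linearCombination R fun p : (j : ℤ) × Fin (β 0 j) => w p.1 p.2) _ _).trans ?_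
          change e x - e s = _
          rw [hex, zero_sub]
        rw [hsum, neg_mem_iff] at hx'
        rw [hk, hind j k hx' t, map_zero]
        exact zero_mem _
      · rw [A.negBot _ (by omega), Submodule.mem_bot] at hxp
        rw [hxp]; exact zero_mem _
    intro x hx p
    obtain ⟨c, hc, hce, hcx⟩ := exists_finsupp_ker (spans_free A β 0) hM.proj e he hx
    rw [← hcx, Finsupp.sum, map_sum]
    exact Ideal.sum_mem _ fun d _ => key d _ (hc d) (hce d) p

lemma nice_ker {M : GM A} (hM : Nice M) {b : ℤ → ℕ} (hb : ∀ j < 0, b j = 0)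
    (e : freeGM A (fun _ => b) 0 →ₗ[R] M) (he : IsGr e) : Nice (kerGM e) where
  spans := spans_ker (spans_free _ _ _) hM.proj e he
  proj := hasProj_ker (spans_free _ _ _) (hasProj_free _ _ _) hM.proj e he
  neg d hd x hx := by
    refine kerι_inj ?_
    rw [map_zero]
    refine (Finsupp.ext fun p => ?_ : (kerι e x : FreeMod R (fun _ => b) 0) = 0)
    have h := coord_mem (mem_kerGM.1 hx) p
    have hp : 0 ≤ p.1 := by
      by_contra h
      exact absurd p.2.2 (by simp only [hb p.1 (not_le.1 h)]; omega)
    rwa [A.negBot _ (by omega), Submodule.mem_bot] at h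
  fin d := by
    have := finite_free (A := A) (β := fun _ => b) (i := 0) hb d
    let φ : grK (kerGM e) d →ₗ[K] grK (freeGM A (fun _ => b) 0) d :=
      { toFun := fun x => ⟨kerι e x.1, x.2⟩
        map_add' := fun x y => rfl
        map_smul' := fun k x => rfl }
    refine Module.Finite.of_injective φ fun x y h => Subtype.ext (kerι_inj ?_)
    exact congrArg (fun z => z.1) h

/-- The residue field as a graded module. -/
def resGM (A : StdGrading K R) : GM A where
  carrier := R ⧸ A.maxIdeal
  gr d := (resGr A d).toAddSubgroup
  smul_mem i j r x hr hx := by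
    obtain ⟨y, hy, rfl⟩ := hx
    exact ⟨r * y, mul_mem_gr A hr hy, rfl⟩

/-- The quotient map onto the residue field. -/
def resMk (A : StdGrading K R) : R →ₗ[R] resGM A := A.maxIdeal.mkQ

lemma resMk_mem {d : ℤ} {x : R} (hx : x ∈ A.gr d) : resMk A x ∈ (resGM A).gr d := ⟨x, hx, rfl⟩

lemma exists_resMk {d : ℤ} {y : resGM A} (hy : y ∈ (resGM A).gr d) :
    ∃ x ∈ A.gr d, resMk A x = y := hy

lemma resMk_eq_zero {x : R} : resMk A x = 0 ↔ x ∈ A.maxIdeal :=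
  Submodule.Quotient.mk_eq_zero _

lemma resGM_gr {d : ℤ} (hd : d ≠ 0) {x : resGM A} (hx : x ∈ (resGM A).gr d) : x = 0 := by
  obtain ⟨r, hr, rfl⟩ := exists_resMk hx
  rw [resMk_eq_zero]
  rcases lt_or_gt_of_ne hd with h | h
  · rw [A.negBot d h, Submodule.mem_bot] at hr
    rw [hr]; exact zero_mem _
  · exact pos_mem_maxIdeal h hr

lemma nice_res (A : StdGrading K R) : Nice (resGM A) where
  spans x := by
    obtain ⟨r, rfl⟩ := Submodule.mkQ_surjective _ x
    refine Submodule.iSup_induction A.gr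
      (motive := fun r => resMk A r ∈ ⨆ d, (resGM A).gr d) (mem_iSup_gr A r) ?_ ?_ ?_
    · intro d x hx
      exact AddSubgroup.mem_iSup_of_mem d (resMk_mem hx)
    · rw [map_zero]; exact zero_mem _
    · intro x y hx hy
      rw [map_add]; exact add_mem hx hy
  proj := by
    refine ⟨fun d => if d = 0 then AddMonoidHom.id _ else 0, fun d x hx => ?_,
      fun d e hde x hx => ?_⟩
    · by_cases h : d = 0
      · simp only [if_pos h]; rfl
      · simp only [if_neg h]; exact (resGM_gr h hx).symm
    · by_cases hd : d = 0
      · simp only [if_neg (show ¬ e = 0 by omega)]; rfl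
      · rw [resGM_gr hd hx, map_zero]
  neg d hd x hx := resGM_gr hd.ne hx
  fin d := by
    have := finite_gr A d
    let φ : A.gr d →ₗ[K] grK (resGM A) d :=
      { toFun := fun x => ⟨resMk A x.1, resMk_mem x.2⟩
        map_add' := fun x y => rfl
        map_smul' := fun k x => Subtype.ext (by
          change resMk A (k • x.1 : R) = algebraMap K R k • resMk A x.1
          rw [Algebra.smul_def, ← smul_eq_mul, map_smul]) }
    refine Module.Finite.of_surjective φ fun y => ?_
    obtain ⟨x, hx, hxy⟩ := exists_resMk y.2
    exact ⟨⟨x, hx⟩, Subtype.ext hxy⟩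

/-- A minimal graded free cover of a module. -/
structure Cov (M : GM A) where
  nice : Nice M
  b : ℤ → ℕ
  e : freeGM A (fun _ => b) 0 →ₗ[R] M
  hb : ∀ j < 0, b j = 0
  isGr : IsGr e
  dSurj : DSurj e
  min : ∀ x, e x = 0 → ∀ p, coord A (fun _ => b) 0 p x ∈ A.maxIdeal

lemma nonempty_cov {M : GM A} (hM : Nice M) : Nonempty (Cov M) := by
  obtain ⟨b, e, h1, h2, h3, h4⟩ := exists_cover M hM
  exact ⟨⟨hM, b, e, h1, h2, h3, h4⟩⟩

/-- The residue field is covered by a free module of rank one. -/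
lemma exists_cov_res (A : StdGrading K R) :
    ∃ C : Cov (resGM A), ∃ p₀ : (j : ℤ) × Fin (C.b j), p₀.1 = 0 ∧ ∀ p, p = p₀ := by
  let b : ℤ → ℕ := fun j => if j = 0 then 1 else 0
  have hb1 : b 0 = 1 := if_pos rfl
  have hb0 : ∀ j, j ≠ 0 → b j = 0 := fun j hj => if_neg hj
  let p₀ : (j : ℤ) × Fin (b j) := ⟨0, ⟨0, by rw [hb1]; omega⟩⟩
  have hp₀ : ∀ p, p = p₀ := by
    rintro ⟨j, t⟩
    by_cases hj : j = 0
    · subst hj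
      have : t = ⟨0, by rw [hb1]; omega⟩ := Fin.ext (by have := t.2; simp only; omega)
      rw [this]
    · have h0 := hb0 j hj
      exact absurd t.2 (by omega)
  let e : freeGM A (fun _ => b) 0 →ₗ[R] resGM A := (resMk A).comp (coord A (fun _ => b) 0 p₀)
  refine ⟨⟨nice_res A, b, e, fun j hj => hb0 j hj.ne, fun d x hx => ?_, fun d y hy => ?_,
    fun x hx p => ?_⟩, p₀, rfl, hp₀⟩
  · have h := coord_mem hx p₀
    rw [show d - p₀.1 = d from sub_zero d] at h
    exact resMk_mem h
  · obtain ⟨r, hr, rfl⟩ := exists_resMk hy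
    refine ⟨(Finsupp.single p₀ r : FreeMod R (fun _ => b) 0),
      single_mem_freeGr A (fun _ => b) 0 p₀ (by
        rw [show d - p₀.1 = d from sub_zero d]; exact hr), ?_⟩
    change resMk A ((Finsupp.single p₀ r : FreeMod R (fun _ => b) 0) p₀) = _
    rw [Finsupp.single_eq_same]
  · rw [hp₀ p]
    exact resMk_eq_zero.1 hx

/-- Iterated syzygies with chosen minimal covers. -/
noncomputable def tower (C : Cov (resGM A)) : ℕ → (M : GM A) × Cov M
  | 0 => ⟨resGM A, C⟩
  | k + 1 => ⟨kerGM (tower C k).2.e, (nonempty_cov (nice_ker (tower C k).2.nice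
      (tower C k).2.hb _ (tower C k).2.isGr)).some⟩

/-- The Betti numbers read off from a tower. -/
noncomputable def towerβ (C : Cov (resGM A)) (k : ℕ) : ℤ → ℕ := (tower C k).2.b

/-- The `k`-th syzygy of the residue field. -/
noncomputable def syz (C : Cov (resGM A)) (k : ℕ) : GM A := (tower C k).1

/-- The cover of the `k`-th syzygy. -/
noncomputable def syzCov (C : Cov (resGM A)) (k : ℕ) :
    freeGM A (towerβ C) k →ₗ[R] syz C k := (tower C k).2.e

lemma syz_succ (C : Cov (resGM A)) (k : ℕ) : syz C (k + 1) = kerGM (syzCov C k) := rfl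

lemma isGr_syzCov (C : Cov (resGM A)) (k : ℕ) : IsGr (syzCov C k) := (tower C k).2.isGr

lemma dSurj_syzCov (C : Cov (resGM A)) (k : ℕ) : DSurj (syzCov C k) := (tower C k).2.dSurj

/-- A degreewise surjective map onto a module spanned by its pieces is surjective. -/
lemma DSurj.surjective {M N : GM A} {f : M →ₗ[R] N} (hf : DSurj f) (hN : Spans N) :
    Function.Surjective f := by
  intro y
  refine AddSubgroup.iSup_induction N.gr (C := fun y => ∃ x, f x = y) (hN y) ?_
    ⟨0, map_zero f⟩ ?_
  · intro d y hy
    obtain ⟨x, -, hx⟩ := hf d y hy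
    exact ⟨x, hx⟩
  · rintro _ _ ⟨x, rfl⟩ ⟨y, rfl⟩
    exact ⟨x + y, map_add f x y⟩

lemma surjective_syzCov (C : Cov (resGM A)) (k : ℕ) : Function.Surjective (syzCov C k) :=
  (dSurj_syzCov C k).surjective (tower C k).2.nice.spans

/-- Splicing the covers gives a minimal graded free resolution of the residue field. -/
lemma hasBettiTable_tower (C : Cov (resGM A)) : HasBettiTable A (resGr A) (towerβ C) := by
  let d : ∀ i, freeGM A (towerβ C) (i + 1) →ₗ[R] freeGM A (towerβ C) i := fun i =>
    (kerι (syzCov C i)).comp (syzCov C (i + 1))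
  have hd : ∀ i y, syzCov C i y = 0 ↔ y ∈ Set.range (d i) := by
    intro i y
    constructor
    · intro h
      obtain ⟨z, rfl⟩ := exists_kerι h
      obtain ⟨x, rfl⟩ := surjective_syzCov C (i + 1) z
      exact ⟨x, rfl⟩
    · rintro ⟨x, rfl⟩
      exact map_kerι _ _
  refine ⟨⟨syzCov C 0, d, surjective_syzCov C 0, hd 0, fun i y => ?_, isGr_syzCov C 0,
    fun i dg f hf => isGr_syzCov C (i + 1) dg f hf, fun i f p => ?_⟩⟩
  · refine Iff.trans ⟨fun h => ?_, fun h => ?_⟩ (hd (i + 1) y)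
    · exact kerι_inj h
    · exact congrArg (kerι (syzCov C i)) h
  · exact (tower C i).2.min (d i f) ((hd i _).2 ⟨f, rfl⟩) p


/-! ### Direct powers -/

/-- The direct sum of copies of `M` indexed by `J`. -/
noncomputable def powGM (J : Type) (M : GM A) : GM A where
  carrier := J →₀ M
  gr d :=
    { carrier := {f | ∀ j, f j ∈ M.gr d}
      add_mem' := fun hf hg j => add_mem (hf j) (hg j)
      zero_mem' := fun _ => zero_mem _
      neg_mem' := fun hf j => neg_mem (hf j) }
  smul_mem i d _ _ hr hf := fun j => M.smul_mem i d _ _ hr (hf j)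

/-- Inclusion of the copy with index `j`. -/
noncomputable def psingle {J : Type} (M : GM A) (j : J) : M →ₗ[R] powGM J M :=
  (Finsupp.lsingle j : M →ₗ[R] J →₀ M)

/-- Projection to the copy with index `j`. -/
noncomputable def pcoord {J : Type} (M : GM A) (j : J) : powGM J M →ₗ[R] M :=
  (Finsupp.lapply j : (J →₀ M) →ₗ[R] M)

lemma pcoord_ext {J : Type} {M : GM A} {x y : powGM J M}
    (h : ∀ j, pcoord M j x = pcoord M j y) : x = y := Finsupp.ext h

lemma pcoord_mem {J : Type} {M : GM A} {d : ℤ} {x : powGM J M} :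
    x ∈ (powGM J M).gr d ↔ ∀ j, pcoord M j x ∈ M.gr d := Iff.rfl

lemma psingle_mem {J : Type} {M : GM A} {d : ℤ} {x : M} (hx : x ∈ M.gr d) (j : J) :
    psingle M j x ∈ (powGM J M).gr d := by
  intro i
  change (Finsupp.single j x : J →₀ M) i ∈ M.gr d
  by_cases h : j = i
  · subst h; rw [Finsupp.single_eq_same]; exact hx
  · rw [Finsupp.single_eq_of_ne (Ne.symm h)]; exact zero_mem _

/-- An element of a direct power is the sum of its components. -/
lemma exists_sum_psingle {J : Type} {M : GM A} (x : powGM J M) :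
    ∃ s : Finset J, x = ∑ j ∈ s, psingle M j (pcoord M j x) :=
  ⟨_, (Finsupp.sum_single (x : J →₀ M)).symm⟩

/-- A function preserving zero acts on direct powers componentwise. -/
lemma exists_mapRange {J : Type} {M N : GM A} (s : M → N) (h0 : s 0 = 0) (x : powGM J M) :
    ∃ y : powGM J N, ∀ j, pcoord N j y = s (pcoord M j x) :=
  ⟨(Finsupp.mapRange s h0 x : J →₀ N), fun _ => Finsupp.mapRange_apply (hf := h0)⟩

lemma Good.pow {J : Type} {a : ℤ} {F : GM A} (hF : Good a F) : Good a (powGM J F) where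
  lift P Q q f hq hf := by
    choose l hl hql using fun j : J => hF.lift P Q q (f.comp (psingle F j))
      hq (fun d x hx => hf d _ (psingle_mem hx j))
    let L : powGM J F →ₗ[R] P := (Finsupp.lsum ℕ l : (J →₀ F) →ₗ[R] P)
    have hL : ∀ j y, L (psingle F j y) = l j y := fun j y => Finsupp.lsum_single ℕ l j y
    refine ⟨L, fun d x hx => ?_, fun x => ?_⟩
    · obtain ⟨s, hs⟩ := exists_sum_psingle x
      rw [hs, map_sum]
      refine AddSubgroup.sum_mem _ fun j _ => ?_
      rw [hL]
      exact hl j d _ (hx j)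
    · obtain ⟨s, hs⟩ := exists_sum_psingle x
      rw [hs, map_sum, map_sum, map_sum]
      refine Finset.sum_congr rfl fun j _ => ?_
      rw [hL, hql]
      rfl
  gen U hU k x hx := by
    obtain ⟨s, hs⟩ := exists_sum_psingle x
    rw [hs]
    exact Submodule.sum_mem _ fun j _ => hF.gen (U.comap (psingle F j))
      (fun k hk y hy => hU k hk _ (psingle_mem hy j)) k _ (hx j)

lemma Lin.pow {J : Type} {n : ℕ} : ∀ {a : ℤ} {M : GM A}, Lin n a M → Lin n a (powGM J M) := by
  induction n with
  | zero => intros; trivial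
  | succ n ih =>
    rintro a M ⟨F, p, hF, hp, hps, hk⟩
    let P : powGM J F →ₗ[R] powGM J M :=
      (Finsupp.mapRange.linearMap p : (J →₀ F) →ₗ[R] (J →₀ M))
    have hP : ∀ f j, pcoord M j (P f) = p (pcoord F j f) := fun f j => rfl
    refine ⟨powGM J F, P, hF.pow, fun d x hx j => hp d _ (hx j), fun d y hy => ?_, ?_⟩
    · have hsec : ∀ m : M, ∃ x : F, (m = 0 → x = 0) ∧ (m ∈ M.gr d → x ∈ F.gr d ∧ p x = m) := by
        intro m
        by_cases h0 : m = 0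
        · exact ⟨0, fun _ => rfl, fun _ => ⟨zero_mem _, by rw [h0, map_zero]⟩⟩
        · by_cases hm : m ∈ M.gr d
          · obtain ⟨x, hx, hxm⟩ := hps d m hm
            exact ⟨x, fun h => absurd h h0, fun _ => ⟨hx, hxm⟩⟩
          · exact ⟨0, fun _ => rfl, fun h => absurd h hm⟩
      choose s hs0 hs using hsec
      obtain ⟨x, hx⟩ := exists_mapRange s (hs0 0 rfl) y
      refine ⟨x, fun j => ?_, pcoord_ext fun j => ?_⟩
      · change pcoord F j x ∈ F.gr d
        rw [hx]; exact (hs _ (hy j)).1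
      · rw [hP, hx]
        exact (hs _ (hy j)).2
    · let Q : powGM J (kerGM p) →ₗ[R] powGM J F :=
        (Finsupp.mapRange.linearMap (kerι p) : (J →₀ kerGM p) →ₗ[R] (J →₀ F))
      have hQ : ∀ f j, pcoord F j (Q f) = kerι p (pcoord _ j f) := fun f j => rfl
      refine Lin.of_iso (kerLift P Q fun x => pcoord_ext fun j => map_kerι p _)
        (fun d x hx => hx) (fun d y hy => ?_) (fun d x _ h => ?_) (ih hk)
      · have hsec : ∀ m : F, ∃ x : kerGM p, (m = 0 → x = 0) ∧ (p m = 0 → kerι p x = m) := by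
          intro m
          by_cases h0 : p m = 0
          · obtain ⟨x, hx⟩ := exists_kerι h0
            exact ⟨x, fun h => kerι_inj (by rw [hx, h, map_zero]), fun _ => hx⟩
          · exact ⟨0, fun _ => rfl, fun h => absurd h h0⟩
        choose s hs0 hs using hsec
        have hy0 : ∀ j, p (pcoord F j (kerι P y)) = 0 := fun j => by
          rw [← hP, map_kerι, map_zero]
        obtain ⟨x, hx⟩ := exists_mapRange s (hs0 0 rfl) (kerι P y)
        have hx' : ∀ j, kerι p (pcoord _ j x) = pcoord F j (kerι P y) := fun j => by
          rw [hx]; exact hs _ (hy0 j)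
        refine ⟨x, fun j => ?_, kerι_inj (pcoord_ext fun j => ?_)⟩
        · change pcoord _ j x ∈ _
          rw [mem_kerGM, hx']
          exact hy j
        · rw [kerι_kerLift, hQ, hx']
      · refine pcoord_ext fun j => kerι_inj ?_
        have h' : Q x = 0 := congrArg (kerι P) h
        rw [← hQ, h', map_zero, map_zero, map_zero]

/-! ### Veronese strands -/

section Strands

variable {c : ℕ} {B : Type v} [CommRing B] [Algebra K B] {Bgr : StdGrading K B} {ι : B →ₐ[K] R}

lemma IsVeronese.map_mem (hV : IsVeronese A c Bgr ι) {j : ℤ} {b : B} (hb : b ∈ Bgr.gr j) :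
    ι b ∈ A.gr (c * j) := by
  rw [← hV.2 j]; exact ⟨b, hb, rfl⟩

lemma IsVeronese.exists_eq (hV : IsVeronese A c Bgr ι) {j : ℤ} {r : R} (hr : r ∈ A.gr (c * j)) :
    ∃ b ∈ Bgr.gr j, ι b = r := by
  rw [← hV.2 j] at hr; exact hr

/-- The Veronese strand `⊕_j M_{cj+w}` of a graded `R`-module, as a graded module over the
Veronese subalgebra `B`.  The underlying module is all of `M`; only the homogeneous pieces are
re-indexed. -/
def St (hV : IsVeronese A c Bgr ι) (w : ℤ) (M : GM A) : GM Bgr :=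
  letI : Module B M := Module.compHom M ι.toRingHom
  { carrier := M
    gr := fun j => M.gr (c * j + w)
    smul_mem := fun i j b x hb hx => by
      have h := M.smul_mem _ _ _ x (IsVeronese.map_mem hV hb) hx
      rw [show (c : ℤ) * i + (c * j + w) = c * (i + j) + w by ring] at h
      exact h }

variable (hV : IsVeronese A c Bgr ι)

/-- An `R`-linear map, regarded as a map of strands. -/
def stMap (w : ℤ) {M N : GM A} (f : M →ₗ[R] N) : St hV w M →ₗ[B] St hV w N where
  toFun x := f x
  map_add' x y := map_add f x y
  map_smul' b x := f.map_smul (ι b) (x : M.carrier)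

lemma isGr_stMap (w : ℤ) {M N : GM A} {f : M →ₗ[R] N} (hf : IsGr f) : IsGr (stMap hV w f) :=
  fun _ x hx => hf _ x hx

lemma dSurj_stMap (w : ℤ) {M N : GM A} {f : M →ₗ[R] N} (hf : DSurj f) : DSurj (stMap hV w f) :=
  fun _ y hy => hf _ y hy

/-- Taking strands commutes with kernels. -/
lemma lin_ker_stMap (w : ℤ) {M N N' : GM A} (f : M →ₗ[R] N) (g : M →ₗ[R] N')
    (hfg : ∀ x, g x = 0 ↔ f x = 0) {n : ℕ} {a : ℤ} (h : Lin n a (St hV w (kerGM f))) :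
    Lin n a (kerGM (stMap hV w g)) := by
  refine Lin.of_iso (kerLift (stMap hV w g) (stMap hV w (kerι f)) fun x => ?_)
    (fun d x hx => hx) (fun d y hy => ?_) (fun d x _ hx => ?_) h
  · exact (hfg _).2 (map_kerι f x)
  · have h0 : g (kerι (stMap hV w g) y) = 0 := map_kerι (stMap hV w g) y
    obtain ⟨x, hx⟩ := exists_kerι ((hfg _).1 h0)
    refine ⟨x, ?_, kerι_inj hx⟩
    change kerι f x ∈ M.gr (c * d + w)
    rw [hx]; exact hy
  · exact kerι_inj (congrArg (kerι (stMap hV w g)) hx)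

/-- The strand of a free module with all generators in degree `i`. -/
lemma lin_st_free (w : ℤ) {β : ℕ → ℤ → ℕ} {i : ℕ} (hβ : ∀ j, j ≠ (i : ℤ) → β i j = 0)
    {n : ℕ} {a : ℤ} (h : Lin n a (St hV (w - i) (selfGM A))) :
    Lin n a (St hV w (freeGM A β i)) := by
  have hp : ∀ p : (j : ℤ) × Fin (β i j), p.1 = i := fun p => by
    by_contra hne
    have h0 := hβ p.1 hne
    exact absurd p.2.2 (by omega)
  have hgr : ∀ (d : ℤ) (p : (j : ℤ) × Fin (β i j)),
      (c : ℤ) * d + (w - i) = c * d + w - p.1 := fun d p => by rw [hp p]; ring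
  let φ : powGM ((j : ℤ) × Fin (β i j)) (St hV (w - i) (selfGM A)) →ₗ[B]
      St hV w (freeGM A β i) :=
    { toFun := fun x => x
      map_add' := fun x y => rfl
      map_smul' := fun b x => Finsupp.ext fun p => rfl }
  refine Lin.of_iso φ (fun d x hx p => ?_) (fun d y hy => ⟨y, fun p => ?_, rfl⟩)
    (fun d x _ hx => hx) h.pow
  · have h := hx p
    change _ ∈ A.gr (c * d + (w - i)) at h
    rw [hgr d p] at h
    exact h
  · have h := hy p
    rw [← hgr d p] at h
    exact h

/-- The algebra with its grading shifted by `t`. -/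
def shiftGM (A : StdGrading K R) (t : ℤ) : GM A where
  carrier := R
  gr d := (A.gr (d + t)).toAddSubgroup
  smul_mem i j _ _ hr hx := by
    have := mul_mem_gr A hr hx
    rw [← add_assoc] at this
    exact this

lemma good_shift (A : StdGrading K R) (t : ℤ) : Good (-t) (shiftGM A t) where
  lift P Q q f hq hf := by
    have h1 : (1 : R) ∈ A.gr (-t + t) := by rw [neg_add_cancel]; exact one_mem_gr A
    obtain ⟨y, hy, hqy⟩ := hq (-t) _ (hf (-t) (1 : R) h1)
    refine ⟨(LinearMap.toSpanSingleton R P y : R →ₗ[R] P), fun d x hx => ?_, fun x => ?_⟩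
    · have := P.smul_mem _ _ _ _ (hx : (x : R) ∈ A.gr (d + t)) hy
      rw [add_neg_cancel_right] at this
      exact this
    · let r : R := x
      change q (r • y) = f x
      rw [map_smul, hqy]
      refine (f.map_smul r _).symm.trans ?_
      exact congrArg f (mul_one r)
  gen U hU k x _ := by
    have h1 : (1 : R) ∈ A.gr (-t + t) := by rw [neg_add_cancel]; exact one_mem_gr A
    let r : R := x
    have h := U.smul_mem r (hU (-t) le_rfl (1 : R) h1)
    have hx : r * 1 ∈ (U : Submodule R R) := h
    rw [mul_one] at hx
    exact hx

/-- The strand `V_w` is free of rank one when `c ∣ w`. -/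
lemma lin_st_self_dvd (t : ℤ) {n : ℕ} {s : ℤ} (hs : -t ≤ s) :
    Lin n s (St hV (c * t) (selfGM A)) := by
  let φ : shiftGM Bgr t →ₗ[B] St hV (c * t) (selfGM A) :=
    { toFun := fun b => ι b
      map_add' := fun x y => map_add ι x y
      map_smul' := fun b x => map_mul ι b x }
  refine Lin.of_iso φ (fun d x hx => ?_) (fun d y hy => ?_) (fun d x _ hx => ?_)
    ((good_shift Bgr t).mono hs).lin
  · have h := IsVeronese.map_mem hV (hx : (x : B) ∈ Bgr.gr (d + t))
    rw [mul_add] at h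
    exact h
  · have hy' : (y : R) ∈ A.gr (c * d + c * t) := hy
    rw [← mul_add] at hy'
    obtain ⟨b, hb, hby⟩ := IsVeronese.exists_eq hV hy'
    exact ⟨b, hb, hby⟩
  · exact hV.1 ((hx : ι x = 0).trans (map_zero ι).symm)

/-- Bounds for the strands of the syzygies of the residue field, from bounds for the strands of
the algebra. -/
lemma lin_st_syz (C : Cov (resGM A))
    (hC : ∀ (i : ℕ) (j : ℤ), j ≠ (i : ℤ) → towerβ C i j = 0) (hc : 0 < c) (n : ℕ) : ∀ (_ : ∀ m ≤ n, ∀ w s : ℤ, 0 ≤ c * s + w →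
      Lin m s (St hV w (selfGM A))) (k : ℕ) (a w : ℤ), 0 ≤ c * a + w - k →
      Lin n a (St hV w (syz C k)) := by
  induction n with
  | zero => intros; trivial
  | succ n ih =>
    intro hS k a w h
    refine Lin.quot (stMap hV w (syzCov C k)) (isGr_stMap hV w (isGr_syzCov C k))
      (dSurj_stMap hV w (dSurj_syzCov C k)) ?_ ?_
    · refine lin_ker_stMap hV w (syzCov C k) (syzCov C k) (fun _ => Iff.rfl) ?_
      refine ih (fun m hm => hS m (by omega)) (k + 1) (a + 1) w ?_
      rw [mul_add]
      push_cast
      omega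
    · exact lin_st_free hV w (hC k) (hS (n + 1) le_rfl _ _ (by omega))

/-- The strands `V_w` of the algebra satisfy the expected bounds.  When `c ∤ w` the residue field
has no part in degrees congruent to `w` modulo `c`, so that `V_w` is covered by the strand of the
first free module `F_1` in the resolution, i.e. by copies of `V_{w-1}`, with kernel the strand of
the second syzygies. -/
lemma lin_st_self (C : Cov (resGM A))
    (hC : ∀ (i : ℕ) (j : ℤ), j ≠ (i : ℤ) → towerβ C i j = 0) (hc : 0 < c)
    (p₀ : (j : ℤ) × Fin (towerβ C 0 j)) (hp₀ : p₀.1 = 0) (hp : ∀ p, p = p₀) (n : ℕ) :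
    ∀ m ≤ n, ∀ w s : ℤ, 0 ≤ c * s + w → Lin m s (St hV w (selfGM A)) := by
  induction n with
  | zero =>
    intro m hm w s _
    obtain rfl : m = 0 := by omega
    trivial
  | succ n ih =>
    intro m hm w s h
    rcases Nat.lt_or_ge n m with hnm | hnm
    swap
    · exact ih m hnm w s h
    obtain rfl : m = n + 1 := by omega
    clear hm hnm
    obtain ⟨N, hN⟩ := Int.eq_ofNat_of_zero_le h
    clear h
    induction N generalizing w with
    | zero =>
      obtain rfl : w = c * (-s) := by rw [mul_neg]; push_cast at hN; omega
      exact lin_st_self_dvd hV (-s) (by omega)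
    | succ N ihN =>
      by_cases hw : (c : ℤ) ∣ w
      · obtain ⟨t, rfl⟩ := hw
        refine lin_st_self_dvd hV t ?_
        have h1 : 0 ≤ (c : ℤ) * (s + t) := by rw [mul_add, hN]; omega
        have h2 := nonneg_of_mul_nonneg_right h1 (by omega : (0 : ℤ) < c)
        omega
      -- the composite of the first differential with the isomorphism of `F_0` with `R`
      let π : freeGM A (towerβ C) 0 →ₗ[R] selfGM A := coord A (towerβ C) 0 p₀
      have hπ : ∀ x, π x = 0 → x = 0 := fun x hx =>
        (Finsupp.ext fun p => by rw [hp p]; exact hx :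
          (x : FreeMod R (towerβ C) 0) = (0 : FreeMod R (towerβ C) 0))
      let g : freeGM A (towerβ C) 1 →ₗ[R] selfGM A :=
        π.comp ((kerι (syzCov C 0)).comp (syzCov C 1))
      have hg0 : ∀ x, g x = 0 ↔ syzCov C 1 x = 0 := by
        intro x
        constructor
        · intro h
          exact kerι_inj ((hπ _ h).trans (map_zero (kerι (syzCov C 0))).symm)
        · intro h
          change π (kerι (syzCov C 0) (syzCov C 1 x)) = 0
          rw [h]
          exact (congrArg π (map_zero (kerι (syzCov C 0)))).trans (map_zero π)
      have hgr : IsGr g := by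
        intro d x hx
        have h1 : kerι (syzCov C 0) (syzCov C 1 x) ∈ (freeGM A (towerβ C) 0).gr d :=
          isGr_syzCov C 1 d x hx
        have h2 := coord_mem h1 p₀
        rw [hp₀, sub_zero] at h2
        exact h2
      have hgs : DSurj (stMap hV w g) := by
        intro d y hy
        have hd : (c : ℤ) * d + w ≠ 0 := fun h0 => hw ⟨-d, by rw [mul_neg]; omega⟩
        let r : R := y
        have hr : r ∈ A.gr (c * d + w) := hy
        let f₀ : freeGM A (towerβ C) 0 := (Finsupp.single p₀ r : FreeMod R (towerβ C) 0)
        have hf₀ : f₀ ∈ (freeGM A (towerβ C) 0).gr (c * d + w) :=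
          single_mem_freeGr A (towerβ C) 0 p₀ (by rwa [hp₀, sub_zero])
        obtain ⟨z, hz⟩ := exists_kerι (resGM_gr hd (isGr_syzCov C 0 _ f₀ hf₀))
        obtain ⟨x, hx, hxz⟩ := dSurj_syzCov C 1 (c * d + w) z (by
          exact Set.mem_of_eq_of_mem (s := (freeGM A (towerβ C) 0).gr (c * d + w)) hz hf₀)
        refine ⟨x, hx, ?_⟩
        change π (kerι (syzCov C 0) (syzCov C 1 x)) = y
        rw [hxz]
        refine (congrArg π hz).trans ?_
        exact Finsupp.single_eq_same
      refine Lin.quot (stMap hV w g) (isGr_stMap hV w hgr) hgs ?_ ?_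
      · refine lin_ker_stMap hV w (syzCov C 1) g hg0 ?_
        refine lin_st_syz hV C hC hc n ih 2 (s + 1) w ?_
        rw [mul_add]
        push_cast
        omega
      · refine lin_st_free hV w (hC 1) (ihN (w - 1) ?_)
        push_cast at hN ⊢
        omega

end Strands

/-! ### Reading off Betti numbers -/

lemma eq_zero_of_algebraMap_mem [Nontrivial R] {k : K} (h : algebraMap K R k ∈ A.maxIdeal) :
    k = 0 := by
  by_contra hk
  refine one_notMem_maxIdeal A ?_
  have := A.maxIdeal.mul_mem_left (algebraMap K R k⁻¹) h
  rwa [← map_mul, inv_mul_cancel₀ hk, map_one] at this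

lemma exists_algebraMap_eq {r : R} (hr : r ∈ A.gr 0) : ∃ k : K, algebraMap K R k = r := by
  rw [A.zeroEq, Submodule.mem_span_singleton] at hr
  obtain ⟨k, hk⟩ := hr
  exact ⟨k, by rw [← hk, Algebra.algebraMap_eq_smul_one]⟩

lemma exists_sub_algebraMap_mem (A : StdGrading K R) (r : R) :
    ∃ k : K, r - algebraMap K R k ∈ A.maxIdeal := by
  refine Submodule.iSup_induction A.gr
    (motive := fun r => ∃ k : K, r - algebraMap K R k ∈ A.maxIdeal) (mem_iSup_gr A r) ?_ ?_ ?_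
  · intro d r hr
    rcases lt_trichotomy d 0 with hd | rfl | hd
    · rw [A.negBot d hd, Submodule.mem_bot] at hr
      exact ⟨0, by rw [hr, map_zero, sub_zero]; exact zero_mem _⟩
    · obtain ⟨k, rfl⟩ := exists_algebraMap_eq hr
      exact ⟨k, by rw [sub_self]; exact zero_mem _⟩
    · exact ⟨0, by rw [map_zero, sub_zero]; exact pos_mem_maxIdeal hd hr⟩
  · exact ⟨0, by rw [map_zero, sub_zero]; exact zero_mem _⟩
  · rintro x y ⟨k, hk⟩ ⟨l, hl⟩
    refine ⟨k + l, ?_⟩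
    rw [map_add, add_sub_add_comm]
    exact add_mem hk hl

/-- The `i`-th term of a minimal resolution of a module living in degrees at least `a` is
generated in degrees at least `a + i`. -/
lemma betti_eq_zero_of_lt [Nontrivial R] (i : ℕ) : ∀ (β : ℕ → ℤ → ℕ)
    (d : ∀ i, freeGM A β (i + 1) →ₗ[R] freeGM A β i) (_ : ∀ i, IsGr (d i))
    (_ : ∀ i, Function.Exact (d (i + 1)) (d i))
    (_ : ∀ (i : ℕ) f p, coord A β i p (d i f) ∈ A.maxIdeal)
    (M : GM A) (e : freeGM A β 0 →ₗ[R] M) (_ : IsGr e)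
    (_ : Function.Exact (d 0) e) (a : ℤ) (_ : ∀ k < a, ∀ x ∈ M.gr k, x = 0) (j : ℤ),
    j < a + i → β i j = 0 := by
  have key : ∀ (β : ℕ → ℤ → ℕ) (d : freeGM A β 1 →ₗ[R] freeGM A β 0)
      (_ : ∀ f p, coord A β 0 p (d f) ∈ A.maxIdeal)
      (M : GM A) (e : freeGM A β 0 →ₗ[R] M) (_ : IsGr e)
      (_ : Function.Exact d e) (a : ℤ) (_ : ∀ k < a, ∀ x ∈ M.gr k, x = 0) (j : ℤ),
      j < a → β 0 j = 0 := by
    intro β d hmin M e he hex a hM j hj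
    by_contra hne
    let p : (j : ℤ) × Fin (β 0 j) := ⟨j, ⟨0, Nat.pos_of_ne_zero hne⟩⟩
    obtain ⟨x, hx⟩ := (hex _).1 (hM j hj _ (he j _ (basisElt_mem A β 0 p)))
    have h := hmin x p
    rw [hx] at h
    have h3 : (Finsupp.single p (1 : R) : FreeMod R β 0) p ∈ A.maxIdeal := h
    rw [Finsupp.single_eq_same] at h3
    exact one_notMem_maxIdeal A h3
  induction i with
  | zero =>
    intro β d _ _ hmin M e he hex a hM j hj
    exact key β (d 0) (hmin 0) M e he hex a hM j (by push_cast at hj; omega)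
  | succ i ih =>
    intro β d hd hdex hmin M e he hex a hM j hj
    have hcomp : ∀ x, e (d 0 x) = 0 := fun x => (hex _).2 ⟨x, rfl⟩
    refine ih (fun i => β (i + 1)) (fun i => d (i + 1)) (fun i => hd (i + 1))
      (fun i => hdex (i + 1)) (fun i => hmin (i + 1)) (kerGM e) (kerLift e (d 0) hcomp)
      (hd 0) (fun y => ?_) (a + 1) (fun k hk x hx => ?_) j (by push_cast at hj; omega)
    · refine Iff.trans ⟨fun h => ?_, fun h => ?_⟩ (hdex 0 y)
      · exact congrArg (kerι e) h
      · exact kerι_inj h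
    · have h0 : ∀ p, coord A β 0 p (kerι e x) = 0 := by
        intro p
        have hp : a ≤ p.1 := by
          by_contra h
          have h0 := key β (d 0) (hmin 0) M e he hex a hM p.1 (not_le.1 h)
          exact absurd p.2.2 (by omega)
        have hx' := coord_mem (mem_kerGM.1 hx) p
        rcases lt_or_eq_of_le (show k - p.1 ≤ 0 by omega) with h | h
        · rwa [A.negBot _ h, Submodule.mem_bot] at hx'
        · rw [h] at hx'
          obtain ⟨l, hl⟩ := exists_algebraMap_eq hx'
          obtain ⟨z, hz⟩ := (hex _).1 (map_kerι e x)
          have hm := hmin 0 z p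
          rw [hz, ← hl] at hm
          rw [← hl, eq_zero_of_algebraMap_mem hm, map_zero]
      refine kerι_inj ?_
      rw [map_zero]
      exact (Finsupp.ext h0 : (kerι e x : FreeMod R β 0) = (0 : FreeMod R β 0))

/-- A graded module `N`, identified in each degree with a module `M` satisfying all the bounds
and living in non-negative degrees, has a linear minimal resolution. -/
lemma betti_linear [Nontrivial R] {N : Type w} [AddCommGroup N] [Module K N] [Module R N]
    [IsScalarTower K R N] {g : ℤ → Submodule K N} {β : ℕ → ℤ → ℕ} (res : MinFreeRes A g β)
    (M : GM A) (hMp : HasProj M) (hneg : ∀ d < 0, ∀ x ∈ M.gr d, x = 0) (hL : ∀ n, Lin n 0 M)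
    (f : N →ₗ[R] M) (hf : ∀ x, f x = 0 → x = 0) (hfg : ∀ d, ∀ x ∈ g d, f x ∈ M.gr d)
    (hfs : ∀ d, ∀ y ∈ M.gr d, ∃ x, f x = y) (i : ℕ) (j : ℤ) (hj : j ≠ i) : β i j = 0 := by
  let e : freeGM A β 0 →ₗ[R] M := f.comp res.eps
  have he : IsGr e := fun d x hx => hfg d _ (res.graded_eps d x hx)
  have hes : DSurj e := by
    intro d y hy
    obtain ⟨x, rfl⟩ := hfs d y hy
    obtain ⟨z, rfl⟩ := res.eps_surjective x
    exact lift_homog (spans_free A β 0) hMp e he (x := z) hy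
  have hex : Function.Exact (res.d 0) e := fun y => by
    refine Iff.trans ⟨fun h => hf _ h, fun h => ?_⟩ (res.exact_eps y)
    exact (congrArg f h).trans (map_zero f)
  rcases lt_or_gt_of_ne hj with h | h
  · exact betti_eq_zero_of_lt i β res.d res.graded_d res.exact_d res.minimal M e he hex 0 hneg j
      (by omega)
  · exact betti_eq_zero_of_lin i β res.d res.graded_d res.exact_d res.minimal M e he hes hex 0
      (hL _) j (by omega)

lemma nontrivial_of_isKoszul (h : IsKoszul A) : Nontrivial R := by
  by_contra hR
  rw [not_nontrivial_iff_subsingleton] at hR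
  have hq : Subsingleton (R ⧸ A.maxIdeal) := (Submodule.mkQ_surjective A.maxIdeal).subsingleton
  -- over the zero ring every table is a Betti table
  refine one_ne_zero (h (fun _ _ => 1) ⟨⟨0, fun _ => 0, fun y => ⟨0, Subsingleton.elim _ _⟩,
    fun y => ⟨fun _ => ⟨0, Subsingleton.elim _ _⟩, fun _ => Subsingleton.elim _ _⟩,
    fun i y => ⟨fun _ => ⟨0, Subsingleton.elim _ _⟩, fun _ => Subsingleton.elim _ _⟩,
    fun _ _ _ => zero_mem _, fun _ _ _ _ => zero_mem _, fun _ _ _ => zero_mem _⟩⟩ 0 1 (by simp))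

lemma hasProj_st {c : ℕ} (hc : 0 < c) {B : Type v} [CommRing B] [Algebra K B]
    {Bgr : StdGrading K B} {ι : B →ₐ[K] R} (hV : IsVeronese A c Bgr ι) (w : ℤ) {M : GM A}
    (hM : HasProj M) : HasProj (St hV w M) := by
  obtain ⟨π, h1, h2⟩ := hM
  refine ⟨fun j => π (c * j + w), fun d x hx => h1 _ x hx, fun d e hde x hx => h2 _ _ ?_ x hx⟩
  intro h
  refine hde (mul_left_cancel₀ (by omega : (c : ℤ) ≠ 0) ?_)
  exact add_right_cancel h

/-- The map from the residue field of the Veronese subalgebra to that of the algebra. -/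
lemma exists_resMap {c : ℕ} (hc : 0 < c) {B : Type v} [CommRing B] [Algebra K B]
    {Bgr : StdGrading K B} {ι : B →ₐ[K] R} (hV : IsVeronese A c Bgr ι) :
    ∃ f : (B ⧸ Bgr.maxIdeal) →ₗ[B] St hV 0 (resGM A),
      ∀ b : B, f (Bgr.maxIdeal.mkQ b) = resMk A (ι b) := by
  let φ : B →ₗ[B] St hV 0 (resGM A) :=
    { toFun := fun b => resMk A (ι b)
      map_add' := fun x y => by rw [map_add]; exact map_add (resMk A) _ _
      map_smul' := fun b x => by
        rw [smul_eq_mul, map_mul]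
        exact (resMk A).map_smul (ι b) (ι x) }
  have hφ : Bgr.maxIdeal ≤ LinearMap.ker φ := by
    refine Submodule.span_le.2 ?_
    rintro b ⟨i, hi, hb⟩
    refine (resMk_eq_zero.2 ?_ : resMk A (ι b) = 0)
    exact pos_mem_maxIdeal (mul_pos (by omega : (0 : ℤ) < c) hi) (IsVeronese.map_mem hV hb)
  exact ⟨Submodule.liftQ Bgr.maxIdeal φ hφ, fun b => Submodule.liftQ_apply _ _ _⟩

end VeroneseKoszul

/-- If `R` is Koszul then every Veronese subalgebra `R^{(c)}` is Koszul, and for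
`u = 0, …, c−1` the Veronese submodule `V_u = ⊕_j R_{jc+u}` (with `(V_u)_j = R_{jc+u}`)
has a linear resolution over `R^{(c)}`, i.e. `reg_{R^{(c)}}(V_u) = 0`. -/
theorem stmt12 {K : Type u} [Field K] {R : Type v} [CommRing R] [Algebra K R]
    (A : StdGrading K R) (hKos : IsKoszul A) (c : ℕ) (hc : 0 < c)
    (B : Type v) [CommRing B] [Algebra K B] (Bgr : StdGrading K B) (ι : B →ₐ[K] R)
    (hV : IsVeronese A c Bgr ι)
    [Module B R] [IsScalarTower K B R] (hsmul : ∀ (y : B) (r : R), y • r = ι y * r) :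
    IsKoszul Bgr ∧
    (∀ u : ℤ, 0 ≤ u → u < c → ∀ Vu : Submodule B R,
      (Vu : Set R) = ((⨆ j : ℕ, A.gr ((c : ℤ) * j + u) : Submodule K R) : Set R) →
      ∀ β : ℕ → ℤ → ℕ,
        HasBettiTable Bgr
          (fun dg => (A.gr ((c : ℤ) * dg + u)).comap ((Vu.subtype).restrictScalars K)) β →
        ∀ (i : ℕ) (j : ℤ), j ≠ (i : ℤ) → β i j = 0) := by
  open VeroneseKoszul in
  have hR : Nontrivial R := nontrivial_of_isKoszul hKos
  have hB : Nontrivial B := RingHom.domain_nontrivial ι.toRingHom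
  obtain ⟨C, p₀, hp₀, hp⟩ := exists_cov_res A
  -- Koszulness, applied to the minimal resolution of `K` built from iterated covers
  have hC := hKos _ (hasBettiTable_tower C)
  have hS : ∀ n, ∀ w s : ℤ, 0 ≤ c * s + w → Lin n s (St hV w (selfGM A)) := fun n =>
    lin_st_self hV C hC hc p₀ hp₀ hp n n le_rfl
  refine ⟨?_, ?_⟩
  · rintro β ⟨res⟩
    obtain ⟨f, hf⟩ := exists_resMap hc hV
    refine betti_linear res (St hV 0 (resGM A)) (hasProj_st hc hV 0 (nice_res A).proj) ?_ ?_ f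
      ?_ ?_ ?_
    · intro d hd x hx
      have h0 : (c : ℤ) * d + 0 < 0 := by rw [add_zero]; exact mul_neg_of_pos_of_neg (by omega) hd
      exact resGM_gr h0.ne hx
    · intro n
      exact lin_st_syz hV C hC hc n (fun m _ => hS m) 0 0 0 (by simp)
    · intro x hx
      obtain ⟨b, rfl⟩ := Submodule.mkQ_surjective _ x
      rw [hf] at hx
      have hx' : ι b ∈ A.maxIdeal := resMk_eq_zero.1 hx
      obtain ⟨k, hk⟩ := exists_sub_algebraMap_mem Bgr b
      have hk' : ι (b - algebraMap K B k) ∈ A.maxIdeal := by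
        have h1 := hf (b - algebraMap K B k)
        rw [Submodule.mkQ_apply, (Submodule.Quotient.mk_eq_zero _).2 hk, map_zero] at h1
        exact resMk_eq_zero.1 h1.symm
      rw [map_sub, AlgHom.commutes] at hk'
      have hk0 : k = 0 := eq_zero_of_algebraMap_mem (A := A) (by
        have := sub_mem hx' hk'
        rwa [sub_sub_cancel] at this)
      rw [hk0, map_zero, sub_zero] at hk
      exact (Submodule.Quotient.mk_eq_zero _).2 hk
    · rintro d _ ⟨b, hb, rfl⟩
      have h1 : resMk A (ι b) ∈ (resGM A).gr (c * d + 0) := by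
        rw [add_zero]; exact resMk_mem (IsVeronese.map_mem hV hb)
      exact (hf b).symm ▸ h1
    · intro d y hy
      obtain ⟨r, hr, rfl⟩ := exists_resMk (A := A) hy
      rw [add_zero] at hr
      obtain ⟨b, -, rfl⟩ := IsVeronese.exists_eq hV hr
      exact ⟨_, hf b⟩
  · rintro u hu0 huc Vu hVu β ⟨res⟩
    have hneg : ∀ d < 0, ∀ x ∈ A.gr ((c : ℤ) * d + u), x = 0 := by
      intro d hd x hx
      have h0 : (c : ℤ) * d + u < 0 := by nlinarith
      rwa [A.negBot _ h0, Submodule.mem_bot] at hx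
    let f : Vu →ₗ[B] St hV u (selfGM A) :=
      { toFun := fun x => (x : R)
        map_add' := fun x y => rfl
        map_smul' := fun b x => hsmul b x }
    refine betti_linear res (St hV u (selfGM A)) (hasProj_st hc hV u (hasProj_self A)) hneg
      (fun n => hS n u 0 (by omega)) f (fun x hx => Subtype.ext hx) (fun d x hx => hx) ?_
    intro d y hy
    have hy' : y ∈ (Vu : Set R) := by
      rw [hVu]
      rcases lt_or_ge d 0 with hd | hd
      · rw [hneg d hd y hy]; exact zero_mem _
      · obtain ⟨n, rfl⟩ := Int.eq_ofNat_of_zero_le hd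
        exact Submodule.mem_iSup_of_mem n hy
    exact ⟨⟨y, hy'⟩, rfl⟩
end
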